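/- arXiv:1102.2883 — 2 statements merged into one kernel-verified Lean document; each statement's English description precedes it below -/
import Mathlib

section
/- Let κ ≥ 2 be an integer, and let R ∈ ℤ_{≥0}^m, C ∈ ℤ_{≥0}^n with |R| = |C| = N and T_κ(R,C) > 0. There exists δ = δ(κ) ∈ (0,1), depending only on κ, such that if (max_{1≤i≤m} r_i)(max_{1≤j≤n} c_j) < δκN, then lim_{s→∞} (1/s²) ln T_κ(R^{(s)},C^{(s)}) ≥ lim_{s→∞} (1/s²) ln I_κ(R^{(s)},C^{(s)}), with strict inequality if neither R nor C is a constant vector (i.e., if it is not the case that r_1 = ⋯ = r_m or c_1 = ⋯ = c_n). -/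
open Real Filter Finset

noncomputable section

/-- `ω(n) = n^n / n!`. -/
def omegaFn (n : ℕ) : ℝ := (n : ℝ) ^ n / (n.factorial : ℝ)

/-- `Ω(V)`: the sum of `ω(v)` over the entries of a vector `V`. -/
def OmegaVec {I : Type*} [Fintype I] (V : I → ℕ) : ℝ := ∑ i, omegaFn (V i)

/-- `Ω(K)`: the sum of `ω(k)` over the entries of a matrix `K`. -/
def OmegaMat {I J : Type*} [Fintype I] [Fintype J] (K : I → J → ℕ) : ℝ :=
  ∑ i, ∑ j, omegaFn (K i j)

/-- `T_K(R,C)`: the number of nonnegative-integer matrices with row sums `R`,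
column sums `C`, and entries bounded by `K` (a bound of `⊤` means unbounded). -/
def tableCount {I J : Type*} [Fintype I] [Fintype J]
    (K : I → J → ℕ∞) (R : I → ℕ) (C : J → ℕ) : ℕ :=
  Set.ncard {A : I → J → ℕ |
    (∀ i, ∑ j, A i j = R i) ∧ (∀ j, ∑ i, A i j = C j) ∧ ∀ i j, (A i j : ℕ∞) ≤ K i j}

/-- The `s`-fold cloning of a margin vector. -/
def cloneVec {m : ℕ} (s : ℕ) (R : Fin m → ℕ) : Fin s × Fin m → ℕ :=
  fun p => s * R p.2

/-- The `s`-fold cloning of a bound matrix. -/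
def cloneMat {m n : ℕ} (s : ℕ) (K : Fin m → Fin n → ℕ∞) :
    Fin s × Fin m → Fin s × Fin n → ℕ∞ :=
  fun p q => K p.2 q.2

/-- The mean of the truncated geometric distribution on `{0,…,κ}` with ratio `q`. -/
def tgMean (κ : ℕ∞) (q : ℝ) : ℝ :=
  if κ = ⊤ then q / (1 - q)
  else (∑ t ∈ Finset.range (κ.toNat + 1), (t : ℝ) * q ^ t) /
    (∑ t ∈ Finset.range (κ.toNat + 1), q ^ t)

/-- The parameter `q(x;κ)` of the truncated geometric distribution `TG(x;κ)` with mean `x`. -/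
def tgQ (κ : ℕ∞) (x : ℝ) : ℝ := sInf {q : ℝ | 0 ≤ q ∧ x ≤ tgMean κ q}

/-- The parameter `p(x;κ)` of the truncated geometric distribution `TG(x;κ)` with mean `x`. -/
def tgP (κ : ℕ∞) (x : ℝ) : ℝ :=
  if κ = ⊤ then 1 - tgQ κ x
  else (∑ t ∈ Finset.range (κ.toNat + 1), tgQ κ x ^ t)⁻¹

/-- The probability mass function of `TG(x;κ)`: `Pr[X=t] = p q^t` for `t ∈ {0,…,κ}`. -/
def tgPMF (κ : ℕ∞) (x : ℝ) (t : ℕ) : ℝ :=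
  if (t : ℕ∞) ≤ κ then tgP κ x * tgQ κ x ^ t else 0

/-- `H^max_κ(x)`: the (base-e) entropy of the truncated geometric distribution `TG(x;κ)`. -/
def Hmax (κ : ℕ∞) (x : ℝ) : ℝ := -∑' t : ℕ, tgPMF κ x t * Real.log (tgPMF κ x t)

/-- The `(κ+1)`-nomial coefficient `(n choose r)_κ`: the coefficient of `x^r` in
`(1+x+⋯+x^κ)^n`; for `κ = ∞` it is `(r+n-1).choose r`. -/
def knomial (κ : ℕ∞) (n r : ℕ) : ℕ :=
  if κ = ⊤ then (r + n - 1).choose r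
  else ((∑ t ∈ Finset.range (κ.toNat + 1), (Polynomial.X : Polynomial ℕ) ^ t) ^ n).coeff r

/-- The independence-heuristic estimate `I_κ(R,C)`. -/
def indepEst (κ : ℕ∞) {I J : Type*} [Fintype I] [Fintype J] (R : I → ℕ) (C : J → ℕ) : ℝ :=
  ((knomial κ (Fintype.card I * Fintype.card J) (∑ i, R i) : ℝ))⁻¹ *
    (∏ i, (knomial κ (Fintype.card J) (R i) : ℝ)) *
    ∏ j, (knomial κ (Fintype.card I) (C j) : ℝ)

/-- The transportation polytope `Π_κ(R,C)` of real matrices with entries in `[0,κ]`,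
row sums `R` and column sums `C`. -/
def transportPolytope (κ : ℕ∞) {m n : ℕ} (R : Fin m → ℕ) (C : Fin n → ℕ) :
    Set (Fin m → Fin n → ℝ) :=
  {Z | (∀ i j, 0 ≤ Z i j) ∧ (∀ i j, κ ≠ ⊤ → Z i j ≤ (κ.toNat : ℝ)) ∧
    (∀ i, ∑ j, Z i j = (R i : ℝ)) ∧ ∀ j, ∑ i, Z i j = (C j : ℝ)}

/-- The generating function `G(x,y) = ∏_{i,j} (1 + x_i y_j + ⋯ + (x_i y_j)^{k_{ij}})`. -/
def genFun {m n : ℕ} (K : Fin m → Fin n → ℕ) (x : Fin m → ℝ) (y : Fin n → ℝ) : ℝ :=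
  ∏ i, ∏ j, ∑ t ∈ Finset.range (K i j + 1), (x i * y j) ^ t

/-- The monomial `x^R = ∏_i x_i^{r_i}`. -/
def monom {m : ℕ} (x : Fin m → ℝ) (R : Fin m → ℕ) : ℝ := ∏ i, x i ^ R i

/-- The concave roof function `f_K(R,C)`: the supremum of `∑_t α_t ln T_K(R^t,C^t)` over
convex combinations of integer margins averaging to `(R,C)` (and `⊥ = -∞` if none exist). -/
def fK {m n : ℕ} (K : Fin m → Fin n → ℕ) (R : Fin m → ℝ) (C : Fin n → ℝ) : EReal :=
  sSup {v : EReal | ∃ (p : ℕ) (α : Fin p → ℝ)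
    (Rs : Fin p → Fin m → ℕ) (Cs : Fin p → Fin n → ℕ),
    1 ≤ p ∧ (∀ t, 0 ≤ α t) ∧ ∑ t, α t = 1 ∧
    (∀ i, ∑ t, α t * (Rs t i : ℝ) = R i) ∧ (∀ j, ∑ t, α t * (Cs t j : ℝ) = C j) ∧
    (∀ t, 0 < tableCount (fun i j => (K i j : ℕ∞)) (Rs t) (Cs t)) ∧
    v = ((∑ t, α t * Real.log (tableCount (fun i j => (K i j : ℕ∞)) (Rs t) (Cs t)) : ℝ) : EReal)}

/-- `e^x` for an extended real `x`, with `e^{-∞} = 0`. -/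
def expE (e : EReal) : ℝ := if e = ⊥ then 0 else Real.exp e.toReal

end

open Polynomial in
/-- The polynomial `1 + X + ⋯ + X^κ` with real coefficients. -/
noncomputable def geomPoly (κ : ℕ) : ℝ[X] := ∑ t ∈ Finset.range (κ + 1), X ^ t

lemma coeff_geomPoly (κ t : ℕ) : (geomPoly κ).coeff t = if t ≤ κ then 1 else 0 := by
  simp [geomPoly, Polynomial.coeff_X_pow]

lemma knomial_coe (κ n r : ℕ) : knomial (κ : ℕ∞) n r =
    ((∑ t ∈ Finset.range (κ + 1), (Polynomial.X : Polynomial ℕ) ^ t) ^ n).coeff r := by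
  simp [knomial]

lemma cast_knomial (κ n r : ℕ) : (knomial (κ : ℕ∞) n r : ℝ) = (geomPoly κ ^ n).coeff r := by
  have h : geomPoly κ ^ n =
      ((∑ t ∈ Finset.range (κ + 1), (Polynomial.X : Polynomial ℕ) ^ t) ^ n).map (Nat.castRingHom ℝ) := by
    simp [geomPoly, Polynomial.map_pow, Polynomial.map_sum]
  rw [knomial_coe, h, Polynomial.coeff_map]
  simp

lemma coeff_geomPoly_pow_nonneg (κ n r : ℕ) : 0 ≤ (geomPoly κ ^ n).coeff r := by
  rw [← cast_knomial]; positivity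

lemma eval_geomPoly (κ : ℕ) (q : ℝ) : (geomPoly κ).eval q = ∑ t ∈ Finset.range (κ + 1), q ^ t := by
  simp [geomPoly, Polynomial.eval_finsetSum]

lemma eval_geomPoly_pos (κ : ℕ) {q : ℝ} (hq : 0 ≤ q) : 0 < (geomPoly κ).eval q := by
  rw [eval_geomPoly, Finset.sum_range_succ']
  have : 0 ≤ ∑ k ∈ Finset.range κ, q ^ (k + 1) := Finset.sum_nonneg fun _ _ => by positivity
  simp; linarith

lemma natDegree_geomPoly_pow_le (κ n : ℕ) : (geomPoly κ ^ n).natDegree ≤ n * κ := by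
  refine Polynomial.natDegree_pow_le_of_le n ?_
  refine Polynomial.natDegree_sum_le_of_forall_le _ _ fun t ht => ?_
  simpa using Nat.lt_succ_iff.mp (Finset.mem_range.mp ht)

lemma coeff_mul_pow_le_eval {p : Polynomial ℝ} (hp : ∀ k, 0 ≤ p.coeff k) {q : ℝ} (hq : 0 ≤ q)
    (r : ℕ) : p.coeff r * q ^ r ≤ p.eval q := by
  have hnn : ∀ k, 0 ≤ p.coeff k * q ^ k := fun k => mul_nonneg (hp k) (by positivity)
  rw [Polynomial.eval_eq_sum_range' (n := max p.natDegree r + 1) (by omega)]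
  exact Finset.single_le_sum (f := fun k => p.coeff k * q ^ k) (fun k _ => hnn k)
    (Finset.mem_range.2 (by omega))

lemma coeff_mul_coeff_le {p p' : Polynomial ℝ} (hp : ∀ k, 0 ≤ p.coeff k)
    (hp' : ∀ k, 0 ≤ p'.coeff k) (a b : ℕ) : p.coeff a * p'.coeff b ≤ (p * p').coeff (a + b) := by
  rw [Polynomial.coeff_mul]
  exact Finset.single_le_sum (f := fun x : ℕ × ℕ => p.coeff x.1 * p'.coeff x.2)
    (fun x _ => mul_nonneg (hp _) (hp' _)) (a := (a, b)) (by simp)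

lemma coeff_pow_nonneg {p : Polynomial ℝ} (hp : ∀ k, 0 ≤ p.coeff k) (n k : ℕ) :
    0 ≤ (p ^ n).coeff k := by
  induction n generalizing k with
  | zero => simp only [pow_zero, Polynomial.coeff_one]; split_ifs <;> norm_num
  | succ n ih =>
    rw [pow_succ, Polynomial.coeff_mul]
    exact Finset.sum_nonneg fun x _ => mul_nonneg (ih _) (hp _)

lemma coeff_pow_le_pow_coeff {p : Polynomial ℝ} (hp : ∀ k, 0 ≤ p.coeff k) (a n : ℕ) :
    p.coeff a ^ n ≤ (p ^ n).coeff (n * a) := by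
  induction n with
  | zero => simp
  | succ n ih =>
    rw [pow_succ, pow_succ, add_mul, one_mul]
    exact (mul_le_mul_of_nonneg_right ih (hp a)).trans
      (coeff_mul_coeff_le (coeff_pow_nonneg hp n) hp _ _)

/-- A polynomial with nonnegative coefficients whose tilted coefficient distribution has integer
mean `r` has two large tilted coefficients whose positions have `r` as a convex combination. -/
lemma exists_large_coeffs {p : Polynomial ℝ} (hp : ∀ k, 0 ≤ p.coeff k) {q : ℝ} (hq : 0 < q)
    {r D : ℕ} (hD : p.natDegree ≤ D) (hE : 0 < p.eval q)
    (hr : q * p.derivative.eval q = r * p.eval q) :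
    ∃ k₀ k₁ a b : ℕ, 0 < a + b ∧ a * k₀ + b * k₁ = (a + b) * r ∧
      p.eval q / (4 * (D + 1) ^ 2) ≤ p.coeff k₀ * q ^ k₀ ∧
      p.eval q / (4 * (D + 1) ^ 2) ≤ p.coeff k₁ * q ^ k₁ := by
  set E := p.eval q with hEdef
  set c : ℕ → ℝ := fun k => p.coeff k * q ^ k with hc
  have hnn : ∀ k, 0 ≤ c k := fun k => mul_nonneg (hp k) (by positivity)
  have hsum : ∑ k ∈ Finset.range (D + 1), c k = E :=
    (Polynomial.eval_eq_sum_range' (by omega) q).symm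
  have hmean : ∑ k ∈ Finset.range (D + 1), (k : ℝ) * c k = r * E := by
    rw [← hr, Polynomial.derivative_eval, Polynomial.sum_over_range' _ (by simp) (D + 1) (by omega),
      Finset.mul_sum]
    refine Finset.sum_congr rfl fun k _ => ?_
    rcases k with _ | k
    · simp
    · simp only [hc, Nat.add_sub_cancel, pow_succ]; ring
  have hD1 : (1 : ℝ) ≤ D + 1 := by linarith [(Nat.cast_nonneg D : (0 : ℝ) ≤ D)]
  by_cases hcr : E / 2 ≤ c r
  · have : E / (4 * (D + 1) ^ 2) ≤ c r := by
      refine le_trans ?_ hcr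
      apply div_le_div_of_nonneg_left hE.le (by norm_num)
      nlinarith
    exact ⟨r, r, 1, 0, by norm_num, by ring, this, this⟩
  push Not at hcr
  have hdev : ∑ k ∈ Finset.range (D + 1), ((k : ℝ) - r) * c k = 0 := by
    simp only [sub_mul, Finset.sum_sub_distrib, hmean, ← Finset.mul_sum, hsum, sub_self]
  have hsingle : ∑ k ∈ Finset.range (D + 1), (if k = r then c r else 0) ≤ c r := by
    rw [Finset.sum_ite_eq']
    split_ifs
    exacts [le_rfl, hnn r]
  have habs : E / 2 < ∑ k ∈ Finset.range (D + 1), |(k : ℝ) - r| * c k := by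
    calc E / 2 < ∑ k ∈ Finset.range (D + 1), c k -
          ∑ k ∈ Finset.range (D + 1), (if k = r then c r else 0) := by rw [hsum]; linarith
      _ = ∑ k ∈ Finset.range (D + 1), (c k - if k = r then c r else 0) := by
          rw [Finset.sum_sub_distrib]
      _ ≤ _ := by
          refine Finset.sum_le_sum fun k _ => ?_
          split_ifs with h
          · subst h; simp
          · have : (1 : ℝ) ≤ |(k : ℝ) - r| := by
              have : (1 : ℤ) ≤ |(k : ℤ) - r| := Int.one_le_abs (by omega)
              exact_mod_cast this
            nlinarith [hnn k]
  have hgen : ∀ σ : ℝ, (σ = 1 ∨ σ = -1) → ∃ k ∈ Finset.range (D + 1),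
      E / (4 * (D + 1)) < max (σ * ((k : ℝ) - r)) 0 * c k := by
    intro σ hσ
    by_contra! hcon
    have h1 : ∑ k ∈ Finset.range (D + 1), max (σ * ((k : ℝ) - r)) 0 * c k ≤ E / 4 := by
      refine (Finset.sum_le_sum hcon).trans_eq ?_
      simp only [Finset.sum_const, Finset.card_range, nsmul_eq_mul]
      push_cast
      field_simp
    have h2 : ∑ k ∈ Finset.range (D + 1), max (σ * ((k : ℝ) - r)) 0 * c k =
        (∑ k ∈ Finset.range (D + 1), |(k : ℝ) - r| * c k +
          σ * ∑ k ∈ Finset.range (D + 1), ((k : ℝ) - r) * c k) / 2 := by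
      rw [Finset.mul_sum, ← Finset.sum_add_distrib, Finset.sum_div]
      refine Finset.sum_congr rfl fun k _ => ?_
      rcases hσ with rfl | rfl <;> rcases le_total 0 ((k : ℝ) - r) with h | h
      · rw [max_eq_left (by linarith), abs_of_nonneg h]; ring
      · rw [max_eq_right (by linarith), abs_of_nonpos h]; ring
      · rw [max_eq_right (by linarith), abs_of_nonneg h]; ring
      · rw [max_eq_left (by linarith), abs_of_nonpos h]; ring
    rw [hdev] at h2
    linarith
  obtain ⟨k₁, hk₁, h₁⟩ := hgen 1 (Or.inl rfl)
  obtain ⟨k₀, hk₀, h₀⟩ := hgen (-1) (Or.inr rfl)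
  have hpos : 0 < E / (4 * ((D : ℝ) + 1)) := by positivity
  have hlt₁ : r < k₁ := by
    by_contra! h
    rw [max_eq_right (by have : (k₁ : ℝ) ≤ r := by exact_mod_cast h
                         linarith)] at h₁
    linarith
  have hlt₀ : k₀ < r := by
    by_contra! h
    rw [max_eq_right (by have : (r : ℝ) ≤ k₀ := by exact_mod_cast h
                         linarith)] at h₀
    linarith
  have hk₁' : k₁ < D + 1 := Finset.mem_range.1 hk₁
  have hfin : ∀ x k, x ≤ (D : ℝ) + 1 → 0 ≤ x → E / (4 * (D + 1)) < x * c k →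
      E / (4 * (D + 1) ^ 2) ≤ c k := by
    intro x k hx hx0 h
    have : E / (4 * (D + 1)) < (D + 1) * c k :=
      h.trans_le (mul_le_mul_of_nonneg_right hx (hnn k))
    rw [div_lt_iff₀ (by positivity)] at this
    rw [div_le_iff₀ (by positivity)]
    nlinarith
  have c₁ : (k₁ : ℝ) < D + 1 := by exact_mod_cast hk₁'
  have cr : (r : ℝ) < k₁ := by exact_mod_cast hlt₁
  have r0 : (0 : ℝ) ≤ r := Nat.cast_nonneg r
  have k00 : (0 : ℝ) ≤ k₀ := Nat.cast_nonneg k₀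
  refine ⟨k₀, k₁, k₁ - r, r - k₀, by omega, ?_, hfin _ _ ?_ (le_max_right _ _) h₀,
    hfin _ _ ?_ (le_max_right _ _) h₁⟩
  · zify [hlt₁.le, hlt₀.le]; ring
  · exact max_le (by linarith) (by linarith)
  · exact max_le (by linarith) (by linarith)

lemma exists_sq_le_exp (K : ℕ) {c : ℝ} (hc : 0 < c) :
    ∃ l : ℕ, 0 < l ∧ 4 * ((l * K : ℕ) + 1 : ℝ) ^ 2 ≤ Real.exp (l * c) := by
  have h := (Real.tendsto_exp_div_pow_atTop 2).comp
    (tendsto_natCast_atTop_atTop.atTop_mul_const hc :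
      Tendsto (fun l : ℕ => (l : ℝ) * c) atTop atTop)
  obtain ⟨l, hl, hl1⟩ := ((h.eventually_ge_atTop (4 * (K + 1) ^ 2 / c ^ 2)).and
    (eventually_ge_atTop 1)).exists
  refine ⟨l, hl1, ?_⟩
  have hl1' : (1 : ℝ) ≤ l := by exact_mod_cast hl1
  simp only [Function.comp] at hl
  rw [div_le_div_iff₀ (by positivity) (by positivity)] at hl
  have h3 : 4 * (K + 1 : ℝ) ^ 2 * (l : ℝ) ^ 2 ≤ Real.exp (l * c) := by
    have hc2 : 0 < c ^ 2 := by positivity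
    nlinarith
  refine le_trans ?_ h3
  push_cast
  have : (l : ℝ) * K + 1 ≤ (K + 1) * l := by nlinarith
  have h0 : (0 : ℝ) ≤ l * K + 1 := by positivity
  nlinarith [pow_le_pow_left₀ h0 this 2]

/-- `h` is the maximal entropy of a distribution on `{0, …, κ}` with mean `x`. -/
def IsMaxEntropy (κ : ℕ) (x h : ℝ) : Prop :=
  (x = 0 ∧ h = 0) ∨ ∃ q : ℝ, 0 < q ∧
    q * (geomPoly κ).derivative.eval q = x * (geomPoly κ).eval q ∧
    h = Real.log ((geomPoly κ).eval q) - x * Real.log q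

lemma knomial_zero_right (κ n : ℕ) : knomial (κ : ℕ∞) n 0 = 1 := by
  have h : ((geomPoly κ) ^ n).coeff 0 = 1 := by
    rw [Polynomial.coeff_zero_eq_eval_zero, Polynomial.eval_pow,
      ← Polynomial.coeff_zero_eq_eval_zero, coeff_geomPoly]
    simp
  rw [← cast_knomial] at h
  exact_mod_cast h

lemma IsMaxEntropy.knomial_le {κ n r : ℕ} {x h : ℝ} (hx : IsMaxEntropy κ x h)
    (hr : (r : ℝ) = n * x) : (knomial (κ : ℕ∞) n r : ℝ) ≤ Real.exp (n * h) := by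
  rcases hx with ⟨rfl, rfl⟩ | ⟨q, hq, -, rfl⟩
  · have : r = 0 := by simpa using hr
    simp [this, knomial_zero_right]
  · have h1 := coeff_mul_pow_le_eval (coeff_geomPoly_pow_nonneg κ n) hq.le r
    have h2 : Real.exp (n * (Real.log ((geomPoly κ).eval q) - x * Real.log q)) =
        ((geomPoly κ).eval q) ^ n / q ^ r := by
      rw [show n * (Real.log ((geomPoly κ).eval q) - x * Real.log q) =
        n * Real.log ((geomPoly κ).eval q) - (n * x) * Real.log q by ring, ← hr, Real.exp_sub,
        Real.exp_nat_mul, Real.exp_nat_mul, Real.exp_log hq,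
        Real.exp_log (eval_geomPoly_pos κ hq.le)]
    rw [h2, cast_knomial, le_div_iff₀ (by positivity), ← Polynomial.eval_pow]
    exact h1

lemma IsMaxEntropy.exists_le_knomial {κ n r : ℕ} {x h : ℝ} (hx : IsMaxEntropy κ x h)
    (hn : 0 < n) (hr : (r : ℝ) = n * x) {ε : ℝ} (hε : 0 < ε) :
    ∃ k : ℕ, 0 < k ∧ ∀ j, k ∣ j →
      Real.exp ((n * j : ℕ) * (h - ε)) ≤ knomial (κ : ℕ∞) (n * j) (r * j) := by
  have hn' : (0 : ℝ) < n := by exact_mod_cast hn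
  rcases hx with ⟨rfl, rfl⟩ | ⟨q, hq, hmean, hh⟩
  · have : r = 0 := by simpa using hr
    refine ⟨1, one_pos, fun j _ => ?_⟩
    simp only [this, zero_mul, knomial_zero_right, Nat.cast_one, Real.exp_le_one_iff]
    have : (0 : ℝ) ≤ (n * j : ℕ) := Nat.cast_nonneg _
    nlinarith
  obtain ⟨l, hl, hexp⟩ := exists_sq_le_exp (n * κ) (mul_pos hn' hε)
  have hl' : (0 : ℝ) < l := by exact_mod_cast hl
  set S := (geomPoly κ).eval q with hS
  have hSpos : 0 < S := eval_geomPoly_pos κ hq.le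
  set p := geomPoly κ ^ (n * l) with hp
  have hpE : p.eval q = S ^ (n * l) := by rw [hp, Polynomial.eval_pow]
  have hcoef := coeff_geomPoly_pow_nonneg κ (n * l)
  obtain ⟨k₀, k₁, a, b, hab, hcomb, h₀, h₁⟩ := exists_large_coeffs (r := r * l) hcoef hq
    (natDegree_geomPoly_pow_le κ (n * l)) (by rw [← hp, hpE]; positivity) (by
      rw [← hp, hpE, hp, Polynomial.derivative_pow]
      simp only [Polynomial.eval_mul, Polynomial.eval_pow, Polynomial.eval_natCast,
        Polynomial.C_eq_natCast]
      obtain ⟨N, hN⟩ : ∃ N, n * l = N + 1 := ⟨n * l - 1, by have := Nat.mul_pos hn hl; omega⟩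
      have hN' : (n : ℝ) * l = ((n * l : ℕ) : ℝ) := by push_cast; ring
      rw [← hS]
      push_cast [hr]
      rw [hN, Nat.add_sub_cancel, pow_succ]
      linear_combination (n : ℝ) * l * S ^ N * hmean)
  rw [← hp] at h₀ h₁
  set B := p.eval q / (4 * (((n * l * κ : ℕ) : ℝ) + 1) ^ 2) with hB
  have hBge : Real.exp (n * l * (Real.log S - ε)) ≤ B := by
    rw [hB, le_div_iff₀ (by positivity), hpE]
    have e1 : Real.exp (n * l * (Real.log S - ε)) = S ^ (n * l) / Real.exp (l * (n * ε)) := by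
      rw [show n * l * (Real.log S - ε) = ((n * l : ℕ) : ℝ) * Real.log S - l * (n * ε) by
        push_cast; ring, Real.exp_sub, Real.exp_nat_mul, Real.exp_log hSpos]
    rw [e1, div_mul_eq_mul_div, div_le_iff₀ (Real.exp_pos _)]
    refine mul_le_mul_of_nonneg_left ?_ (by positivity)
    rwa [show n * l * κ = l * (n * κ) by ring]
  have hB0 : 0 ≤ B := (Real.exp_pos _).le.trans hBge
  refine ⟨l * (a + b), Nat.mul_pos hl hab, ?_⟩
  rintro _ ⟨M, rfl⟩
  have key : Real.exp ((n * (l * (a + b)) : ℕ) * (h - ε)) ≤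
      (p ^ (a + b)).coeff ((a + b) * (r * l)) := by
    rw [← hcomb, pow_add]
    refine le_trans ?_ (coeff_mul_coeff_le (coeff_pow_nonneg hcoef a)
      (coeff_pow_nonneg hcoef b) _ _)
    refine le_trans ?_ (mul_le_mul (coeff_pow_le_pow_coeff hcoef k₀ a)
      (coeff_pow_le_pow_coeff hcoef k₁ b) (pow_nonneg (hcoef _) _) (coeff_pow_nonneg hcoef _ _))
    have hprod : B ^ a * B ^ b ≤ (p.coeff k₀ ^ a * p.coeff k₁ ^ b) * q ^ ((a + b) * (r * l)) := by
      calc B ^ a * B ^ b ≤ (p.coeff k₀ * q ^ k₀) ^ a * (p.coeff k₁ * q ^ k₁) ^ b := by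
            have := hcoef k₀
            have := hB0.trans h₀
            gcongr
        _ = _ := by rw [← hcomb]; ring
    rw [← pow_add] at hprod
    have hB2 : Real.exp ((a + b : ℕ) * (n * l * (Real.log S - ε))) ≤ B ^ (a + b) := by
      rw [Real.exp_nat_mul]
      gcongr
    have e2 : Real.exp ((n * (l * (a + b)) : ℕ) * (h - ε)) * q ^ ((a + b) * (r * l)) =
        Real.exp ((a + b : ℕ) * (n * l * (Real.log S - ε))) := by
      rw [← Real.exp_log (pow_pos hq ((a + b) * (r * l))), ← Real.exp_add, Real.log_pow, hh]
      congr 1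
      push_cast
      rw [hr]
      ring
    have hqp : 0 < q ^ ((a + b) * (r * l)) := by positivity
    rw [← mul_le_mul_iff_left₀ hqp, e2]
    exact hB2.trans hprod
  have e3 : (n * (l * (a + b) * M) : ℕ) * (h - ε) = M * ((n * (l * (a + b)) : ℕ) * (h - ε)) := by
    push_cast; ring
  rw [e3, Real.exp_nat_mul, cast_knomial]
  refine (pow_le_pow_left₀ (Real.exp_pos _).le key M).trans ?_
  refine (coeff_pow_le_pow_coeff (coeff_pow_nonneg hcoef _) _ M).trans_eq ?_
  rw [← pow_mul, ← pow_mul]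
  rw [show n * l * ((a + b) * M) = n * (l * (a + b) * M) by ring,
    show M * ((a + b) * (r * l)) = r * (l * (a + b) * M) by ring]

section Tables

variable {I J : Type*} [Fintype I] [Fintype J]

/-- The set of tables with margins `R`, `C` and entries at most `κ`. -/
def tableSet (κ : ℕ) (R : I → ℕ) (C : J → ℕ) : Set (I → J → ℕ) :=
  {A | (∀ i, ∑ j, A i j = R i) ∧ (∀ j, ∑ i, A i j = C j) ∧ ∀ i j, A i j ≤ κ}

lemma tableCount_eq_card (κ : ℕ) (R : I → ℕ) (C : J → ℕ) :
    tableCount (fun _ _ => (κ : ℕ∞)) R C = Nat.card (tableSet κ R C) := by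
  rw [Nat.card_coe_set_eq]
  simp [tableCount, tableSet]

instance (κ : ℕ) (R : I → ℕ) (C : J → ℕ) : Finite (tableSet κ R C) := by
  classical
  refine Set.Finite.subset (s := ((Fintype.piFinset fun _ : I => Fintype.piFinset fun _ : J =>
    Finset.range (κ + 1) : Finset (I → J → ℕ)) : Set (I → J → ℕ))) (Finset.finite_toSet _) ?_
  intro A hA
  simpa [Nat.lt_succ_iff] using hA.2.2

/-- Placing tables with constant margins in the blocks of a cloned table. -/
lemma prod_tableCount_le {κ m n s : ℕ} {R : Fin m → ℕ} {C : Fin n → ℕ} {d : Fin m → Fin n → ℕ}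
    (hR : ∀ i, ∑ j, d i j = s * R i) (hC : ∀ j, ∑ i, d i j = s * C j) :
    ∏ i, ∏ j, tableCount (fun (_ _ : Fin s) => (κ : ℕ∞)) (fun _ => d i j) (fun _ => d i j) ≤
      tableCount (fun (_ : Fin s × Fin m) (_ : Fin s × Fin n) => (κ : ℕ∞))
        (cloneVec s R) (cloneVec s C) := by
  simp only [tableCount_eq_card]
  have e : ∏ i, ∏ j, Nat.card (tableSet κ (fun _ : Fin s => d i j) (fun _ : Fin s => d i j)) =
      Nat.card (∀ i, ∀ j, tableSet κ (fun _ : Fin s => d i j) (fun _ : Fin s => d i j)) := by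
    simp only [Nat.card_pi]
  rw [e]
  refine Nat.card_le_card_of_injective
    (fun F => ⟨fun x y => (F x.2 y.2).1 x.1 y.1, ?_, ?_, fun x y => (F x.2 y.2).2.2.2 _ _⟩) ?_
  · intro x
    rw [Fintype.sum_prod_type_right]
    simp only [(F x.2 _).2.1]
    exact hR _
  · intro y
    rw [Fintype.sum_prod_type_right]
    simp only [(F _ y.2).2.2.1]
    exact hC _
  · intro F G h
    funext i j
    ext a b
    exact congrFun (congrFun (congrArg Subtype.val h) (a, i)) (b, j)

/-- Arranging cyclic shifts of tables with the same margins in a Latin pattern produces a table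
with constant margins. -/
lemma tableCount_pow_le {κ s N : ℕ} [NeZero s] {R C : Fin s → ℕ} (hR : ∑ i, R i = N)
    (hC : ∑ j, C j = N) :
    tableCount (fun _ _ => (κ : ℕ∞)) R C ^ (s * s) ≤
      tableCount (fun (_ _ : Fin (s * s)) => (κ : ℕ∞)) (fun _ => N) (fun _ => N) := by
  simp only [tableCount_eq_card]
  have e : Nat.card (tableSet κ R C) ^ (s * s) = Nat.card (Fin s × Fin s → tableSet κ R C) := by
    simp [Nat.card_pi]
  have sum_shift : ∀ (f : Fin s → ℕ) (a : Fin s), ∑ i, f (i + a) = ∑ i, f i := fun f a =>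
    Equiv.sum_comp (Equiv.addRight a) f
  have sum_shift' : ∀ (f : Fin s → ℕ) (a : Fin s), ∑ i, f (a + i) = ∑ i, f i := fun f a =>
    Equiv.sum_comp (Equiv.addLeft a) f
  let p : Fin (s * s) ≃ Fin s × Fin s := finProdFinEquiv.symm
  rw [e]
  refine Nat.card_le_card_of_injective
    (fun F => ⟨fun x y => (F ((p x).1, (p y).1)).1 ((p x).2 + (p y).1) ((p y).2 + (p x).1),
      ?_, ?_, fun x y => (F _).2.2.2 _ _⟩) ?_
  · intro x
    rw [Equiv.sum_comp p (fun y => (F ((p x).1, y.1)).1 ((p x).2 + y.1) (y.2 + (p x).1)),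
      Fintype.sum_prod_type]
    simp only [sum_shift, sum_shift', (F _).2.1, hR]
  · intro y
    rw [Equiv.sum_comp p (fun x => (F (x.1, (p y).1)).1 (x.2 + (p y).1) ((p y).2 + x.1)),
      Fintype.sum_prod_type]
    simp only [fun a => sum_shift (fun i => (F (a, (p y).1)).1 i ((p y).2 + a)) (p y).1,
      (F _).2.2.1, sum_shift', hC]
  · intro F G h
    funext ab
    obtain ⟨a, b⟩ := ab
    ext i j
    have := congrFun (congrFun (congrArg Subtype.val h) (p.symm (a, i - b))) (p.symm (b, j - a))
    simpa using this

lemma knomial_eq_card {ι : Type*} [Fintype ι] [DecidableEq ι] (κ r : ℕ) :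
    knomial (κ : ℕ∞) (Fintype.card ι) r =
      #{f ∈ Fintype.piFinset (fun _ : ι => Finset.range (κ + 1)) | ∑ i, f i = r} := by
  rw [knomial_coe, ← Finset.card_univ, ← Finset.prod_const, Finset.prod_univ_sum]
  simp only [Finset.prod_pow_eq_pow_sum, Polynomial.finsetSum_coeff, Polynomial.coeff_X_pow]
  rw [Finset.sum_boole]
  simp [eq_comm]

/-- Some pair of margins is attained by many of the square arrays with total sum `N`. -/
lemma exists_margins {κ s N : ℕ} (hpos : 0 < knomial (κ : ℕ∞) (s * s) N) :
    ∃ R C : Fin s → ℕ, ∑ i, R i = N ∧ ∑ j, C j = N ∧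
      knomial (κ : ℕ∞) (s * s) N ≤
        tableCount (fun _ _ => (κ : ℕ∞)) R C * (s * κ + 1) ^ (2 * s) := by
  classical
  set G : Finset (Fin s × Fin s → ℕ) :=
    {f ∈ Fintype.piFinset (fun _ : Fin s × Fin s => Finset.range (κ + 1)) | ∑ i, f i = N} with hG
  have hcard : knomial (κ : ℕ∞) (s * s) N = #G := by
    have := knomial_eq_card (ι := Fin s × Fin s) κ N
    simpa using this
  let mar : (Fin s × Fin s → ℕ) → (Fin s → ℕ) × (Fin s → ℕ) := fun f =>
    (fun i => ∑ j, f (i, j), fun j => ∑ i, f (i, j))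
  set t : Finset ((Fin s → ℕ) × (Fin s → ℕ)) :=
    (Fintype.piFinset fun _ => Finset.range (s * κ + 1)) ×ˢ
      (Fintype.piFinset fun _ => Finset.range (s * κ + 1)) with ht
  have htcard : #t = (s * κ + 1) ^ (2 * s) := by
    simp [ht, Finset.card_product, two_mul, pow_add]
  have hmem : ∀ f, f ∈ G ↔ (∀ i, f i ≤ κ) ∧ ∑ i, f i = N := by
    intro f; simp [hG]
  have hmaps : ∀ f ∈ G, mar f ∈ t := by
    intro f hf
    have hf' := ((hmem f).1 hf).1
    simp only [ht, Finset.mem_product, Fintype.mem_piFinset, Finset.mem_range, mar,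
      Nat.lt_succ_iff]
    constructor <;> intro i <;>
      exact (Finset.sum_le_card_nsmul _ _ κ fun j _ => hf' _).trans (by simp)
  have hfib : ∀ b ∈ t, #{f ∈ G | mar f = b} ≤ tableCount (fun _ _ => (κ : ℕ∞)) b.1 b.2 := by
    intro b _
    rw [tableCount_eq_card, ← Fintype.card_coe, ← Nat.card_eq_fintype_card]
    refine Nat.card_le_card_of_injective (fun f => ⟨fun i j => f.1 (i, j), ?_, ?_, ?_⟩) ?_
    · exact fun i => congrFun (congrArg Prod.fst (Finset.mem_filter.1 f.2).2) i
    · exact fun j => congrFun (congrArg Prod.snd (Finset.mem_filter.1 f.2).2) j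
    · exact fun i j => ((hmem _).1 (Finset.mem_filter.1 f.2).1).1 _
    · intro f g h
      ext ⟨i, j⟩
      exact congrFun (congrFun (congrArg Subtype.val h) i) j
  by_contra! hcon
  have hG0 : 0 < #G := hcard ▸ hpos
  obtain ⟨f₀, hf₀⟩ := Finset.card_pos.1 hG0
  have hlt : ∀ b ∈ t, #{f ∈ G | mar f = b} * #t < #G := by
    intro b hb
    rcases Finset.eq_empty_or_nonempty {f ∈ G | mar f = b} with h | ⟨f, hf⟩
    · simpa [h] using hG0
    · obtain ⟨hfG, rfl⟩ := Finset.mem_filter.1 hf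
      have hsum := ((hmem f).1 hfG).2
      rw [← hcard, htcard]
      refine lt_of_le_of_lt (Nat.mul_le_mul_right _ (hfib _ hb)) (hcon _ _ ?_ ?_)
      · rw [← hsum, Fintype.sum_prod_type]
      · rw [← hsum, Fintype.sum_prod_type_right]
  have := Finset.sum_lt_sum_of_nonempty ⟨_, hmaps f₀ hf₀⟩ hlt
  rw [← Finset.sum_mul, ← Finset.card_eq_sum_card_fiberwise hmaps, Finset.sum_const, smul_eq_mul,
    mul_comm] at this
  exact lt_irrefl _ this

/-- The number of tables with constant margins is bounded below by a power of a
`(κ + 1)`-nomial coefficient, up to a subexponential factor. -/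
lemma knomial_pow_le_tableCount {κ s N : ℕ} (hs : 0 < s) (hpos : 0 < knomial (κ : ℕ∞) (s * s) N) :
    knomial (κ : ℕ∞) (s * s) N ^ (s * s) ≤
      tableCount (fun (_ _ : Fin (s * s)) => (κ : ℕ∞)) (fun _ => N) (fun _ => N) *
        ((s * κ + 1) ^ (2 * s)) ^ (s * s) := by
  have : NeZero s := ⟨hs.ne'⟩
  obtain ⟨R, C, hR, hC, h⟩ := exists_margins hpos
  calc _ ≤ (tableCount (fun _ _ => (κ : ℕ∞)) R C * (s * κ + 1) ^ (2 * s)) ^ (s * s) := by gcongr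
    _ ≤ _ := by
      rw [mul_pow]
      exact Nat.mul_le_mul_right _ (tableCount_pow_le hR hC)

end Tables

lemma dvd_prod_prod {ι ι' : Type*} [Fintype ι] [Fintype ι'] (k : ι → ι' → ℕ) (i : ι) (j : ι') :
    k i j ∣ ∏ i, ∏ j, k i j :=
  (Finset.dvd_prod_of_mem (k i) (Finset.mem_univ j)).trans
    (Finset.dvd_prod_of_mem (fun i => ∏ j, k i j) (Finset.mem_univ i))

lemma log_tableCount_ge {κ s N : ℕ} {h : ℝ} (hs : 0 < s)
    (hk : Real.exp ((s * s : ℕ) * h) ≤ knomial (κ : ℕ∞) (s * s) N) :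
    0 < tableCount (fun (_ _ : Fin (s * s)) => (κ : ℕ∞)) (fun _ => N) (fun _ => N) ∧
    (s : ℝ) ^ 4 * h - (s : ℝ) ^ 4 * (2 * Real.log (s * κ + 1) / s) ≤
      Real.log (tableCount (fun (_ _ : Fin (s * s)) => (κ : ℕ∞)) (fun _ => N) (fun _ => N)) := by
  have hs' : (0 : ℝ) < s := by exact_mod_cast hs
  have hkpos : (0 : ℝ) < knomial (κ : ℕ∞) (s * s) N := (Real.exp_pos _).trans_le hk
  have hkpos' : 0 < knomial (κ : ℕ∞) (s * s) N := by exact_mod_cast hkpos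
  have hle := knomial_pow_le_tableCount hs hkpos'
  set B := tableCount (fun (_ _ : Fin (s * s)) => (κ : ℕ∞)) (fun _ => N) (fun _ => N)
  have hB : 0 < B := by
    by_contra! h0
    rw [Nat.le_zero.1 h0, zero_mul] at hle
    exact absurd hle (by have := pow_pos hkpos' (s * s); omega)
  refine ⟨hB, ?_⟩
  have hB' : (0 : ℝ) < B := by exact_mod_cast hB
  have hle' : (knomial (κ : ℕ∞) (s * s) N : ℝ) ^ (s * s) ≤
      B * (((s : ℝ) * κ + 1) ^ (2 * s)) ^ (s * s) := by exact_mod_cast hle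
  have hlog := Real.log_le_log (by positivity) hle'
  rw [Real.log_mul hB'.ne' (by positivity), Real.log_pow, Real.log_pow, Real.log_pow] at hlog
  have h1 : ((s * s : ℕ) : ℝ) * h ≤ Real.log (knomial (κ : ℕ∞) (s * s) N) :=
    (Real.le_log_iff_exp_le hkpos).2 hk
  push_cast at hlog h1
  have h2 := mul_le_mul_of_nonneg_left h1 (mul_pos hs' hs').le
  have e : (s : ℝ) ^ 4 * (2 * Real.log (s * κ + 1) / s) =
      s * s * (2 * s * Real.log (s * κ + 1)) := by
    field_simp
  rw [e]
  nlinarith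

lemma tendsto_log_div_atTop (κ : ℕ) :
    Tendsto (fun s : ℕ => 2 * Real.log (s * κ + 1) / s) atTop (nhds 0) := by
  rcases Nat.eq_zero_or_pos κ with rfl | hκ
  · simp
  have hκ' : (0 : ℝ) < κ := by exact_mod_cast hκ
  have h1 : Tendsto (fun s : ℕ => (s : ℝ) * κ + 1) atTop atTop :=
    tendsto_atTop_add_const_right _ _ (tendsto_natCast_atTop_atTop.atTop_mul_const hκ')
  have h2 : Tendsto (fun x : ℝ => Real.log x / x) atTop (nhds 0) := by
    simpa using Real.isLittleO_log_id_atTop.tendsto_div_nhds_zero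
  have h3 := (h2.comp h1).const_mul (2 * (κ + 1 : ℝ))
  rw [mul_zero] at h3
  refine squeeze_zero (fun s => ?_) (fun s => ?_) h3
  · have : 0 ≤ Real.log (s * κ + 1) := Real.log_nonneg (by
      have : (0 : ℝ) ≤ s * κ := by positivity
      linarith)
    positivity
  · have hl : 0 ≤ Real.log (s * κ + 1) := Real.log_nonneg (by
      have : (0 : ℝ) ≤ s * κ := by positivity
      linarith)
    rcases Nat.eq_zero_or_pos s with rfl | hs
    · simp
    have hs' : (1 : ℝ) ≤ s := by exact_mod_cast hs
    simp only [Function.comp]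
    rw [← mul_div_assoc, div_le_div_iff₀ (by linarith) (by positivity)]
    nlinarith [mul_nonneg hl (sub_nonneg.2 hs')]

lemma sum_entropy_le_of_tendsto {κ m n N : ℕ} {R : Fin m → ℕ} {C : Fin n → ℕ} (hN : 0 < N)
    (hR : ∑ i, R i = N) (hC : ∑ j, C j = N) {h : Fin m → Fin n → ℝ}
    (hh : ∀ i j, IsMaxEntropy κ (R i * C j / N) (h i j)) {L : ℝ}
    (hL : Tendsto (fun s : ℕ => (1 / (s : ℝ) ^ 2) *
      Real.log (tableCount (fun (_ : Fin s × Fin m) (_ : Fin s × Fin n) => (κ : ℕ∞))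
        (cloneVec s R) (cloneVec s C))) atTop (nhds L)) :
    ∑ i, ∑ j, h i j ≤ L := by
  have hN' : (0 : ℝ) < N := by exact_mod_cast hN
  have main : ∀ ε : ℝ, 0 < ε → ∑ i, ∑ j, (h i j - ε) ≤ L := by
    intro ε hε
    have hex : ∀ i j, ∃ k : ℕ, 0 < k ∧ ∀ t, k ∣ t →
        Real.exp ((N * t : ℕ) * (h i j - ε)) ≤ knomial (κ : ℕ∞) (N * t) (R i * C j * t) :=
      fun i j => (hh i j).exists_le_knomial hN (by push_cast; field_simp) hε
    choose k hk0 hk using hex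
    set K := ∏ i, ∏ j, k i j with hK
    have hKpos : 0 < K := Finset.prod_pos fun i _ => Finset.prod_pos fun j _ => hk0 i j
    let σ : ℕ → ℕ := fun l => N * K * (l + 1)
    have hσpos : ∀ l, 0 < σ l := fun l => by positivity
    have hσ : Tendsto σ atTop atTop := by
      refine tendsto_atTop_mono (fun l => ?_) tendsto_id
      have : 1 ≤ N * K := Nat.mul_pos hN hKpos
      simp only [σ, id]
      nlinarith
    have hσσ : Tendsto (fun l => σ l * σ l) atTop atTop := hσ.atTop_mul_atTop₀ hσ
    have hlow : ∀ l, ∑ i, ∑ j, (h i j - ε - 2 * Real.log (σ l * κ + 1) / σ l) ≤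
        (1 / ((σ l * σ l : ℕ) : ℝ) ^ 2) * Real.log (tableCount
          (fun (_ : Fin (σ l * σ l) × Fin m) (_ : Fin (σ l * σ l) × Fin n) => (κ : ℕ∞))
          (cloneVec (σ l * σ l) R) (cloneVec (σ l * σ l) C)) := by
      intro l
      set s := σ l with hs
      set t := N * K ^ 2 * (l + 1) ^ 2 with ht
      have hNt : s * s = N * t := by simp only [hs, ht, σ]; ring
      have hblock : ∀ i j, _ := fun i j => log_tableCount_ge (κ := κ) (s := s)
        (N := R i * C j * t) (h := h i j - ε) (hσpos l) (by
          rw [hNt]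
          refine hk i j t ((dvd_prod_prod k i j).trans ?_)
          rw [← hK, ht]
          exact ⟨N * K * (l + 1) ^ 2, by ring⟩)
      have hprod := prod_tableCount_le (κ := κ) (s := s * s) (R := R) (C := C)
        (d := fun i j => R i * C j * t)
        (fun i => by rw [← Finset.sum_mul, ← Finset.mul_sum, hC, hNt]; ring)
        (fun j => by rw [← Finset.sum_mul, ← Finset.sum_mul, hR, hNt]; ring)
      have hlog := Real.log_le_log (by
        exact_mod_cast Finset.prod_pos fun i _ => Finset.prod_pos fun j _ => (hblock i j).1)
        ((Nat.cast_le (α := ℝ)).2 hprod)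
      rw [Nat.cast_prod, Real.log_prod (fun i _ => by
        exact_mod_cast (Finset.prod_pos fun j _ => (hblock i j).1).ne')] at hlog
      have hs0 : (0 : ℝ) < s := by exact_mod_cast hσpos l
      rw [one_div, ← div_eq_inv_mul, le_div_iff₀ (by positivity)]
      refine le_trans ?_ hlog
      rw [Finset.sum_mul]
      refine Finset.sum_le_sum fun i _ => ?_
      rw [Nat.cast_prod, Real.log_prod (fun j _ => by exact_mod_cast (hblock i j).1.ne'),
        Finset.sum_mul]
      refine Finset.sum_le_sum fun j _ => ?_
      refine le_trans (le_of_eq ?_) (hblock i j).2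
      push_cast
      ring
    have hlim : Tendsto (fun l => ∑ i, ∑ j, (h i j - ε - 2 * Real.log (σ l * κ + 1) / σ l))
        atTop (nhds (∑ i, ∑ j, (h i j - ε - 0))) :=
      tendsto_finsetSum _ fun i _ => tendsto_finsetSum _ fun j _ =>
        ((tendsto_log_div_atTop κ).comp hσ).const_sub _
    simp only [sub_zero] at hlim
    exact le_of_tendsto_of_tendsto' hlim (hL.comp hσσ) hlow
  have hlim : Tendsto (fun ε : ℝ => ∑ i, ∑ j, (h i j - ε)) (nhdsWithin 0 (Set.Ioi 0))
      (nhds (∑ i, ∑ j, (h i j - 0))) := by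
    refine tendsto_finsetSum _ fun i _ => tendsto_finsetSum _ fun j _ => ?_
    exact (tendsto_const_nhds.sub tendsto_id).mono_left nhdsWithin_le_nhds
  simp only [sub_zero] at hlim
  exact le_of_tendsto hlim (eventually_nhdsWithin_of_forall main)

lemma le_sum_entropy_of_tendsto {κ m n N : ℕ} {R : Fin m → ℕ} {C : Fin n → ℕ} (hm : 0 < m)
    (hn : 0 < n) (hR : ∑ i, R i = N) {hr : Fin m → ℝ} {hc : Fin n → ℝ} {h : ℝ}
    (hhr : ∀ i, IsMaxEntropy κ (R i / n) (hr i)) (hhc : ∀ j, IsMaxEntropy κ (C j / m) (hc j))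
    (hh : IsMaxEntropy κ (N / (m * n)) h) {L : ℝ}
    (hL : Tendsto (fun s : ℕ => (1 / (s : ℝ) ^ 2) *
      Real.log (indepEst (κ : ℕ∞) (cloneVec s R) (cloneVec s C))) atTop (nhds L)) :
    L ≤ ∑ i, n * hr i + ∑ j, m * hc j - m * n * h := by
  have hm' : (0 : ℝ) < m := by exact_mod_cast hm
  have hn' : (0 : ℝ) < n := by exact_mod_cast hn
  have main : ∀ ε : ℝ, 0 < ε → L ≤ ∑ i, n * hr i + ∑ j, m * hc j - m * n * (h - ε) := by
    intro ε hε
    obtain ⟨k₀, hk₀0, hk₀⟩ := hh.exists_le_knomial (n := m * n) (r := N) (Nat.mul_pos hm hn)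
      (by push_cast; field_simp) hε
    choose kr hkr0 hkr using fun i => (hhr i).exists_le_knomial (n := n) (r := R i) hn
      (by field_simp) hε
    choose kc hkc0 hkc using fun j => (hhc j).exists_le_knomial (n := m) (r := C j) hm
      (by field_simp) hε
    set K := k₀ * (∏ i, kr i) * ∏ j, kc j with hK
    have hKpos : 0 < K := Nat.mul_pos (Nat.mul_pos hk₀0 (Finset.prod_pos fun i _ => hkr0 i))
      (Finset.prod_pos fun j _ => hkc0 j)
    have hdr : ∀ i, kr i ∣ K := fun i => (Finset.dvd_prod_of_mem kr (Finset.mem_univ i)).trans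
      (Dvd.intro_left _ rfl |>.trans (Dvd.intro _ rfl))
    have hdc : ∀ j, kc j ∣ K := fun j => (Finset.dvd_prod_of_mem kc (Finset.mem_univ j)).trans
      (Dvd.intro_left _ rfl)
    have hd₀ : k₀ ∣ K := (Dvd.intro _ rfl : k₀ ∣ k₀ * ∏ i, kr i).trans (Dvd.intro _ rfl)
    have hσ : Tendsto (fun l : ℕ => K * (l + 1)) atTop atTop := by
      refine tendsto_atTop_mono (fun l => ?_) tendsto_id
      simp only [id]
      nlinarith
    refine le_of_tendsto' (hL.comp hσ) fun l => ?_
    simp only [Function.comp]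
    set s := K * (l + 1) with hs
    have hspos : 0 < s := Nat.mul_pos hKpos (Nat.succ_pos l)
    have hs' : (0 : ℝ) < s := by exact_mod_cast hspos
    have hKs : K ∣ s := Dvd.intro _ rfl
    have h₀ := hk₀ (s * s) ((hd₀.trans hKs).trans (Dvd.intro _ rfl))
    have hri := fun i => (Real.exp_pos _).trans_le (hkr i s ((hdr i).trans hKs))
    have hcj := fun j => (Real.exp_pos _).trans_le (hkc j s ((hdc j).trans hKs))
    have hbr : ∀ i, Real.log (knomial (κ : ℕ∞) (n * s) (R i * s)) ≤ (n * s : ℕ) * hr i := fun i =>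
      (Real.log_le_iff_le_exp (hri i)).2 ((hhr i).knomial_le (by push_cast; field_simp))
    have hbc : ∀ j, Real.log (knomial (κ : ℕ∞) (m * s) (C j * s)) ≤ (m * s : ℕ) * hc j := fun j =>
      (Real.log_le_iff_le_exp (hcj j)).2 ((hhc j).knomial_le (by push_cast; field_simp))
    have hpos₀ := (Real.exp_pos _).trans_le h₀
    have hb₀ : ((m * n * (s * s) : ℕ) : ℝ) * (h - ε) ≤
        Real.log (knomial (κ : ℕ∞) (m * n * (s * s)) (N * (s * s))) :=
      (Real.le_log_iff_exp_le hpos₀).2 h₀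
    have e : Real.log (indepEst (κ : ℕ∞) (cloneVec s R) (cloneVec s C)) =
        -Real.log (knomial (κ : ℕ∞) (m * n * (s * s)) (N * (s * s))) +
        ∑ _a : Fin s, ∑ i, Real.log (knomial (κ : ℕ∞) (n * s) (R i * s)) +
        ∑ _a : Fin s, ∑ j, Real.log (knomial (κ : ℕ∞) (m * s) (C j * s)) := by
      have e1 : s * m * (s * n) = m * n * (s * s) := by ring
      have e2 : ∑ p : Fin s × Fin m, cloneVec s R p = N * (s * s) := by
        rw [Fintype.sum_prod_type]
        simp only [cloneVec, ← Finset.mul_sum, hR]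
        simp; ring
      simp only [indepEst, Fintype.card_prod, Fintype.card_fin, e2]
      rw [e1, Fintype.prod_prod_type, Fintype.prod_prod_type]
      simp only [cloneVec, mul_comm s]
      have p1 : ∏ _a : Fin s, ∏ i, (knomial (κ : ℕ∞) (n * s) (R i * s) : ℝ) ≠ 0 :=
        Finset.prod_ne_zero_iff.2 fun _ _ => Finset.prod_ne_zero_iff.2 fun i _ => (hri i).ne'
      have p2 : ∏ _a : Fin s, ∏ j, (knomial (κ : ℕ∞) (m * s) (C j * s) : ℝ) ≠ 0 :=
        Finset.prod_ne_zero_iff.2 fun _ _ => Finset.prod_ne_zero_iff.2 fun j _ => (hcj j).ne'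
      rw [Real.log_mul (mul_ne_zero (inv_ne_zero hpos₀.ne') p1) p2,
        Real.log_mul (inv_ne_zero hpos₀.ne') p1, Real.log_inv,
        Real.log_prod (fun _ _ => Finset.prod_ne_zero_iff.2 fun i _ => (hri i).ne'),
        Real.log_prod (fun _ _ => Finset.prod_ne_zero_iff.2 fun j _ => (hcj j).ne')]
      simp only [Real.log_prod (fun i _ => (hri i).ne'), Real.log_prod (fun j _ => (hcj j).ne')]
    rw [e, one_div, ← div_eq_inv_mul, div_le_iff₀ (by positivity)]
    simp only [Finset.sum_const, Finset.card_univ, Fintype.card_fin, nsmul_eq_mul]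
    have hsr := mul_le_mul_of_nonneg_left (Finset.sum_le_sum fun i (_ : i ∈ univ) => hbr i) hs'.le
    have hsc := mul_le_mul_of_nonneg_left (Finset.sum_le_sum fun j (_ : j ∈ univ) => hbc j) hs'.le
    push_cast at hsr hsc hb₀
    have er : (s : ℝ) * ∑ i, (n : ℝ) * s * hr i = (∑ i, n * hr i) * s ^ 2 := by
      rw [Finset.mul_sum, Finset.sum_mul]
      exact Finset.sum_congr rfl fun i _ => by ring
    have ec : (s : ℝ) * ∑ j, (m : ℝ) * s * hc j = (∑ j, m * hc j) * s ^ 2 := by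
      rw [Finset.mul_sum, Finset.sum_mul]
      exact Finset.sum_congr rfl fun i _ => by ring
    rw [er] at hsr
    rw [ec] at hsc
    nlinarith
  have hlim : Tendsto (fun ε : ℝ => ∑ i, n * hr i + ∑ j, m * hc j - m * n * (h - ε))
      (nhdsWithin 0 (Set.Ioi 0)) (nhds (∑ i, n * hr i + ∑ j, m * hc j - m * n * (h - 0))) := by
    refine Tendsto.mono_left ?_ nhdsWithin_le_nhds
    exact Continuous.tendsto (by fun_prop) 0
  rw [sub_zero] at hlim
  exact ge_of_tendsto hlim (eventually_nhdsWithin_of_forall main)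

section Calculus

open Polynomial

/-- The numerator of the derivative of the mean of the truncated geometric distribution. -/
noncomputable def meanNum (S : ℝ[X]) : ℝ[X] :=
  derivative S * S + X * derivative (derivative S) * S - X * derivative S ^ 2

/-- The numerator of the derivative of `q * S'² / meanNum`. -/
noncomputable def weightNum (S : ℝ[X]) : ℝ[X] :=
  (derivative S ^ 2 + 2 * X * derivative S * derivative (derivative S)) * meanNum S -
    X * derivative S ^ 2 * derivative (meanNum S)

/-- The numerator of the derivative of `-weightNum * S² / meanNum³`. -/
noncomputable def slopeNum (S : ℝ[X]) : ℝ[X] :=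
  3 * weightNum S * S ^ 2 * derivative (meanNum S) -
    (derivative (weightNum S) * S ^ 2 + 2 * weightNum S * S * derivative S) * meanNum S

lemma eval_zero_geomPoly_derivs {κ : ℕ} (hκ : 2 ≤ κ) :
    (geomPoly κ).eval 0 = 1 ∧ (derivative (geomPoly κ)).eval 0 = 1 ∧
      (derivative (derivative (geomPoly κ))).eval 0 = 2 := by
  simp only [← coeff_zero_eq_eval_zero, coeff_derivative, coeff_geomPoly]
  have : 1 ≤ κ := by omega
  norm_num [hκ, this]

lemma eval_zero_slopeNum {κ : ℕ} (hκ : 2 ≤ κ) :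
    (meanNum (geomPoly κ)).eval 0 = 1 ∧ (slopeNum (geomPoly κ)).eval 0 = 2 := by
  obtain ⟨h0, h1, h2⟩ := eval_zero_geomPoly_derivs hκ
  constructor
  · simp [meanNum, h0, h1]
  · simp only [slopeNum, weightNum, meanNum]
    simp [h0, h1, h2, derivative_pow]
    norm_num

variable {κ : ℕ}

/-- The mean of the truncated geometric distribution with ratio `q`. -/
noncomputable def ratioMean (κ : ℕ) (q : ℝ) : ℝ :=
  q * (derivative (geomPoly κ)).eval q / (geomPoly κ).eval q

/-- `x² H''(x)` in terms of the ratio `q`, where `x` is the mean. -/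
noncomputable def ratioWeight (κ : ℕ) (q : ℝ) : ℝ :=
  -(q * (derivative (geomPoly κ)).eval q ^ 2) / (meanNum (geomPoly κ)).eval q

/-- The derivative of `ratioWeight` with respect to the mean. -/
noncomputable def ratioSlope (κ : ℕ) (q : ℝ) : ℝ :=
  -((weightNum (geomPoly κ)).eval q * (geomPoly κ).eval q ^ 2) / (meanNum (geomPoly κ)).eval q ^ 3

lemma hasDerivAt_ratioMean {q : ℝ} (hS : (geomPoly κ).eval q ≠ 0) :
    HasDerivAt (ratioMean κ) ((meanNum (geomPoly κ)).eval q / (geomPoly κ).eval q ^ 2) q := by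
  have h := ((hasDerivAt_id q).mul ((derivative (geomPoly κ)).hasDerivAt q)).div
    ((geomPoly κ).hasDerivAt q) hS
  refine h.congr_deriv ?_
  simp only [meanNum, eval_add, eval_sub, eval_mul, eval_pow, eval_X, id, Pi.mul_apply]
  ring

lemma hasDerivAt_ratioWeight {q : ℝ} (hM : (meanNum (geomPoly κ)).eval q ≠ 0) :
    HasDerivAt (ratioWeight κ)
      (-(weightNum (geomPoly κ)).eval q / (meanNum (geomPoly κ)).eval q ^ 2) q := by
  have h := (((hasDerivAt_id q).mul (((derivative (geomPoly κ)).hasDerivAt q).pow 2)).neg).div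
    ((meanNum (geomPoly κ)).hasDerivAt q) hM
  refine h.congr_deriv ?_
  simp only [weightNum, eval_add, eval_sub, eval_mul, eval_pow, eval_X, id, Pi.mul_apply,
    Pi.neg_apply, Pi.pow_apply, eval_ofNat]
  congr 1
  push_cast
  ring

lemma hasDerivAt_ratioSlope {q : ℝ} (hM : (meanNum (geomPoly κ)).eval q ≠ 0) :
    HasDerivAt (ratioSlope κ)
      ((slopeNum (geomPoly κ)).eval q / (meanNum (geomPoly κ)).eval q ^ 4) q := by
  have h := ((((weightNum (geomPoly κ)).hasDerivAt q).mul
     (((geomPoly κ).hasDerivAt q).pow 2)).neg).div (((meanNum (geomPoly κ)).hasDerivAt q).pow 3) (pow_ne_zero 3 hM)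
  refine h.congr_deriv ?_
  simp only [slopeNum, eval_add, eval_sub, eval_mul, eval_pow, Pi.mul_apply,
    Pi.neg_apply, Pi.pow_apply, eval_ofNat]
  field_simp
  push_cast
  ring

lemma exists_ratio_bound (hκ : 2 ≤ κ) : ∃ q₀ : ℝ, 0 < q₀ ∧ ∀ q ∈ Set.Icc 0 q₀,
    0 < (geomPoly κ).eval q ∧ 0 < (meanNum (geomPoly κ)).eval q ∧
      0 < (slopeNum (geomPoly κ)).eval q := by
  obtain ⟨hM, hQ⟩ := eval_zero_slopeNum hκ
  have h1 := (meanNum (geomPoly κ)).continuous.continuousAt.eventually_const_lt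
    (show 0 < (meanNum (geomPoly κ)).eval 0 by rw [hM]; norm_num)
  have h2 := (slopeNum (geomPoly κ)).continuous.continuousAt.eventually_const_lt
    (show 0 < (slopeNum (geomPoly κ)).eval 0 by rw [hQ]; norm_num)
  obtain ⟨r, hr, hball⟩ := Metric.eventually_nhds_iff.1 (h1.and h2)
  refine ⟨r / 2, by positivity, fun q hq => ⟨eval_geomPoly_pos κ hq.1, hball ?_⟩⟩
  rw [Real.dist_eq, sub_zero, abs_of_nonneg hq.1]
  linarith [hq.2]

/-- Near `0` the maximal entropy function `H` is such that `x² H''(x)` is strictly convex. -/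
lemma exists_entropy_function (hκ : 2 ≤ κ) : ∃ (x₀ : ℝ) (H H₁ W : ℝ → ℝ), 0 < x₀ ∧
    (∀ x ∈ Set.Ico 0 x₀, IsMaxEntropy κ x (H x)) ∧ ContinuousOn H (Set.Ico 0 x₀) ∧
    W 0 = 0 ∧
    (∀ x ∈ Set.Ioo 0 x₀, HasDerivAt H (H₁ x) x) ∧
    (∀ x ∈ Set.Ioo 0 x₀, HasDerivAt H₁ (W x / x ^ 2) x) ∧
    StrictConvexOn ℝ (Set.Ico 0 x₀) W := by
  obtain ⟨q₀, hq₀, hb⟩ := exists_ratio_bound hκ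
  have hmono : StrictMonoOn (ratioMean κ) (Set.Icc 0 q₀) := by
    refine strictMonoOn_of_deriv_pos (convex_Icc _ _)
      (fun q hq => (hasDerivAt_ratioMean (hb q hq).1.ne').continuousAt.continuousWithinAt)
      fun q hq => ?_
    have hq' := interior_subset hq
    rw [(hasDerivAt_ratioMean (hb q hq').1.ne').deriv]
    exact div_pos (hb q hq').2.1 (pow_pos (hb q hq').1 2)
  have hcont : ContinuousOn (ratioMean κ) (Set.Icc 0 q₀) := fun q hq =>
    (hasDerivAt_ratioMean (hb q hq).1.ne').continuousAt.continuousWithinAt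
  have hslope : StrictMonoOn (ratioSlope κ) (Set.Icc 0 q₀) := by
    refine strictMonoOn_of_deriv_pos (convex_Icc _ _)
      (fun q hq => (hasDerivAt_ratioSlope (hb q hq).2.1.ne').continuousAt.continuousWithinAt)
      fun q hq => ?_
    have hq' := interior_subset hq
    rw [(hasDerivAt_ratioSlope (hb q hq').2.1.ne').deriv]
    exact div_pos (hb q hq').2.2 (pow_pos (hb q hq').2.1 4)
  have hmean0 : ratioMean κ 0 = 0 := by simp [ratioMean]
  set x₀ := ratioMean κ q₀ with hx₀
  have h0mem : (0 : ℝ) ∈ Set.Icc 0 q₀ := ⟨le_rfl, hq₀.le⟩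
  have h1mem : q₀ ∈ Set.Icc 0 q₀ := ⟨hq₀.le, le_rfl⟩
  have hx₀pos : 0 < x₀ := by
    rw [← hmean0]; exact hmono h0mem h1mem hq₀
  have hsurj : Set.SurjOn (ratioMean κ) (Set.Icc 0 q₀) (Set.Icc 0 x₀) := by
    have := intermediate_value_Icc hq₀.le hcont
    rwa [hmean0] at this
  set g := Function.invFunOn (ratioMean κ) (Set.Icc 0 q₀) with hg
  have hgmem : ∀ x ∈ Set.Icc 0 x₀, g x ∈ Set.Icc 0 q₀ := fun x hx =>
    Function.invFunOn_mem (hsurj hx)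
  have hgeq : ∀ x ∈ Set.Icc 0 x₀, ratioMean κ (g x) = x := fun x hx =>
    Function.invFunOn_eq (hsurj hx)
  have hginv : ∀ q ∈ Set.Icc 0 q₀, g (ratioMean κ q) = q := fun q hq =>
    hmono.injOn.leftInvOn_invFunOn hq
  have hrange : ∀ q ∈ Set.Icc 0 q₀, ratioMean κ q ∈ Set.Icc 0 x₀ := fun q hq => by
    constructor
    · rw [← hmean0]; exact hmono.monotoneOn h0mem hq hq.1
    · exact hmono.monotoneOn hq h1mem hq.2
  have hg0 : g 0 = 0 := by
    have := hginv 0 h0mem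
    rwa [hmean0] at this
  have hgmono : StrictMonoOn g (Set.Icc 0 x₀) := by
    intro x hx y hy hxy
    rw [← hmono.lt_iff_lt (hgmem x hx) (hgmem y hy), hgeq x hx, hgeq y hy]
    exact hxy
  have hgcont : ContinuousOn g (Set.Icc 0 x₀) := by
    let G : Set.Icc 0 x₀ → Set.Icc 0 q₀ := fun x => ⟨g x, hgmem x x.2⟩
    have hG : Continuous G := by
      refine Monotone.continuous_of_surjective (fun x y hxy => ?_) fun q => ?_
      · exact hgmono.monotoneOn x.2 y.2 hxy
      · exact ⟨⟨_, hrange q q.2⟩, Subtype.ext (hginv q q.2)⟩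
    exact continuousOn_iff_continuous_domRestrict.2 (continuous_subtype_val.comp hG)
  have hgIoo : ∀ x ∈ Set.Ioo 0 x₀, g x ∈ Set.Ioo 0 q₀ := fun x hx => by
    have hx' := Set.Ioo_subset_Icc_self hx
    have ha := hgmono ⟨le_rfl, hx₀pos.le⟩ hx' hx.1
    have hb' := hgmono hx' ⟨hx₀pos.le, le_rfl⟩ hx.2
    rw [hg0] at ha
    rw [hx₀, hginv q₀ h1mem] at hb'
    exact ⟨ha, hb'⟩
  have hgderiv : ∀ x ∈ Set.Ioo 0 x₀, HasDerivAt g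
      ((geomPoly κ).eval (g x) ^ 2 / (meanNum (geomPoly κ)).eval (g x)) x := fun x hx => by
    have hq := hb _ (Set.Ioo_subset_Icc_self (hgIoo x hx))
    have hgc : ContinuousAt g x := hgcont.continuousAt (Icc_mem_nhds hx.1 hx.2)
    have := HasDerivAt.of_local_left_inverse hgc (hasDerivAt_ratioMean hq.1.ne')
      (div_ne_zero hq.2.1.ne' (pow_ne_zero 2 hq.1.ne'))
      (by
        filter_upwards [Ioo_mem_nhds hx.1 hx.2] with y hy
        exact hgeq y (Set.Ioo_subset_Icc_self hy))
    rwa [inv_div] at this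
  have hIco : Set.Ico 0 x₀ ⊆ Set.Icc 0 x₀ := Set.Ico_subset_Icc_self
  refine ⟨x₀, fun x => Real.log ((geomPoly κ).eval (g x)) - x * Real.log (g x),
    fun x => -Real.log (g x), fun x => ratioWeight κ (g x), hx₀pos, ?_, ?_, ?_, ?_, ?_, ?_⟩
  · intro x hx
    rcases hx.1.eq_or_lt with rfl | hx0
    · exact Or.inl ⟨rfl, by simp [hg0, (eval_zero_geomPoly_derivs hκ).1]⟩
    · have hgx := hgIoo x ⟨hx0, hx.2⟩
      have hS := (hb _ (Set.Ioo_subset_Icc_self hgx)).1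
      refine Or.inr ⟨g x, hgx.1, ?_, rfl⟩
      have := hgeq x (hIco hx)
      rw [ratioMean, div_eq_iff hS.ne'] at this
      exact this
  · have hc : ContinuousOn (fun q => Real.log ((geomPoly κ).eval q) -
        (derivative (geomPoly κ)).eval q / (geomPoly κ).eval q * (q * Real.log q))
        (Set.Icc 0 q₀) := by
      have hne : ∀ q ∈ Set.Icc 0 q₀, (geomPoly κ).eval q ≠ 0 := fun q hq => (hb q hq).1.ne'
      exact ((geomPoly κ).continuous.continuousOn.log hne).sub
        (((derivative (geomPoly κ)).continuous.continuousOn.div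
          (geomPoly κ).continuous.continuousOn hne).mul Real.continuous_mul_log.continuousOn)
    refine ((hc.comp hgcont hgmem).mono hIco).congr fun x hx => ?_
    simp only [Function.comp]
    have hxe := hgeq x (hIco hx)
    rw [ratioMean] at hxe
    linear_combination Real.log (g x) * hxe
  · simp [hg0, ratioWeight]
  · intro x hx
    have hgx := hgIoo x hx
    have hq := hb _ (Set.Ioo_subset_Icc_self hgx)
    have hd := hgderiv x hx
    have h := (((geomPoly κ).hasDerivAt (g x)).comp x hd |>.log hq.1.ne').sub
      ((hasDerivAt_id x).mul (hd.log hgx.1.ne'))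
    refine h.congr_deriv ?_
    have hxe := hgeq x (Set.Ioo_subset_Icc_self hx)
    have h1 := hgx.1.ne'
    have h2 := hq.1.ne'
    have h3 := hq.2.1.ne'
    rw [ratioMean, div_eq_iff h2] at hxe
    simp only [id, Function.comp]
    field_simp
    linear_combination (geomPoly κ).eval (g x) * hxe
  · intro x hx
    have hgx := hgIoo x hx
    have hq := hb _ (Set.Ioo_subset_Icc_self hgx)
    have hd := hgderiv x hx
    refine (hd.log hgx.1.ne').neg.congr_deriv ?_
    have hxe := hgeq x (Set.Ioo_subset_Icc_self hx)
    have hx0 := hx.1.ne'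
    rw [ratioMean] at hxe
    have h1 := hgx.1.ne'
    have h2 := hq.1.ne'
    have h3 := hq.2.1.ne'
    rw [div_eq_iff h2] at hxe
    simp only [ratioWeight]
    field_simp
    linear_combination (g x * (derivative (geomPoly κ)).eval (g x) +
      x * (geomPoly κ).eval (g x)) * hxe
  · refine StrictMonoOn.strictConvexOn_of_deriv (convex_Ico _ _) ?_ ?_
    · have hc : ContinuousOn (ratioWeight κ) (Set.Icc 0 q₀) := fun q hq =>
        (hasDerivAt_ratioWeight (hb q hq).2.1.ne').continuousAt.continuousWithinAt
      exact (hc.comp hgcont hgmem).mono hIco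
    · rw [interior_Ico]
      have hW : ∀ x ∈ Set.Ioo 0 x₀,
          deriv (fun x => ratioWeight κ (g x)) x = ratioSlope κ (g x) := by
        intro x hx
        have hq := hb _ (Set.Ioo_subset_Icc_self (hgIoo x hx))
        have := (hasDerivAt_ratioWeight hq.2.1.ne').comp x (hgderiv x hx)
        refine (this.congr_deriv ?_).deriv
        have h2 := hq.1.ne'
        have h3 := hq.2.1.ne'
        simp only [ratioSlope]
        field_simp
      intro x hx y hy hxy
      rw [hW x hx, hW y hy]
      have hx' := Set.Ioo_subset_Icc_self hx
      have hy' := Set.Ioo_subset_Icc_self hy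
      exact hslope (hgmem x hx') (hgmem y hy') (hgmono hx' hy' hxy)

end Calculus

section Jensen

variable {ι ι' : Type*} [Fintype ι] [Fintype ι']

lemma card_mul_map_average_le [Nonempty ι] {s : Set ℝ} {f : ℝ → ℝ} (hf : ConvexOn ℝ s f)
    {p : ι → ℝ} (hp : ∀ i, p i ∈ s) :
    Fintype.card ι * f ((∑ i, p i) / Fintype.card ι) ≤ ∑ i, f (p i) := by
  have hc : (0 : ℝ) < Fintype.card ι := by exact_mod_cast Fintype.card_pos
  have h := hf.map_sum_le (t := univ) (w := fun _ => (Fintype.card ι : ℝ)⁻¹) (p := p)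
    (fun _ _ => by positivity) (by simp) fun i _ => hp i
  simp only [smul_eq_mul, ← mul_sum] at h
  rwa [inv_mul_eq_div, inv_mul_eq_div, le_div_iff₀' hc] at h

lemma card_mul_map_average_lt [Nonempty ι] {s : Set ℝ} {f : ℝ → ℝ} (hf : StrictConvexOn ℝ s f)
    {p : ι → ℝ} (hp : ∀ i, p i ∈ s) (hne : ∃ i j, p i ≠ p j) :
    Fintype.card ι * f ((∑ i, p i) / Fintype.card ι) < ∑ i, f (p i) := by
  have hc : (0 : ℝ) < Fintype.card ι := by exact_mod_cast Fintype.card_pos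
  obtain ⟨i, j, hij⟩ := hne
  have h := hf.map_sum_lt (t := univ) (w := fun _ => (Fintype.card ι : ℝ)⁻¹) (p := p)
    (fun _ _ => by positivity) (by simp) (fun i _ => hp i) ⟨i, mem_univ _, j, mem_univ _, hij⟩
  simp only [smul_eq_mul, ← mul_sum] at h
  rwa [inv_mul_eq_div, inv_mul_eq_div, lt_div_iff₀' hc] at h

lemma convexOn_Icc_of_hasDerivAt2 {a b : ℝ} {f f₁ f₂ : ℝ → ℝ} (hf : ContinuousOn f (Set.Icc a b))
    (hf₁ : ∀ x ∈ Set.Ioo a b, HasDerivAt f (f₁ x) x)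
    (hf₂ : ∀ x ∈ Set.Ioo a b, HasDerivAt f₁ (f₂ x) x) (h : ∀ x ∈ Set.Ioo a b, 0 ≤ f₂ x) :
    ConvexOn ℝ (Set.Icc a b) f := by
  refine convexOn_of_hasDerivWithinAt2_nonneg (f' := f₁) (f'' := f₂) (convex_Icc _ _) hf ?_ ?_ ?_
  all_goals rw [interior_Icc]
  exacts [fun x hx => (hf₁ x hx).hasDerivWithinAt, fun x hx => (hf₂ x hx).hasDerivWithinAt, h]

lemma strictConvexOn_Icc_of_hasDerivAt2 {a b : ℝ} {f f₁ f₂ : ℝ → ℝ}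
    (hf : ContinuousOn f (Set.Icc a b)) (hf₁ : ∀ x ∈ Set.Ioo a b, HasDerivAt f (f₁ x) x)
    (hf₂ : ∀ x ∈ Set.Ioo a b, HasDerivAt f₁ (f₂ x) x) (h : ∀ x ∈ Set.Ioo a b, 0 < f₂ x) :
    StrictConvexOn ℝ (Set.Icc a b) f := by
  refine StrictMonoOn.strictConvexOn_of_deriv (convex_Icc _ _) hf ?_
  rw [interior_Icc]
  have hmono : StrictMonoOn f₁ (Set.Ioo a b) := by
    refine strictMonoOn_of_deriv_pos (convex_Ioo _ _)
      (fun x hx => (hf₂ x hx).continuousAt.continuousWithinAt) fun x hx => ?_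
    rw [interior_Ioo] at hx
    rw [(hf₂ x hx).deriv]
    exact h x hx
  exact hmono.congr fun x hx => (hf₁ x hx).deriv.symm

variable {x₀ ρ : ℝ} {H H₁ W : ℝ → ℝ}

lemma hasDerivAt_sum_comp_sub (hH : ∀ x ∈ Set.Ioo 0 x₀, HasDerivAt H (H₁ x) x)
    {a : ι → ℝ} (ha : ∀ i, 0 ≤ a i) {b k : ℝ} (hb : 0 < b) {r : ℝ} (hr : 0 < r)
    (hra : ∀ i, r * a i < x₀) (hrb : r * b < x₀) :
    HasDerivAt (fun r => ∑ i, H (r * a i) - k * H (r * b))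
      (∑ i, a i * H₁ (r * a i) - k * (b * H₁ (r * b))) r := by
  refine (HasDerivAt.fun_sum fun i _ => ?_).sub (HasDerivAt.const_mul k ?_)
  · rcases (ha i).eq_or_lt with h | h
    · simpa [← h] using hasDerivAt_const r (H 0)
    · have := (hH (r * a i) ⟨by positivity, hra i⟩).comp r ((hasDerivAt_id r).mul_const (a i))
      exact this.congr_deriv (by ring)
  · have := (hH (r * b) ⟨by positivity, hrb⟩).comp r ((hasDerivAt_id r).mul_const b)
    exact this.congr_deriv (by ring)

lemma hasDerivAt_sum_mul_comp_sub (hW0 : W 0 = 0)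
    (hH₁ : ∀ x ∈ Set.Ioo 0 x₀, HasDerivAt H₁ (W x / x ^ 2) x)
    {a : ι → ℝ} (ha : ∀ i, 0 ≤ a i) {b k : ℝ} (hb : 0 < b) {r : ℝ} (hr : 0 < r)
    (hra : ∀ i, r * a i < x₀) (hrb : r * b < x₀) :
    HasDerivAt (fun r => ∑ i, a i * H₁ (r * a i) - k * (b * H₁ (r * b)))
      ((∑ i, W (r * a i) - k * W (r * b)) / r ^ 2) r := by
  have h : HasDerivAt (fun r => ∑ i, a i * H₁ (r * a i) - k * (b * H₁ (r * b)))
      (∑ i, W (r * a i) / r ^ 2 - k * (W (r * b) / r ^ 2)) r := by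
    refine (HasDerivAt.fun_sum fun i _ => ?_).sub (HasDerivAt.const_mul k ?_)
    · rcases (ha i).eq_or_lt with h | h
      · simpa [← h, hW0] using hasDerivAt_const r (0 : ℝ)
      · have := ((hH₁ (r * a i) ⟨by positivity, hra i⟩).comp r
          ((hasDerivAt_id r).mul_const (a i))).const_mul (a i)
        exact this.congr_deriv (by field_simp)
    · have := ((hH₁ (r * b) ⟨by positivity, hrb⟩).comp r
        ((hasDerivAt_id r).mul_const b)).const_mul b
      exact this.congr_deriv (by field_simp)
  refine h.congr_deriv ?_
  rw [← sum_div]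
  ring

lemma convexOn_sum_comp_sub [Nonempty ι] (hcont : ContinuousOn H (Set.Ico 0 x₀)) (hW0 : W 0 = 0)
    (hH : ∀ x ∈ Set.Ioo 0 x₀, HasDerivAt H (H₁ x) x)
    (hH₁ : ∀ x ∈ Set.Ioo 0 x₀, HasDerivAt H₁ (W x / x ^ 2) x)
    (hW : StrictConvexOn ℝ (Set.Ico 0 x₀) W) {a : ι → ℝ} (ha : ∀ i, 0 ≤ a i) (hsum : 0 < ∑ i, a i)
    (hρ : ∀ i, ρ * a i < x₀) :
    ConvexOn ℝ (Set.Icc 0 ρ) (fun r => ∑ i, H (r * a i) -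
        Fintype.card ι * H (r * ((∑ i, a i) / Fintype.card ι))) ∧
      ((∃ i j, a i ≠ a j) → StrictConvexOn ℝ (Set.Icc 0 ρ) (fun r => ∑ i, H (r * a i) -
        Fintype.card ι * H (r * ((∑ i, a i) / Fintype.card ι)))) := by
  have hc : (0 : ℝ) < Fintype.card ι := by exact_mod_cast Fintype.card_pos
  have hb : 0 < (∑ i, a i) / Fintype.card ι := by positivity
  have hρb : ρ * ((∑ i, a i) / Fintype.card ι) < x₀ := by
    rw [← mul_div_assoc, div_lt_iff₀' hc, mul_sum]
    calc ∑ i, ρ * a i < ∑ _i : ι, x₀ := sum_lt_sum_of_nonempty univ_nonempty fun i _ => hρ i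
      _ = Fintype.card ι * x₀ := by simp
  have hmem : ∀ {c : ℝ}, 0 ≤ c → ρ * c < x₀ → ∀ r ∈ Set.Icc 0 ρ, r * c ∈ Set.Ico 0 x₀ :=
    fun hc' hlt r hr => ⟨mul_nonneg hr.1 hc', (mul_le_mul_of_nonneg_right hr.2 hc').trans_lt hlt⟩
  have hcomp : ∀ {c : ℝ}, 0 ≤ c → ρ * c < x₀ →
      ContinuousOn (fun r => H (r * c)) (Set.Icc 0 ρ) := fun {c} hc' hlt =>
    hcont.comp (continuous_mul_const c).continuousOn (hmem hc' hlt)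
  have hP : ContinuousOn (fun r => ∑ i, H (r * a i) -
      Fintype.card ι * H (r * ((∑ i, a i) / Fintype.card ι))) (Set.Icc 0 ρ) :=
    (continuousOn_finsetSum _ fun i _ => hcomp (ha i) (hρ i)).sub
      (continuousOn_const.mul (hcomp hb.le hρb))
  have hP₁ : ∀ r ∈ Set.Ioo 0 ρ, _ := fun r hr =>
    hasDerivAt_sum_comp_sub (k := Fintype.card ι) hH ha hb hr.1
      (fun i => (hmem (ha i) (hρ i) r (Set.Ioo_subset_Icc_self hr)).2)
      (hmem hb.le hρb r (Set.Ioo_subset_Icc_self hr)).2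
  have hP₂ : ∀ r ∈ Set.Ioo 0 ρ, _ := fun r hr =>
    hasDerivAt_sum_mul_comp_sub (k := Fintype.card ι) hW0 hH₁ ha hb hr.1
      (fun i => (hmem (ha i) (hρ i) r (Set.Ioo_subset_Icc_self hr)).2)
      (hmem hb.le hρb r (Set.Ioo_subset_Icc_self hr)).2
  constructor
  · refine convexOn_Icc_of_hasDerivAt2 hP hP₁ hP₂ fun r hr => ?_
    have h := card_mul_map_average_le hW.convexOn
      fun i => hmem (ha i) (hρ i) r (Set.Ioo_subset_Icc_self hr)
    rw [← mul_sum, mul_div_assoc] at h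
    exact div_nonneg (sub_nonneg.2 h) (sq_nonneg r)
  · rintro ⟨i, j, hij⟩
    refine strictConvexOn_Icc_of_hasDerivAt2 hP hP₁ hP₂ fun r hr => ?_
    have h := card_mul_map_average_lt hW
      (fun i => hmem (ha i) (hρ i) r (Set.Ioo_subset_Icc_self hr))
      ⟨i, j, fun h => hij (mul_left_cancel₀ hr.1.ne' h)⟩
    rw [← mul_sum, mul_div_assoc] at h
    exact div_pos (sub_pos.2 h) (pow_pos hr.1 2)

/-- Applying Jensen's inequality along both margins of the matrix `r i * c j / N`. -/
lemma sum_sum_comp_ge [Nonempty ι] [Nonempty ι'] (hcont : ContinuousOn H (Set.Ico 0 x₀))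
    (hW0 : W 0 = 0) (hH : ∀ x ∈ Set.Ioo 0 x₀, HasDerivAt H (H₁ x) x)
    (hH₁ : ∀ x ∈ Set.Ioo 0 x₀, HasDerivAt H₁ (W x / x ^ 2) x)
    (hW : StrictConvexOn ℝ (Set.Ico 0 x₀) W) {r : ι → ℝ} {c : ι' → ℝ} {N : ℝ} (hN : 0 < N)
    (hr : ∀ i, 0 ≤ r i) (hc : ∀ j, 0 ≤ c j) (hrN : ∑ i, r i = N) (hcN : ∑ j, c j = N)
    (hrρ : ∀ i, r i ≤ ρ) (hρ : ∀ j, ρ * c j / N < x₀) :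
    (∑ i, Fintype.card ι' * H (r i / Fintype.card ι') +
        ∑ j, Fintype.card ι * H (c j / Fintype.card ι) -
          Fintype.card ι * Fintype.card ι' * H (N / (Fintype.card ι * Fintype.card ι')) ≤
        ∑ i, ∑ j, H (r i * c j / N)) ∧
      ((∃ i i', r i ≠ r i') → (∃ j j', c j ≠ c j') →
        ∑ i, Fintype.card ι' * H (r i / Fintype.card ι') +
          ∑ j, Fintype.card ι * H (c j / Fintype.card ι) -
            Fintype.card ι * Fintype.card ι' * H (N / (Fintype.card ι * Fintype.card ι')) <
          ∑ i, ∑ j, H (r i * c j / N)) := by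
  have hsum : ∑ j, c j / N = 1 := by rw [← sum_div, hcN, div_self hN.ne']
  obtain ⟨hcvx, hstrict⟩ := convexOn_sum_comp_sub (a := fun j => c j / N) (ρ := ρ) hcont hW0 hH hH₁
    hW (fun j => div_nonneg (hc j) hN.le) (hsum ▸ one_pos)
    fun j => by rw [← mul_div_assoc]; exact hρ j
  have hmem : ∀ i, r i ∈ Set.Icc 0 ρ := fun i => ⟨hr i, hrρ i⟩
  have hm : (Fintype.card ι : ℝ) ≠ 0 := by exact_mod_cast Fintype.card_ne_zero
  have hn : (Fintype.card ι' : ℝ) ≠ 0 := by exact_mod_cast Fintype.card_ne_zero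
  have e₁ : ∀ j, N / Fintype.card ι * (c j / N) = c j / Fintype.card ι := fun j => by
    field_simp
  have e₂ : N / Fintype.card ι * (1 / Fintype.card ι') =
      N / (Fintype.card ι * Fintype.card ι') := by
    field_simp
  constructor
  · have h := card_mul_map_average_le hcvx hmem
    simp only [hrN, hsum, e₁, e₂, sum_sub_distrib, ← mul_div_assoc, mul_one] at h
    simp only [mul_sub, mul_sum] at h
    linarith
  · rintro hri ⟨j, j', hj⟩
    have h := card_mul_map_average_lt
      (hstrict ⟨j, j', fun h => hj ((div_left_inj' hN.ne').1 h)⟩) hmem hri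
    simp only [hrN, hsum, e₁, e₂, sum_sub_distrib, ← mul_div_assoc, mul_one] at h
    simp only [mul_sub, mul_sum] at h
    linarith

end Jensen

/-- **Theorem 4.** For `κ ≥ 2` and sufficiently sparse margins, the margins are
asymptotically positively correlated: the limit for `T_κ` dominates the limit for `I_κ`. -/
theorem attraction_of_sparse_margins (κ : ℕ) (hκ : 2 ≤ κ) :
    ∃ δ : ℝ, δ ∈ Set.Ioo (0 : ℝ) 1 ∧
      ∀ (m n : ℕ) (R : Fin m → ℕ) (C : Fin n → ℕ) (N : ℕ),
        ∑ i, R i = N → ∑ j, C j = N →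
        0 < tableCount (fun (_ : Fin m) (_ : Fin n) => (κ : ℕ∞)) R C →
        (⨆ i, (R i : ℝ)) * (⨆ j, (C j : ℝ)) < δ * κ * N →
        ∀ LT LI : ℝ,
          Filter.Tendsto (fun s : ℕ => (1 / (s : ℝ) ^ 2) *
            Real.log (tableCount (fun (_ : Fin s × Fin m) (_ : Fin s × Fin n) => (κ : ℕ∞))
              (cloneVec s R) (cloneVec s C))) Filter.atTop (nhds LT) →
          Filter.Tendsto (fun s : ℕ => (1 / (s : ℝ) ^ 2) *
            Real.log (indepEst (κ : ℕ∞) (cloneVec s R) (cloneVec s C)))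
            Filter.atTop (nhds LI) →
          LI ≤ LT ∧
          ((¬ ∀ i i', R i = R i') → (¬ ∀ j j', C j = C j') → LI < LT) := by
  obtain ⟨x₀, H, H₁, W, hx₀, hmax, hcont, hW0, hH, hH₁, hW⟩ := exists_entropy_function hκ
  have hκ0 : (0 : ℝ) < κ := by exact_mod_cast (by omega : 0 < κ)
  refine ⟨min (1 / 2) (x₀ / κ), ⟨by positivity, by
    exact (min_le_left _ _).trans_lt (by norm_num)⟩, ?_⟩
  intro m n R C N hR hC _ hsparse LT LI hLT hLI
  have hRle : ∀ i, (R i : ℝ) ≤ ⨆ i, (R i : ℝ) :=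
    le_ciSup (Set.finite_range fun i => (R i : ℝ)).bddAbove
  have hCle : ∀ j, (C j : ℝ) ≤ ⨆ j, (C j : ℝ) :=
    le_ciSup (Set.finite_range fun j => (C j : ℝ)).bddAbove
  have hRnn : 0 ≤ ⨆ i, (R i : ℝ) := Real.iSup_nonneg fun i => Nat.cast_nonneg _
  have hCnn : 0 ≤ ⨆ j, (C j : ℝ) := Real.iSup_nonneg fun j => Nat.cast_nonneg _
  have hNpos : 0 < N := by
    rcases Nat.eq_zero_or_pos N with rfl | h
    · simp only [Nat.cast_zero, mul_zero] at hsparse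
      exact absurd hsparse (mul_nonneg hRnn hCnn).not_gt
    · exact h
  have hN : (0 : ℝ) < N := by exact_mod_cast hNpos
  have hm : 0 < m := by
    rcases Nat.eq_zero_or_pos m with rfl | h
    · simp at hR; omega
    · exact h
  have hn : 0 < n := by
    rcases Nat.eq_zero_or_pos n with rfl | h
    · simp at hC; omega
    · exact h
  have hm' : (0 : ℝ) < m := by exact_mod_cast hm
  have hn' : (0 : ℝ) < n := by exact_mod_cast hn
  have := Fin.pos_iff_nonempty.1 hm
  have := Fin.pos_iff_nonempty.1 hn
  have hRN : ∑ i, (R i : ℝ) = N := by exact_mod_cast hR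
  have hCN : ∑ j, (C j : ℝ) = N := by exact_mod_cast hC
  set a := ⨆ i, (R i : ℝ)
  set b := ⨆ j, (C j : ℝ)
  have hab : a * b < x₀ * N := by
    refine hsparse.trans_le (mul_le_mul_of_nonneg_right ?_ hN.le)
    rw [← le_div_iff₀ hκ0]
    exact min_le_right _ _
  have hNa : (N : ℝ) ≤ m * a := by
    rw [← hRN]; simpa using sum_le_card_nsmul univ (fun i => (R i : ℝ)) a fun i _ => hRle i
  have hNb : (N : ℝ) ≤ n * b := by
    rw [← hCN]; simpa using sum_le_card_nsmul univ (fun j => (C j : ℝ)) b fun j _ => hCle j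
  have ha : a < x₀ * n := by
    refine lt_of_mul_lt_mul_right (a := (N : ℝ)) ?_ hN.le
    nlinarith [mul_le_mul_of_nonneg_left hNb hRnn]
  have hb : b < x₀ * m := by
    refine lt_of_mul_lt_mul_right (a := (N : ℝ)) ?_ hN.le
    nlinarith [mul_le_mul_of_nonneg_left hNa hCnn]
  have hT := sum_entropy_le_of_tendsto (h := fun i j => H (R i * C j / N)) hNpos hR hC
    (fun i j => hmax _ ⟨by positivity, by
      rw [div_lt_iff₀ hN]
      exact (mul_le_mul (hRle i) (hCle j) (Nat.cast_nonneg _) hRnn).trans_lt hab⟩) hLT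
  have hI := le_sum_entropy_of_tendsto (hr := fun i => H (R i / n)) (hc := fun j => H (C j / m))
    (h := H (N / (m * n))) hm hn hR
    (fun i => hmax _ ⟨by positivity, by
      rw [div_lt_iff₀ hn']; exact (hRle i).trans_lt ha⟩)
    (fun j => hmax _ ⟨by positivity, by
      rw [div_lt_iff₀ hm']; exact (hCle j).trans_lt hb⟩)
    (hmax _ ⟨by positivity, by
      rw [div_lt_iff₀ (by positivity)]; nlinarith⟩) hLI
  obtain ⟨hle, hlt⟩ := sum_sum_comp_ge (r := fun i => (R i : ℝ)) (c := fun j => (C j : ℝ)) (ρ := a)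
    hcont hW0 hH hH₁ hW hN (fun i => Nat.cast_nonneg _) (fun j => Nat.cast_nonneg _) hRN hCN hRle
    fun j => by
      rw [div_lt_iff₀ hN]; exact (mul_le_mul_of_nonneg_left (hCle j) hRnn).trans_lt hab
  simp only [Fintype.card_fin] at hle hlt
  refine ⟨hI.trans (hle.trans hT), fun hr hc => hI.trans_lt ((hlt ?_ ?_).trans_le hT)⟩
  · push Not at hr
    exact_mod_cast hr
  · push Not at hc
    exact_mod_cast hc
end

section
/- Suppose R ∈ ℤ_{>0}^m, C ∈ ℤ_{≥0}^n, and K ∈ ℤ_{>0}^{m×n}. Define C̃ = (c̃_1,…,c̃_n) by c̃_j := (Σ_{i=1}^m k_{ij}) − c_j, and suppose C̃ ∈ ℤ_{>0}^n. Then f_K(R,C) − ln T_K(R,C) ≤ −ln√(2π|K|) + Σ_{i=1}^m ln√(2π r_i) + Σ_{j=1}^n ln√(2π c̃_j) + (m+n)·ln(e/√(2π)). -/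
open Real Filter Finset

lemma pow_le_pow_self_mul_exp (a : ℕ) {y : ℝ} (hy : 0 ≤ y) :
    y ^ a ≤ (a : ℝ) ^ a * Real.exp (y - a) := by
  rcases Nat.eq_zero_or_pos a with rfl | ha
  · simpa using hy
  have ha' : (0 : ℝ) < a := by exact_mod_cast ha
  have h : y ≤ a * Real.exp (y / a - 1) := by
    have := Real.add_one_le_exp (y / a - 1)
    calc y = a * (y / a - 1 + 1) := by field_simp; ring
      _ ≤ _ := by gcongr
  calc y ^ a ≤ (a * Real.exp (y / a - 1)) ^ a := by gcongr
    _ = _ := by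
      rw [mul_pow, ← Real.exp_nat_mul]
      congr 2
      field_simp

lemma pow_mul_pow_le_of_sum_eq (a b : ℕ) {y z : ℝ} (hy : 0 ≤ y) (hz : 0 ≤ z)
    (h : y + z = a + b) : y ^ a * z ^ b ≤ (a : ℝ) ^ a * (b : ℝ) ^ b := by
  calc y ^ a * z ^ b ≤ ((a : ℝ) ^ a * Real.exp (y - a)) * ((b : ℝ) ^ b * Real.exp (z - b)) := by
        gcongr
        · exact pow_le_pow_self_mul_exp a hy
        · exact pow_le_pow_self_mul_exp b hz
    _ = (a : ℝ) ^ a * (b : ℝ) ^ b * (Real.exp (y - a) * Real.exp (z - b)) := by ring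
    _ = _ := by
      rw [← Real.exp_add, show y - a + (z - b) = 0 by linarith]
      simp

lemma multiset_prod_le_pow_card (s : Multiset ℝ) {v : ℝ} (hv : 0 < v) (hs : ∀ b ∈ s, 0 ≤ b)
    (hsum : s.sum = Multiset.card s * v) : s.prod ≤ v ^ Multiset.card s := by
  have key : ∀ t : Multiset ℝ, (∀ b ∈ t, 0 ≤ b) →
      t.prod ≤ v ^ Multiset.card t * Real.exp (t.sum / v - Multiset.card t) := by
    intro t
    induction t using Multiset.induction_on with
    | empty => simp
    | cons b t ih =>
      intro ht
      have hb : b ≤ v * Real.exp (b / v - 1) := by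
        have := Real.add_one_le_exp (b / v - 1)
        calc b = v * (b / v - 1 + 1) := by field_simp; ring
          _ ≤ _ := by gcongr
      have ih' := ih fun c hc => ht c (Multiset.mem_cons_of_mem hc)
      rw [Multiset.prod_cons, Multiset.card_cons, Multiset.sum_cons]
      calc b * t.prod ≤ (v * Real.exp (b / v - 1)) *
            (v ^ Multiset.card t * Real.exp (t.sum / v - Multiset.card t)) := by
            have : 0 ≤ t.prod := Multiset.prod_nonneg fun c hc => ht c (Multiset.mem_cons_of_mem hc)
            gcongr
        _ = v ^ (Multiset.card t + 1) *
            (Real.exp (b / v - 1) * Real.exp (t.sum / v - Multiset.card t)) := by ring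
        _ = _ := by
          rw [← Real.exp_add]
          congr 2
          push_cast
          ring
  have := key s hs
  rw [hsum] at this
  simpa [hv.ne'] using this

open Polynomial in
/-- A real-rooted polynomial with nonpositive roots lies below its tangent `d`-th power. -/
lemma eval_le_eval_mul_pow {f : ℝ[X]} {d : ℕ} (hd : f.natDegree = d + 1)
    (hlead : 0 < f.leadingCoeff) (hsp : f.Splits) (hroots : ∀ ρ ∈ f.roots, ρ ≤ 0)
    {y τ : ℝ} (hy : 0 < y) (hτ : 0 < τ) :
    0 < f.eval y ∧ 0 < f.derivative.eval y ∧
    0 < 1 + (τ - y) * (f.derivative.eval y / f.eval y) / (d + 1) ∧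
    f.eval τ ≤ f.eval y * (1 + (τ - y) * (f.derivative.eval y / f.eval y) / (d + 1)) ^ (d + 1) := by
  have hcard : Multiset.card f.roots = d + 1 := by
    rw [← hd]; exact (Polynomial.splits_iff_card_roots.1 hsp)
  have hev : ∀ x, f.eval x = f.leadingCoeff * (f.roots.map fun ρ => x - ρ).prod := by
    intro x
    conv_lhs => rw [hsp.eq_prod_roots]
    rw [eval_mul, eval_C, eval_multiset_prod, Multiset.map_map]
    simp
  have hpos : ∀ x, 0 < x → 0 < f.eval x := by
    intro x hx
    rw [hev]
    refine mul_pos hlead (Multiset.prod_pos ?_)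
    intro b hb
    obtain ⟨ρ, hρ, rfl⟩ := Multiset.mem_map.1 hb
    linarith [hroots ρ hρ]
  have hs : f.derivative.eval y / f.eval y = (f.roots.map fun ρ => 1 / (y - ρ)).sum :=
    hsp.eval_derivative_div_eval_of_ne_zero (hpos y hy).ne'
  set s := f.derivative.eval y / f.eval y with hsdef
  have hsumpos : 0 < s := by
    rw [hs]
    obtain ⟨ρ, hρ⟩ := Multiset.card_pos_iff_exists_mem.1 (by rw [hcard]; omega)
    have h1 : 1 / (y - ρ) ≤ (f.roots.map fun ρ => 1 / (y - ρ)).sum := by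
      refine Multiset.single_le_sum ?_ _ (Multiset.mem_map_of_mem _ hρ)
      intro b hb
      obtain ⟨ρ, hρ, rfl⟩ := Multiset.mem_map.1 hb
      have := hroots ρ hρ
      have : 0 < y - ρ := by linarith
      positivity
    have : 0 < y - ρ := by linarith [hroots ρ hρ]
    have : 0 < 1 / (y - ρ) := by positivity
    linarith
  have hder : 0 < f.derivative.eval y := by
    have := mul_pos hsumpos (hpos y hy)
    rwa [hsdef, div_mul_cancel₀ _ (hpos y hy).ne'] at this
  have hb : ∀ ρ ∈ f.roots, (τ - ρ) / (y - ρ) = 1 + (τ - y) * (1 / (y - ρ)) := by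
    intro ρ hρ
    have : y - ρ ≠ 0 := by linarith [hroots ρ hρ]
    field_simp
    ring
  set T := f.roots.map fun ρ => (τ - ρ) / (y - ρ) with hT
  have hTcard : Multiset.card T = d + 1 := by rw [hT, Multiset.card_map, hcard]
  have hTpos : ∀ b ∈ T, 0 < b := by
    intro b hb
    obtain ⟨ρ, hρ, rfl⟩ := Multiset.mem_map.1 hb
    have := hroots ρ hρ
    exact div_pos (by linarith) (by linarith)
  have hTsum : T.sum = (d + 1) * (1 + (τ - y) * s / (d + 1)) := by
    rw [hT, Multiset.map_congr rfl hb, Multiset.sum_map_add, Multiset.sum_map_mul_left, ← hs]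
    simp only [Multiset.map_const', Multiset.sum_replicate, hcard]
    field_simp
    simp
  have hTsumpos : 0 < T.sum := by
    obtain ⟨b, hb⟩ := Multiset.card_pos_iff_exists_mem.1 (by rw [hTcard]; omega)
    exact (hTpos b hb).trans_le (Multiset.single_le_sum (fun c hc => (hTpos c hc).le) _ hb)
  have hv : 0 < 1 + (τ - y) * s / (d + 1) := by
    rw [hTsum] at hTsumpos
    exact pos_of_mul_pos_right hTsumpos (by positivity)
  refine ⟨hpos y hy, hder, hv, ?_⟩
  have hprod : f.eval τ = f.eval y * T.prod := by
    rw [hev τ, hev y, mul_assoc, hT, ← Multiset.prod_map_mul]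
    congr 2
    refine Multiset.map_congr rfl fun ρ hρ => ?_
    have : y - ρ ≠ 0 := by linarith [hroots ρ hρ]
    field_simp
  rw [hprod]
  refine mul_le_mul_of_nonneg_left ?_ (hpos y hy).le
  have := multiset_prod_le_pow_card T hv (fun b hb => (hTpos b hb).le) (by
    rw [hTsum, hTcard]; push_cast; ring)
  rwa [hTcard] at this

open Polynomial in
/-- Capacity bound for the derivative of a real-rooted polynomial of degree `e + 1`. -/
lemma capacity_derivative {f : ℝ[X]} {e q : ℕ} (hd : f.natDegree = e + 1)
    (hlead : 0 < f.leadingCoeff) (hsp : f.Splits) (hroots : ∀ ρ ∈ f.roots, ρ ≤ 0) (hq : q ≤ e)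
    {B : ℝ} (hcap : ∀ τ, 0 < τ → B * τ ^ (q + 1) ≤ f.eval τ) {y : ℝ} (hy : 0 < y) :
    B * (e : ℝ) ^ e * ((q : ℝ) + 1) ^ (q + 1) * y ^ q ≤
      f.derivative.eval y * ((e : ℝ) + 1) ^ e * (q : ℝ) ^ q := by
  rcases Nat.eq_zero_or_pos e with rfl | he
  · obtain rfl : q = 0 := by omega
    simp only [zero_add] at hcap
    simp only [Nat.cast_zero, pow_zero, zero_add, one_pow, mul_one]
    obtain ⟨a, -, b, rfl⟩ := Polynomial.natDegree_eq_one.1 hd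
    simp only [pow_one, eval_add, eval_mul, eval_C, eval_X] at hcap
    simp only [derivative_add, derivative_mul, derivative_C, derivative_X, zero_mul, mul_one,
      zero_add, add_zero, eval_C]
    by_contra! hlt
    have h1 := hcap (|b| / (B - a) + 1) (by have : 0 < B - a := by linarith
                                            positivity)
    have h2 : (B - a) * (|b| / (B - a)) = |b| := by
      have : B - a ≠ 0 := by linarith
      field_simp
    have h3 := le_abs_self b
    nlinarith
  have he' : (0 : ℝ) < e := by exact_mod_cast he
  obtain ⟨hF, hf', -, -⟩ := eval_le_eval_mul_pow hd hlead hsp hroots hy hy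
  set F := f.eval y
  set D := f.derivative.eval y
  have hw : ∃ w, w = (e + 1) * F / D := ⟨_, rfl⟩
  obtain ⟨w, hw⟩ := hw
  have hwpos : 0 < w := by rw [hw]; positivity
  have hD : D = (e + 1) * F / w := by rw [hw]; field_simp
  have hτ : 0 < w * (q + 1) / e := by positivity
  obtain ⟨-, -, hv, hle⟩ := eval_le_eval_mul_pow hd hlead hsp hroots hy hτ
  have hη : ∃ η, η = e * y / w := ⟨_, rfl⟩
  obtain ⟨η, hη⟩ := hη
  have hηpos : 0 < η := by rw [hη]; positivity
  have hyη : y = η * w / e := by rw [hη]; field_simp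
  have hveq : 1 + (w * (q + 1) / e - y) * (D / F) / (e + 1) = (e + q + 1 - η) / e := by
    rw [hD, hyη]
    field_simp
    ring
  change 0 < 1 + (w * (q + 1) / e - y) * (D / F) / (e + 1) at hv
  change _ ≤ F * (1 + (w * (q + 1) / e - y) * (D / F) / (e + 1)) ^ (e + 1) at hle
  rw [hveq] at hv hle
  have hz : 0 < e + q + 1 - η := by
    have := mul_pos hv he'
    rwa [div_mul_cancel₀ _ he'.ne'] at this
  have h1 := (hcap _ hτ).trans hle
  have h2 := pow_mul_pow_le_of_sum_eq q (e + 1) hηpos.le hz.le (by push_cast; ring)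
  have h3 : B * (w * (q + 1) / e) ^ (q + 1) * η ^ q * e ^ (e + 1) ≤
      F * (q ^ q * ((e + 1 : ℕ) : ℝ) ^ (e + 1)) := by
    calc B * (w * (q + 1) / e) ^ (q + 1) * η ^ q * e ^ (e + 1)
        ≤ F * ((e + q + 1 - η) / e) ^ (e + 1) * η ^ q * e ^ (e + 1) := by gcongr
      _ = F * (η ^ q * (e + q + 1 - η) ^ (e + 1)) := by
        rw [div_pow]; field_simp
      _ ≤ _ := by gcongr
  push_cast at h3
  rw [hD, hyη]
  have h4 : B * (e : ℝ) ^ e * ((q : ℝ) + 1) ^ (q + 1) * (η * w / e) ^ q * w =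
      B * (w * (q + 1) / e) ^ (q + 1) * η ^ q * e ^ (e + 1) := by
    rw [div_pow, div_pow, mul_pow, mul_pow]
    field_simp
    ring
  have h5 : (e + 1) * F / w * ((e : ℝ) + 1) ^ e * (q : ℝ) ^ q * w =
      F * (q ^ q * ((e : ℝ) + 1) ^ (e + 1)) := by
    field_simp
    ring
  refine le_of_mul_le_mul_right ?_ hwpos
  rw [h4, h5]
  exact h3

/-- The univariate polynomial obtained from `p` by freezing all variables but the `i`-th. -/
noncomputable def varSlice {σ 𝕜 : Type*} [DecidableEq σ] [Field 𝕜] [Algebra ℝ 𝕜]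
    (p : MvPolynomial σ ℝ) (i : σ) (z : σ → 𝕜) : Polynomial 𝕜 :=
  MvPolynomial.aeval (fun j => if j = i then Polynomial.X else Polynomial.C (z j)) p

lemma eval_varSlice {σ 𝕜 : Type*} [DecidableEq σ] [Field 𝕜] [Algebra ℝ 𝕜]
    (p : MvPolynomial σ ℝ) (i : σ) (z : σ → 𝕜) (w : 𝕜) :
    (varSlice p i z).eval w = MvPolynomial.aeval (Function.update z i w) p := by
  have h := MvPolynomial.comp_aeval_apply
    (fun j => if j = i then (Polynomial.X : Polynomial 𝕜) else Polynomial.C (z j))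
    ((Polynomial.aeval w : Polynomial 𝕜 →ₐ[𝕜] 𝕜).restrictScalars ℝ) p
  have h' : (fun j => ((Polynomial.aeval w : Polynomial 𝕜 →ₐ[𝕜] 𝕜).restrictScalars ℝ)
      (if j = i then (Polynomial.X : Polynomial 𝕜) else Polynomial.C (z j))) =
      Function.update z i w := by
    funext j
    by_cases hj : j = i
    · subst hj; simp
    · simp [hj]
  rw [h'] at h
  rw [← h, varSlice, AlgHom.restrictScalars_apply, Polynomial.coe_aeval_eq_eval]

lemma derivative_varSlice {σ 𝕜 : Type*} [DecidableEq σ] [Field 𝕜] [Algebra ℝ 𝕜]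
    (p : MvPolynomial σ ℝ) (i : σ) (z : σ → 𝕜) :
    Polynomial.derivative (varSlice p i z) = varSlice (MvPolynomial.pderiv i p) i z := by
  unfold varSlice
  induction p using MvPolynomial.induction_on with
  | C a => simp [Polynomial.algebraMap_apply]
  | add p q hp hq => simp [hp, hq]
  | mul_X p j hp =>
    rw [map_mul, Polynomial.derivative_mul, hp, MvPolynomial.pderiv_mul, map_add, map_mul, map_mul,
      MvPolynomial.aeval_X, MvPolynomial.pderiv_X]
    by_cases hj : j = i
    · subst hj; simp
    · simp [hj]

lemma map_varSlice {σ : Type*} [DecidableEq σ] (p : MvPolynomial σ ℝ) (i : σ) (x : σ → ℝ) :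
    (varSlice p i x).map (algebraMap ℝ ℂ) = varSlice p i (fun j => (x j : ℂ)) := by
  unfold varSlice
  have h := MvPolynomial.comp_aeval_apply
    (fun j => if j = i then (Polynomial.X : Polynomial ℝ) else Polynomial.C (x j))
    (Polynomial.mapAlgHom (Algebra.ofId ℝ ℂ)) p
  rw [Polynomial.coe_mapAlgHom] at h
  refine h.trans ?_
  congr 2
  funext j
  split_ifs <;> simp

lemma varSlice_eq_sum {σ 𝕜 : Type*} [Fintype σ] [DecidableEq σ] [Field 𝕜] [Algebra ℝ 𝕜]
    (p : MvPolynomial σ ℝ) (i : σ) (z : σ → 𝕜) :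
    varSlice p i z = ∑ m ∈ p.support, Polynomial.C (algebraMap ℝ 𝕜 (p.coeff m) *
      ∏ j ∈ Finset.univ.erase i, z j ^ m j) * Polynomial.X ^ m i := by
  rw [varSlice, MvPolynomial.aeval_def, MvPolynomial.eval₂_eq']
  refine Finset.sum_congr rfl fun m _ => ?_
  rw [← Finset.mul_prod_erase _ _ (Finset.mem_univ i), if_pos rfl, map_mul, map_prod,
    Polynomial.algebraMap_apply]
  rw [Finset.prod_congr rfl (g := fun j => Polynomial.C (z j ^ m j))]
  · ring
  · intro j hj
    rw [if_neg (Finset.ne_of_mem_erase hj), map_pow]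

lemma le_degree_apply {σ : Type*} (m : σ →₀ ℕ) (i : σ) : m i ≤ m.degree := by
  classical
  by_cases hi : i ∈ m.support
  · rw [Finsupp.degree_apply]
    exact Finset.single_le_sum (f := fun j => m j) (fun _ _ => Nat.zero_le _) hi
  · simp [Finsupp.notMem_support_iff.1 hi]

lemma eq_single_of_apply_eq_degree {σ : Type*} {m : σ →₀ ℕ} {i : σ} (h : m i = m.degree) :
    m = Finsupp.single i m.degree := by
  classical
  have h1 : m = Finsupp.single i (m i) + m.erase i := (Finsupp.single_add_erase i m).symm
  have h2 : (m.erase i).degree = 0 := by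
    have := congrArg Finsupp.degree h1
    rw [map_add, Finsupp.degree_single] at this
    omega
  rw [Finsupp.degree_eq_zero_iff] at h2
  rw [h2, add_zero, h] at h1
  exact h1

lemma natDegree_varSlice {σ 𝕜 : Type*} [Fintype σ] [DecidableEq σ] [Field 𝕜] [Algebra ℝ 𝕜]
    {p : MvPolynomial σ ℝ} {d : ℕ} (hp : p.IsHomogeneous d) (i : σ) (z : σ → 𝕜)
    (hc : p.coeff (Finsupp.single i d) ≠ 0) :
    (varSlice p i z).natDegree = d ∧
      (varSlice p i z).leadingCoeff = algebraMap ℝ 𝕜 (p.coeff (Finsupp.single i d)) := by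
  have hdeg : ∀ m ∈ p.support, m.degree = d := fun m hm => by
    by_contra h
    exact (MvPolynomial.mem_support_iff.1 hm) (hp.coeff_eq_zero h)
  have hle : (varSlice p i z).natDegree ≤ d := by
    rw [varSlice_eq_sum]
    refine Polynomial.natDegree_sum_le_of_forall_le _ _ fun m hm => ?_
    refine (Polynomial.natDegree_C_mul_X_pow_le _ _).trans ?_
    rw [← hdeg m hm]
    exact le_degree_apply m i
  have hco : (varSlice p i z).coeff d = algebraMap ℝ 𝕜 (p.coeff (Finsupp.single i d)) := by
    rw [varSlice_eq_sum, Polynomial.finsetSum_coeff,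
      Finset.sum_eq_single_of_mem (Finsupp.single i d) (MvPolynomial.mem_support_iff.2 hc)]
    · rw [Polynomial.coeff_C_mul_X_pow, Finsupp.single_eq_same, if_pos rfl, Finset.prod_eq_one,
        mul_one]
      intro j hj
      rw [Finsupp.single_eq_of_ne (Finset.ne_of_mem_erase hj), pow_zero]
    · intro m hm hne
      rw [Polynomial.coeff_C_mul_X_pow, if_neg]
      intro h
      apply hne
      have := eq_single_of_apply_eq_degree (h.symm.trans (hdeg m hm).symm)
      rwa [hdeg m hm] at this
  have hnat := Polynomial.natDegree_eq_of_le_of_coeff_ne_zero hle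
    (by rw [hco]; simpa using hc)
  exact ⟨hnat, by rw [Polynomial.leadingCoeff, hnat, hco]⟩

/-- Homogeneous polynomials of degree `d`, all of whose degree-`d` coefficients are positive, which
do not vanish when all variables lie in the open right half-plane. -/
structure IsHalfPlaneStable {σ : Type*} (p : MvPolynomial σ ℝ) (d : ℕ) : Prop where
  homogeneous : p.IsHomogeneous d
  coeff_pos : ∀ m : σ →₀ ℕ, m.degree = d → 0 < p.coeff m
  aeval_ne_zero : ∀ z : σ → ℂ, (∀ i, 0 < (z i).re) → MvPolynomial.aeval z p ≠ 0

lemma IsHalfPlaneStable.pderiv {σ : Type*} [Fintype σ] [DecidableEq σ]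
    {p : MvPolynomial σ ℝ} {d : ℕ} (hp : IsHalfPlaneStable p (d + 1)) (i : σ) :
    IsHalfPlaneStable (MvPolynomial.pderiv i p) d where
  homogeneous := hp.homogeneous.pderiv
  coeff_pos m hm := by
    rw [MvPolynomial.coeff_pderiv]
    exact mul_pos (hp.coeff_pos _ (by rw [map_add, hm, Finsupp.degree_single])) (by positivity)
  aeval_ne_zero z hz h0 := by
    have hc : 0 < p.coeff (Finsupp.single i (d + 1)) :=
      hp.coeff_pos _ (Finsupp.degree_single _ _)
    obtain ⟨hdeg, -⟩ := natDegree_varSlice hp.homogeneous i z hc.ne'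
    have hpos : 0 < (varSlice p i z).degree := by
      rw [← Polynomial.natDegree_pos_iff_degree_pos, hdeg]; omega
    have hroot : z i ∈ (Polynomial.derivative (varSlice p i z)).rootSet ℂ := by
      rw [Polynomial.mem_rootSet]
      refine ⟨fun h => ?_, ?_⟩
      · have := Polynomial.derivative_eq_zero.1 h
        omega
      · rw [Polynomial.coe_aeval_eq_eval, derivative_varSlice, eval_varSlice,
          Function.update_eq_self, h0]
    have hsub := Polynomial.rootSet_derivative_subset_convexHull_rootSet hpos hroot
    have hhalf : (varSlice p i z).rootSet ℂ ⊆ {w : ℂ | w.re ≤ 0} := by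
      intro w hw
      by_contra hre
      have hre : 0 < w.re := not_le.1 hre
      rw [Polynomial.mem_rootSet, Polynomial.coe_aeval_eq_eval, eval_varSlice] at hw
      refine hp.aeval_ne_zero _ (fun j => ?_) hw.2
      by_cases hj : j = i
      · subst hj; simpa using hre
      · simpa [hj] using hz j
    have := convexHull_min hhalf (convex_halfSpace_re_le 0) hsub
    exact absurd (hz i) (not_lt.2 this)

lemma aeval_smul_of_isHomogeneous {σ : Type*} [Fintype σ] {p : MvPolynomial σ ℝ} {d : ℕ}
    (hp : p.IsHomogeneous d) (ζ : ℂ) (z : σ → ℂ) :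
    MvPolynomial.aeval (fun j => ζ * z j) p = ζ ^ d * MvPolynomial.aeval z p := by
  rw [MvPolynomial.aeval_def, MvPolynomial.aeval_def, MvPolynomial.eval₂_eq',
    MvPolynomial.eval₂_eq', Finset.mul_sum]
  refine Finset.sum_congr rfl fun m hm => ?_
  have hd : ∑ j, m j = d := by
    rw [← Finsupp.degree_eq_sum]
    by_contra h
    exact (MvPolynomial.mem_support_iff.1 hm) (hp.coeff_eq_zero h)
  simp_rw [mul_pow]
  rw [Finset.prod_mul_distrib, Finset.prod_pow_eq_pow_sum, hd]
  ring

lemma IsHalfPlaneStable.root_mem {σ : Type*} [Fintype σ] [DecidableEq σ]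
    {p : MvPolynomial σ ℝ} {d : ℕ} (hp : IsHalfPlaneStable p d) (i : σ) {x : σ → ℝ}
    (hx : ∀ j, 0 < x j) {ρ : ℂ} (hρ : (varSlice p i fun j => (x j : ℂ)).eval ρ = 0) :
    ∃ t : ℝ, t ≤ 0 ∧ (t : ℂ) = ρ := by
  by_contra! hcon
  have hlt : 0 < ‖ρ‖ + ρ.re := by
    have h1 := (abs_le.1 (Complex.abs_re_le_norm ρ)).1
    rcases h1.lt_or_eq with h | h
    · linarith
    · exfalso
      have h2 : |ρ.re| = ‖ρ‖ := by
        rw [← h, abs_neg, abs_norm]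
      have h3 := Complex.abs_re_eq_norm.1 h2
      exact hcon ρ.re (by rw [← h]; simp) (Complex.ext (by simp) (by simp [h3]))
  have hn : 0 < ‖ρ‖ := by
    rw [norm_pos_iff]
    rintro rfl
    simp at hlt
  rw [eval_varSlice] at hρ
  have h := aeval_smul_of_isHomogeneous hp.homogeneous ((starRingEnd ℂ) ρ + ‖ρ‖)
    (Function.update (fun j => (x j : ℂ)) i ρ)
  rw [hρ, mul_zero] at h
  refine hp.aeval_ne_zero _ (fun j => ?_) h
  by_cases hj : j = i
  · subst hj
    rw [Function.update_self, add_mul, mul_comm, Complex.mul_conj, Complex.add_re,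
      Complex.re_ofReal_mul, Complex.ofReal_re, Complex.normSq_eq_norm_sq]
    nlinarith
  · rw [Function.update_of_ne hj, Complex.re_mul_ofReal, Complex.add_re, Complex.conj_re,
      Complex.ofReal_re]
    exact mul_pos (by linarith) (hx j)

lemma IsHalfPlaneStable.capacity_pderiv {σ : Type*} [Fintype σ] [DecidableEq σ]
    {p : MvPolynomial σ ℝ} {e : ℕ} (hp : IsHalfPlaneStable p (e + 1)) (i : σ) {m : σ →₀ ℕ}
    (hm : m.degree = e) {B : ℝ}
    (hcap : ∀ x : σ → ℝ, (∀ j, 0 < x j) →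
      B * ∏ j, x j ^ (m + Finsupp.single i 1 : σ →₀ ℕ) j ≤ MvPolynomial.eval x p)
    {x : σ → ℝ} (hx : ∀ j, 0 < x j) :
    B * (e : ℝ) ^ e * ((m i : ℝ) + 1) ^ (m i + 1) * ∏ j, x j ^ m j ≤
      MvPolynomial.eval x (MvPolynomial.pderiv i p) * ((e : ℝ) + 1) ^ e * (m i : ℝ) ^ m i := by
  have hc : 0 < p.coeff (Finsupp.single i (e + 1)) :=
    hp.coeff_pos _ (Finsupp.degree_single _ _)
  obtain ⟨hdeg, hlead⟩ := natDegree_varSlice hp.homogeneous i x hc.ne'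
  have hrange : ∀ a ∈ ((varSlice p i x).map (algebraMap ℝ ℂ)).roots,
      ∃ t : ℝ, t ≤ 0 ∧ (t : ℂ) = a := by
    intro a ha
    rw [map_varSlice] at ha
    exact hp.root_mem i hx (Polynomial.isRoot_of_mem_roots ha)
  have hsp : (varSlice p i x).Splits := by
    refine Polynomial.Splits.of_splits_map (algebraMap ℝ ℂ) (IsAlgClosed.splits _) fun a ha => ?_
    obtain ⟨t, -, rfl⟩ := hrange a ha
    exact ⟨t, rfl⟩
  have hroots : ∀ ρ ∈ (varSlice p i x).roots, ρ ≤ 0 := by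
    intro ρ hρ
    obtain ⟨t, ht, hta⟩ := hrange (ρ : ℂ) (by
      rw [hsp.roots_map]
      exact Multiset.mem_map_of_mem _ hρ)
    have : t = ρ := by exact_mod_cast hta
    exact this ▸ ht
  have key := capacity_derivative (B := B * ∏ j ∈ Finset.univ.erase i, x j ^ m j) hdeg
    (by rw [hlead]; exact hc) hsp hroots (hm ▸ le_degree_apply m i) (fun τ hτ => by
      have h := hcap (Function.update x i τ) (fun j => by
        by_cases hj : j = i
        · subst hj; simpa using hτ
        · simpa [hj] using hx j)
      rw [eval_varSlice, MvPolynomial.aeval_eq_eval]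
      refine le_trans (le_of_eq ?_) h
      rw [← Finset.mul_prod_erase _ _ (Finset.mem_univ i), Function.update_self,
        Finset.prod_congr (s₁ := Finset.univ.erase i) rfl
          (f := fun j => Function.update x i τ j ^ (m + Finsupp.single i 1 : σ →₀ ℕ) j)
          (g := fun j => x j ^ m j)]
      · simp
        ring
      · intro j hj
        have hj := Finset.ne_of_mem_erase hj
        simp [hj]) (hx i)
  rw [derivative_varSlice, eval_varSlice, Function.update_eq_self,
    MvPolynomial.aeval_eq_eval] at key
  refine le_trans (le_of_eq ?_) key
  rw [← Finset.mul_prod_erase _ _ (Finset.mem_univ i)]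
  ring

/-- A van der Waerden type inequality: a coefficient of a stable polynomial is bounded below by
its capacity. -/
theorem IsHalfPlaneStable.capacity_le_coeff {σ : Type*} [Fintype σ] [DecidableEq σ] (d : ℕ) :
    ∀ {p : MvPolynomial σ ℝ} (_ : IsHalfPlaneStable p d) {m : σ →₀ ℕ} (_ : m.degree = d)
      {B : ℝ} (_ : ∀ x : σ → ℝ, (∀ j, 0 < x j) → B * ∏ j, x j ^ m j ≤ MvPolynomial.eval x p),
      B * d.factorial * ∏ j, (m j : ℝ) ^ m j ≤
        p.coeff m * (d : ℝ) ^ d * ∏ j, ((m j).factorial : ℝ) := by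
  induction d with
  | zero =>
    intro p hp m hm B hcap
    have hm0 : m = 0 := (Finsupp.degree_eq_zero_iff m).1 hm
    subst hm0
    obtain ⟨c, rfl⟩ : ∃ c, p = MvPolynomial.C c :=
      ⟨_, MvPolynomial.totalDegree_eq_zero_iff_eq_C.1
        (Nat.le_zero.1 hp.homogeneous.totalDegree_le)⟩
    simpa using hcap 1 (by simp)
  | succ e ih =>
    intro p hp m hm B hcap
    obtain ⟨i, hi⟩ : ∃ i, m i ≠ 0 := by
      by_contra! h
      have : m = 0 := Finsupp.ext h
      simp [this] at hm
    obtain ⟨m', rfl⟩ : ∃ m', m = m' + Finsupp.single i 1 :=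
      ⟨m - Finsupp.single i 1, (tsub_add_cancel_of_le (by
        rw [Finsupp.single_le_iff]; omega)).symm⟩
    have hm' : m'.degree = e := by
      rw [map_add, Finsupp.degree_single] at hm
      omega
    have hee : (0 : ℝ) < ((e : ℝ) + 1) ^ e := by positivity
    have hself : ∀ k : ℕ, (0 : ℝ) < (k : ℝ) ^ k := fun k => by
      rcases Nat.eq_zero_or_pos k with rfl | hk
      · simp
      · positivity
    have hqq := hself (m' i)
    have h := ih (hp.pderiv i) hm'
      (B := B * (e : ℝ) ^ e * ((m' i : ℝ) + 1) ^ (m' i + 1) /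
        (((e : ℝ) + 1) ^ e * (m' i : ℝ) ^ m' i)) (fun x hx => by
      have := hp.capacity_pderiv i hm' hcap hx
      rw [div_mul_eq_mul_div, div_le_iff₀ (by positivity)]
      linarith)
    rw [MvPolynomial.coeff_pderiv] at h
    have hP : (∏ j, (((m' + Finsupp.single i 1 : σ →₀ ℕ) j : ℕ) : ℝ) ^
        (m' + Finsupp.single i 1 : σ →₀ ℕ) j) * (m' i : ℝ) ^ m' i =
        (∏ j, (m' j : ℝ) ^ m' j) * ((m' i : ℝ) + 1) ^ (m' i + 1) := by
      rw [← Finset.mul_prod_erase _ _ (Finset.mem_univ i),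
        ← Finset.mul_prod_erase Finset.univ (fun j => (m' j : ℝ) ^ m' j) (Finset.mem_univ i),
        Finset.prod_congr (s₁ := Finset.univ.erase i) rfl
          (f := fun j => (((m' + Finsupp.single i 1 : σ →₀ ℕ) j : ℕ) : ℝ) ^
            (m' + Finsupp.single i 1 : σ →₀ ℕ) j) (g := fun j => (m' j : ℝ) ^ m' j)]
      · simp
        ring
      · intro j hj
        have hj := Finset.ne_of_mem_erase hj
        simp [hj]
    have hQ : ∏ j, (((m' + Finsupp.single i 1 : σ →₀ ℕ) j).factorial : ℝ) =
        (∏ j, ((m' j).factorial : ℝ)) * ((m' i : ℝ) + 1) := by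
      rw [← Finset.mul_prod_erase _ _ (Finset.mem_univ i),
        ← Finset.mul_prod_erase Finset.univ (fun j => ((m' j).factorial : ℝ)) (Finset.mem_univ i),
        Finset.prod_congr (s₁ := Finset.univ.erase i) rfl
          (f := fun j => (((m' + Finsupp.single i 1 : σ →₀ ℕ) j).factorial : ℝ))
          (g := fun j => ((m' j).factorial : ℝ))]
      · simp [Nat.factorial_succ]
        ring
      · intro j hj
        have hj := Finset.ne_of_mem_erase hj
        simp [hj]
    rw [div_mul_eq_mul_div, div_mul_eq_mul_div, div_le_iff₀ (by positivity)] at h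
    refine le_of_mul_le_mul_right ?_ (mul_pos hqq (hself e))
    rw [hQ, Nat.factorial_succ]
    simp only [Nat.cast_mul, Nat.cast_succ]
    calc B * (((e : ℝ) + 1) * e.factorial) * _ * ((m' i : ℝ) ^ m' i * (e : ℝ) ^ e)
        = B * (((e : ℝ) + 1) * e.factorial) *
            ((∏ j, (((m' + Finsupp.single i 1 : σ →₀ ℕ) j : ℕ) : ℝ) ^
            (m' + Finsupp.single i 1 : σ →₀ ℕ) j) * (m' i : ℝ) ^ m' i) * (e : ℝ) ^ e := by ring
      _ = (B * (e : ℝ) ^ e * ((m' i : ℝ) + 1) ^ (m' i + 1) * e.factorial *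
            ∏ j, (m' j : ℝ) ^ m' j) * ((e : ℝ) + 1) := by rw [hP]; ring
      _ ≤ _ := mul_le_mul_of_nonneg_right h (by positivity)
      _ = _ := by ring

lemma IsHalfPlaneStable.linear_mul {σ : Type*} [Fintype σ] [Nonempty σ]
    {p : MvPolynomial σ ℝ} {d : ℕ} (hp : IsHalfPlaneStable p d) {a : σ → ℝ} (ha : ∀ s, 0 < a s) :
    IsHalfPlaneStable ((∑ s, MvPolynomial.C (a s) * MvPolynomial.X s) * p) (d + 1) where
  homogeneous := by
    rw [add_comm]
    refine MvPolynomial.IsHomogeneous.mul (MvPolynomial.IsHomogeneous.sum _ _ _ fun s _ => ?_)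
      hp.homogeneous
    simpa using (MvPolynomial.isHomogeneous_C σ (a s)).mul (MvPolynomial.isHomogeneous_X ℝ s)
  coeff_pos m hm := by
    classical
    have hnn : ∀ m', 0 ≤ p.coeff m' := fun m' => by
      by_cases h : m'.degree = d
      · exact (hp.coeff_pos m' h).le
      · exact (hp.homogeneous.coeff_eq_zero h).ge
    have hco : MvPolynomial.coeff m ((∑ s, MvPolynomial.C (a s) * MvPolynomial.X s) * p) =
        ∑ s, a s * (if s ∈ m.support then p.coeff (m - Finsupp.single s 1) else 0) := by
      rw [Finset.sum_mul, MvPolynomial.coeff_sum]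
      refine Finset.sum_congr rfl fun s _ => ?_
      rw [mul_assoc, MvPolynomial.coeff_C_mul, MvPolynomial.coeff_X_mul']
    rw [hco]
    obtain ⟨s, hs⟩ : ∃ s, m s ≠ 0 := by
      by_contra! h
      have : m = 0 := Finsupp.ext h
      simp [this] at hm
    refine Finset.sum_pos' (fun s _ => mul_nonneg (ha s).le ?_) ⟨s, Finset.mem_univ s, ?_⟩
    · split_ifs
      exacts [hnn _, le_rfl]
    · rw [if_pos (Finsupp.mem_support_iff.2 hs)]
      refine mul_pos (ha s) (hp.coeff_pos _ ?_)
      have h1 : m - Finsupp.single s 1 + Finsupp.single s 1 = m := tsub_add_cancel_of_le (by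
        rw [Finsupp.single_le_iff]; omega)
      have h2 := congrArg Finsupp.degree h1
      rw [map_add, Finsupp.degree_single, hm] at h2
      omega
  aeval_ne_zero z hz := by
    rw [map_mul]
    refine mul_ne_zero (fun h => ?_) (hp.aeval_ne_zero z hz)
    have h1 := congrArg Complex.re h
    simp only [map_sum, map_mul, MvPolynomial.aeval_C, MvPolynomial.aeval_X, Complex.re_sum,
      Complex.coe_algebraMap, Complex.re_ofReal_mul, Complex.zero_re] at h1
    exact (Finset.sum_pos (fun s _ => mul_pos (ha s) (hz s)) Finset.univ_nonempty).ne' h1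

lemma isHalfPlaneStable_one {σ : Type*} : IsHalfPlaneStable (1 : MvPolynomial σ ℝ) 0 where
  homogeneous := MvPolynomial.isHomogeneous_one σ ℝ
  coeff_pos m hm := by
    rw [(Finsupp.degree_eq_zero_iff m).1 hm, MvPolynomial.coeff_zero_one]
    exact one_pos
  aeval_ne_zero z _ := by simp

lemma isHalfPlaneStable_prod_linear {ι σ : Type*} [Fintype σ] [Nonempty σ] (s : Finset ι)
    {a : ι → σ → ℝ} (ha : ∀ i t, 0 < a i t) (k : ι → ℕ) :
    IsHalfPlaneStable (∏ i ∈ s, (∑ t, MvPolynomial.C (a i t) * MvPolynomial.X t) ^ k i)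
      (∑ i ∈ s, k i) := by
  classical
  induction s using Finset.induction_on with
  | empty => simpa using isHalfPlaneStable_one
  | insert i s hi ih =>
    rw [Finset.prod_insert hi, Finset.sum_insert hi]
    induction k i with
    | zero => simpa using ih
    | succ q ihq =>
      rw [pow_succ', mul_assoc, add_right_comm]
      exact ihq.linear_mul (ha i)

/-- The capacity bound for the coefficients of a product of linear forms with nonnegative
coefficients. -/
theorem capacity_le_coeff_prod_linear {ι σ : Type*} [Fintype ι] [Fintype σ] [DecidableEq σ]
    {a : ι → σ → ℝ} (ha : ∀ i t, 0 ≤ a i t) (k : ι → ℕ) {m : σ →₀ ℕ} (hm : m.degree = ∑ i, k i)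
    {B : ℝ} (hcap : ∀ x : σ → ℝ, (∀ t, 0 < x t) →
      B * ∏ t, x t ^ m t ≤ ∏ i, (∑ t, a i t * x t) ^ k i) :
    B * (∑ i, k i).factorial * ∏ t, (m t : ℝ) ^ m t ≤
      (∏ i, (∑ t, MvPolynomial.C (a i t) * MvPolynomial.X t) ^ k i : MvPolynomial σ ℝ).coeff m *
        ((∑ i, k i : ℕ) : ℝ) ^ (∑ i, k i) * ∏ t, ((m t).factorial : ℝ) := by
  rcases isEmpty_or_nonempty σ with hσ | hσ
  · have hm0 : m = 0 := Subsingleton.elim _ _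
    have hk : ∀ i, k i = 0 := by
      rw [hm0, map_zero, eq_comm, Finset.sum_eq_zero_iff] at hm
      exact fun i => hm i (Finset.mem_univ i)
    have := hcap 1 (by simp)
    simpa [hk, hm0] using this
  let P : MvPolynomial σ (Polynomial ℝ) := ∏ i, (∑ t, MvPolynomial.C
    (Polynomial.C (a i t) + Polynomial.X) * MvPolynomial.X t) ^ k i
  have hP : ∀ ε : ℝ, (∏ i, (∑ t, MvPolynomial.C (a i t + ε) * MvPolynomial.X t) ^ k i :
      MvPolynomial σ ℝ).coeff m = (P.coeff m).eval ε := by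
    intro ε
    rw [← Polynomial.coe_evalRingHom, ← MvPolynomial.coeff_map]
    congr 1
    simp [P]
  have hlim : Tendsto (fun ε : ℝ => (P.coeff m).eval ε * ((∑ i, k i : ℕ) : ℝ) ^ (∑ i, k i) *
      ∏ t, ((m t).factorial : ℝ)) (nhdsWithin 0 (Set.Ioi 0))
      (nhds ((P.coeff m).eval 0 * ((∑ i, k i : ℕ) : ℝ) ^ (∑ i, k i) *
      ∏ t, ((m t).factorial : ℝ))) := by
    refine Tendsto.mono_left (Continuous.tendsto ?_ 0) nhdsWithin_le_nhds
    fun_prop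
  rw [← hP 0] at hlim
  simp only [add_zero] at hlim
  refine ge_of_tendsto hlim ?_
  filter_upwards [self_mem_nhdsWithin] with ε hε
  have hε : 0 < ε := hε
  rw [← hP]
  refine (isHalfPlaneStable_prod_linear Finset.univ
    (fun i t => add_pos_of_nonneg_of_pos (ha i t) hε) k).capacity_le_coeff _ hm fun x hx => ?_
  refine (hcap x hx).trans ?_
  rw [map_prod]
  refine Finset.prod_le_prod (fun i _ => pow_nonneg (Finset.sum_nonneg fun t _ =>
    mul_nonneg (ha i t) (hx t).le) _) fun i _ => ?_
  simp only [map_pow, map_sum, map_mul, MvPolynomial.eval_C, MvPolynomial.eval_X]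
  have : ∑ t, a i t * x t ≤ ∑ t, (a i t + ε) * x t :=
    Finset.sum_le_sum fun t _ => mul_le_mul_of_nonneg_right (by linarith) (hx t).le
  exact pow_le_pow_left₀ (Finset.sum_nonneg fun t _ => mul_nonneg (ha i t) (hx t).le) this _

/-- The tables with margins `R` and `C` and entries bounded by `K`, as a finite set. -/
def boundedTables {I J : Type*} [Fintype I] [Fintype J] [DecidableEq I] [DecidableEq J]
    (K : I × J → ℕ) (R : I → ℕ) (C : J → ℕ) : Finset (I × J → ℕ) :=
  (Fintype.piFinset fun e => Finset.range (K e + 1)).filter fun A =>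
    (∀ i, ∑ j, A (i, j) = R i) ∧ ∀ j, ∑ i, A (i, j) = C j

/-- The total weight of the tables with margins `R` and `C`, the entry in cell `e` being
weighted as a binomial variable with `K e` trials and success probability `u e`. -/
noncomputable def binomialWeight {I J : Type*} [Fintype I] [Fintype J] [DecidableEq I]
    [DecidableEq J] (K : I × J → ℕ) (R : I → ℕ) (C : J → ℕ) (u : I × J → ℝ) : ℝ :=
  ∑ A ∈ boundedTables K R C, ∏ e, ((K e).choose (A e) * u e ^ A e * (1 - u e) ^ (K e - A e))

lemma prod_linear_pow_eq_sum {I J S : Type*} [Fintype I] [Fintype J] [DecidableEq I]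
    [DecidableEq J] [CommSemiring S] (K : I × J → ℕ) (U V : I × J → S) (x : I → S) (y : J → S) :
    ∏ e : I × J, (U e * x e.1 + V e * y e.2) ^ K e =
      ∑ A ∈ Fintype.piFinset fun e => Finset.range (K e + 1),
        (∏ e, ((K e).choose (A e) * U e ^ A e * V e ^ (K e - A e))) *
          ((∏ i, x i ^ ∑ j, A (i, j)) * ∏ j, y j ^ ∑ i, (K (i, j) - A (i, j))) := by
  simp_rw [add_pow]
  rw [Finset.prod_univ_sum]
  refine Finset.sum_congr rfl fun A _ => ?_
  simp_rw [← Finset.prod_pow_eq_pow_sum]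
  rw [Finset.prod_comm (s := (Finset.univ : Finset J)), ← Finset.prod_mul_distrib]
  simp_rw [← Finset.prod_mul_distrib]
  rw [← Fintype.prod_prod_type' (f := fun i j => x i ^ A (i, j) * y j ^ (K (i, j) - A (i, j))),
    ← Finset.prod_mul_distrib]
  refine Finset.prod_congr rfl fun e _ => ?_
  rw [mul_pow, mul_pow]
  ring

lemma sum_sub_eq_iff {I J : Type*} [Fintype I] {K A : I × J → ℕ} (hA : ∀ e, A e ≤ K e)
    {C D : J → ℕ} (hD : ∀ j, C j + D j = ∑ i, K (i, j)) (j : J) :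
    ∑ i, (K (i, j) - A (i, j)) = D j ↔ ∑ i, A (i, j) = C j := by
  have : ∑ i, (K (i, j) - A (i, j)) + ∑ i, A (i, j) = ∑ i, K (i, j) := by
    rw [← Finset.sum_add_distrib]
    exact Finset.sum_congr rfl fun i _ => Nat.sub_add_cancel (hA _)
  have := hD j
  omega

lemma binomialWeight_mul_le {I J : Type*} [Fintype I] [Fintype J] [DecidableEq I]
    [DecidableEq J] (K : I × J → ℕ) (R : I → ℕ) {C D : J → ℕ}
    (hD : ∀ j, C j + D j = ∑ i, K (i, j)) {u : I × J → ℝ} (hu : ∀ e, u e ∈ Set.Icc 0 1)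
    {x : I → ℝ} {y : J → ℝ} (hx : ∀ i, 0 ≤ x i) (hy : ∀ j, 0 ≤ y j) :
    binomialWeight K R C u * ((∏ i, x i ^ R i) * ∏ j, y j ^ D j) ≤
      ∏ e : I × J, (u e * x e.1 + (1 - u e) * y e.2) ^ K e := by
  rw [prod_linear_pow_eq_sum, binomialWeight, Finset.sum_mul]
  refine le_trans (le_of_eq ?_) (Finset.sum_le_sum_of_subset_of_nonneg
    (Finset.filter_subset _ _ : boundedTables K R C ⊆ _) fun A _ _ => ?_)
  · refine Finset.sum_congr rfl fun A hA => ?_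
    obtain ⟨hA, hR, hC⟩ := Finset.mem_filter.1 hA
    have hA : ∀ e, A e ≤ K e := fun e =>
      Nat.lt_succ_iff.1 (Finset.mem_range.1 (Fintype.mem_piFinset.1 hA e))
    simp_rw [hR, fun j => (sum_sub_eq_iff hA hD j).2 (hC j)]
  · refine mul_nonneg (Finset.prod_nonneg fun e _ => ?_) (mul_nonneg
      (Finset.prod_nonneg fun i _ => pow_nonneg (hx i) _)
      (Finset.prod_nonneg fun j _ => pow_nonneg (hy j) _))
    have := (hu e).1
    have : 0 ≤ 1 - u e := sub_nonneg.2 (hu e).2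
    positivity

lemma coeff_prod_linear_eq_binomialWeight {I J : Type*} [Fintype I] [Fintype J] [DecidableEq I]
    [DecidableEq J] (K : I × J → ℕ) (R : I → ℕ) {C D : J → ℕ}
    (hD : ∀ j, C j + D j = ∑ i, K (i, j)) (u : I × J → ℝ) :
    (∏ e : I × J, (MvPolynomial.C (u e) * MvPolynomial.X (Sum.inl e.1) +
      MvPolynomial.C (1 - u e) * MvPolynomial.X (Sum.inr e.2)) ^ K e :
        MvPolynomial (I ⊕ J) ℝ).coeff (Finsupp.equivFunOnFinite.symm (Sum.elim R D)) =
      binomialWeight K R C u := by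
  rw [prod_linear_pow_eq_sum K (fun e => MvPolynomial.C (u e))
    (fun e => MvPolynomial.C (1 - u e)) (fun i => MvPolynomial.X (Sum.inl i))
    (fun j => (MvPolynomial.X (Sum.inr j) : MvPolynomial (I ⊕ J) ℝ)), MvPolynomial.coeff_sum,
    binomialWeight, boundedTables, Finset.sum_filter]
  refine Finset.sum_congr rfl fun A hA => ?_
  have hA : ∀ e, A e ≤ K e := fun e =>
    Nat.lt_succ_iff.1 (Finset.mem_range.1 (Fintype.mem_piFinset.1 hA e))
  have h1 : (∏ e, (((K e).choose (A e) : MvPolynomial (I ⊕ J) ℝ) * MvPolynomial.C (u e) ^ A e *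
      MvPolynomial.C (1 - u e) ^ (K e - A e))) = MvPolynomial.C (∏ e, ((K e).choose (A e) *
        u e ^ A e * (1 - u e) ^ (K e - A e))) := by
    simp
  have h2 : (∏ i, (MvPolynomial.X (Sum.inl i) : MvPolynomial (I ⊕ J) ℝ) ^ ∑ j, A (i, j)) *
      ∏ j, MvPolynomial.X (Sum.inr j) ^ ∑ i, (K (i, j) - A (i, j)) =
      MvPolynomial.monomial (Finsupp.equivFunOnFinite.symm (Sum.elim (fun i => ∑ j, A (i, j))
        fun j => ∑ i, (K (i, j) - A (i, j)))) 1 := by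
    rw [MvPolynomial.monomial_eq, Finsupp.prod_fintype _ _ (by simp)]
    simp
  rw [h1, h2, MvPolynomial.coeff_C_mul, MvPolynomial.coeff_monomial]
  rw [mul_ite, mul_one, mul_zero]
  congr 1
  rw [Finsupp.equivFunOnFinite.symm.injective.eq_iff, eq_iff_iff, funext_iff, Sum.forall]
  simp only [Sum.elim_inl, Sum.elim_inr, fun j => sum_sub_eq_iff hA hD j]

theorem capacity_le_binomialWeight {I J : Type*} [Fintype I] [Fintype J] [DecidableEq I]
    [DecidableEq J] (K : I × J → ℕ) {R : I → ℕ} {C D : J → ℕ}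
    (hD : ∀ j, C j + D j = ∑ i, K (i, j)) (hRC : ∑ i, R i = ∑ j, C j)
    {u : I × J → ℝ} (hu : ∀ e, u e ∈ Set.Icc 0 1) {B : ℝ}
    (hcap : ∀ (x : I → ℝ) (y : J → ℝ), (∀ i, 0 < x i) → (∀ j, 0 < y j) →
      B * ((∏ i, x i ^ R i) * ∏ j, y j ^ D j) ≤
        ∏ e : I × J, (u e * x e.1 + (1 - u e) * y e.2) ^ K e) :
    B * (∑ e, K e).factorial * ((∏ i, (R i : ℝ) ^ R i) * ∏ j, (D j : ℝ) ^ D j) ≤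
      binomialWeight K R C u * ((∑ e, K e : ℕ) : ℝ) ^ (∑ e, K e) *
        ((∏ i, ((R i).factorial : ℝ)) * ∏ j, ((D j).factorial : ℝ)) := by
  let a : I × J → I ⊕ J → ℝ := fun e =>
    Sum.elim (fun i => if i = e.1 then u e else 0) fun j => if j = e.2 then 1 - u e else 0
  have h := capacity_le_coeff_prod_linear (a := a) (k := K) (B := B)
    (m := Finsupp.equivFunOnFinite.symm (Sum.elim R D)) (by
      rintro e (i | j)
      · simp only [a, Sum.elim_inl]
        split_ifs
        exacts [(hu e).1, le_rfl]
      · simp only [a, Sum.elim_inr]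
        split_ifs
        exacts [sub_nonneg.2 (hu e).2, le_rfl]) (by
      rw [Finsupp.degree_eq_sum, Fintype.sum_sum_type, Fintype.sum_prod_type_right]
      simp [hRC, ← Finset.sum_add_distrib, hD]) (by
      intro x hx
      have := hcap (fun i => x (Sum.inl i)) (fun j => x (Sum.inr j)) (fun i => hx _) fun j => hx _
      simpa [a, Fintype.prod_sum_type, Fintype.sum_sum_type, ite_mul] using this)
  rw [← coeff_prod_linear_eq_binomialWeight K R hD u]
  have ha : ∀ e, (∑ t, MvPolynomial.C (a e t) * MvPolynomial.X t : MvPolynomial (I ⊕ J) ℝ) =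
      MvPolynomial.C (u e) * MvPolynomial.X (Sum.inl e.1) +
      MvPolynomial.C (1 - u e) * MvPolynomial.X (Sum.inr e.2) := by
    intro e
    simp [a, Fintype.sum_sum_type, apply_ite MvPolynomial.C, ite_mul]
  simp only [ha] at h
  simpa [Fintype.prod_sum_type] using h

lemma prod_rpow_monomial {ι I : Type*} [Fintype ι] [Fintype I] {α : ι → ℝ} {a : ι → I → ℕ}
    {b : I → ℕ} (h : ∀ i, ∑ t, α t * (a t i : ℝ) = b i) {x : I → ℝ} (hx : ∀ i, 0 < x i) :
    ∏ t, (∏ i, x i ^ a t i) ^ α t = ∏ i, x i ^ b i := by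
  have h1 : ∀ t, (∏ i, x i ^ a t i) ^ α t = ∏ i, x i ^ (α t * (a t i : ℝ)) := by
    intro t
    rw [← Real.finsetProd_rpow _ _ fun i _ => (pow_pos (hx i) _).le]
    refine Finset.prod_congr rfl fun i _ => ?_
    rw [mul_comm, Real.rpow_natCast_mul (hx i).le]
  simp_rw [h1]
  rw [Finset.prod_comm]
  refine Finset.prod_congr rfl fun i _ => ?_
  rw [← Real.rpow_sum_of_pos (hx i), h, Real.rpow_natCast]

lemma binomialWeight_nonneg {I J : Type*} [Fintype I] [Fintype J] [DecidableEq I]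
    [DecidableEq J] (K : I × J → ℕ) (R : I → ℕ) (C : J → ℕ) {u : I × J → ℝ}
    (hu : ∀ e, u e ∈ Set.Icc 0 1) : 0 ≤ binomialWeight K R C u := by
  refine Finset.sum_nonneg fun A _ => Finset.prod_nonneg fun e _ => ?_
  have := (hu e).1
  have : 0 ≤ 1 - u e := sub_nonneg.2 (hu e).2
  positivity

/-- Approximate log-concavity of the binomial weight in the weights and the margins. -/
theorem prod_binomialWeight_rpow_le {ι I J : Type*} [Fintype ι] [Fintype I] [Fintype J]
    [DecidableEq I] [DecidableEq J] (K : I × J → ℕ) {α : ι → ℝ} (hα : ∀ t, 0 ≤ α t)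
    (hα1 : ∑ t, α t = 1) {R : I → ℕ} {C D : J → ℕ} (hD : ∀ j, C j + D j = ∑ i, K (i, j))
    (hRC : ∑ i, R i = ∑ j, C j) {Rs : ι → I → ℕ} {Cs Ds : ι → J → ℕ}
    (hDs : ∀ t j, Cs t j + Ds t j = ∑ i, K (i, j))
    (hR : ∀ i, ∑ t, α t * (Rs t i : ℝ) = R i) (hC : ∀ j, ∑ t, α t * (Cs t j : ℝ) = C j)
    {u : ι → I × J → ℝ} (hu : ∀ t e, u t e ∈ Set.Icc 0 1) :
    (∏ t, binomialWeight K (Rs t) (Cs t) (u t) ^ α t) * (∑ e, K e).factorial *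
        ((∏ i, (R i : ℝ) ^ R i) * ∏ j, (D j : ℝ) ^ D j) ≤
      binomialWeight K R C (fun e => ∑ t, α t * u t e) * ((∑ e, K e : ℕ) : ℝ) ^ (∑ e, K e) *
        ((∏ i, ((R i).factorial : ℝ)) * ∏ j, ((D j).factorial : ℝ)) := by
  have hmean : ∀ e, ∑ t, α t * u t e ∈ Set.Icc (0 : ℝ) 1 := fun e =>
    (convex_Icc (0 : ℝ) 1).sum_mem (fun t _ => hα t) hα1 fun t _ => hu t e
  have hDmean : ∀ j, ∑ t, α t * (Ds t j : ℝ) = D j := by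
    intro j
    have h1 : ∀ t, (Ds t j : ℝ) = ((∑ i, K (i, j) : ℕ) : ℝ) - Cs t j := fun t => by
      rw [← hDs t j]; push_cast; ring
    have h2 : (D j : ℝ) = ((∑ i, K (i, j) : ℕ) : ℝ) - C j := by
      rw [← hD j]; push_cast; ring
    simp_rw [h1, mul_sub]
    rw [Finset.sum_sub_distrib, hC, ← Finset.sum_mul, hα1, one_mul, h2]
  refine capacity_le_binomialWeight K hD hRC hmean fun x y hx hy => ?_
  have hlin : ∀ t (e : I × J), 0 ≤ u t e * x e.1 + (1 - u t e) * y e.2 := fun t e =>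
    add_nonneg (mul_nonneg (hu t e).1 (hx _).le) (mul_nonneg (sub_nonneg.2 (hu t e).2) (hy _).le)
  rw [← prod_rpow_monomial hR hx, ← prod_rpow_monomial hDmean hy, ← Finset.prod_mul_distrib,
    ← Finset.prod_mul_distrib]
  have hxn : ∀ t, 0 ≤ ∏ i, x i ^ Rs t i := fun t =>
    Finset.prod_nonneg fun i _ => pow_nonneg (hx i).le _
  have hyn : ∀ t, 0 ≤ ∏ j, y j ^ Ds t j := fun t =>
    Finset.prod_nonneg fun j _ => pow_nonneg (hy j).le _
  have hwn : ∀ t, 0 ≤ binomialWeight K (Rs t) (Cs t) (u t) := fun t =>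
    binomialWeight_nonneg K _ _ (hu t)
  calc ∏ t, (binomialWeight K (Rs t) (Cs t) (u t) ^ α t *
        ((∏ i, x i ^ Rs t i) ^ α t * (∏ j, y j ^ Ds t j) ^ α t))
      ≤ ∏ t, ∏ e : I × J, ((u t e * x e.1 + (1 - u t e) * y e.2) ^ α t) ^ K e := by
        refine Finset.prod_le_prod (fun t _ => mul_nonneg (Real.rpow_nonneg (hwn t) _)
          (mul_nonneg (Real.rpow_nonneg (hxn t) _) (Real.rpow_nonneg (hyn t) _))) fun t _ => ?_
        rw [← Real.mul_rpow (hxn t) (hyn t), ← Real.mul_rpow (hwn t) (mul_nonneg (hxn t) (hyn t))]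
        refine (Real.rpow_le_rpow (mul_nonneg (hwn t) (mul_nonneg (hxn t) (hyn t)))
          (binomialWeight_mul_le K (Rs t) (hDs t) (hu t) (fun i => (hx i).le)
            fun j => (hy j).le) (hα t)).trans_eq ?_
        rw [← Real.finsetProd_rpow _ _ fun e _ => pow_nonneg (hlin t e) _]
        refine Finset.prod_congr rfl fun e _ => ?_
        rw [Real.rpow_pow_comm (hlin t e)]
    _ = ∏ e : I × J, (∏ t, (u t e * x e.1 + (1 - u t e) * y e.2) ^ α t) ^ K e := by
        rw [Finset.prod_comm]
        exact Finset.prod_congr rfl fun e _ => Finset.prod_pow _ _ _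
    _ ≤ _ := by
        refine Finset.prod_le_prod (fun e _ => pow_nonneg (Finset.prod_nonneg fun t _ =>
          Real.rpow_nonneg (hlin t e) _) _) fun e _ => ?_
        refine pow_le_pow_left₀ (Finset.prod_nonneg fun t _ => Real.rpow_nonneg (hlin t e) _) ?_ _
        refine (Real.geom_mean_le_arith_mean_weighted _ _ _ (fun t _ => hα t) hα1
          fun t _ => hlin t e).trans_eq ?_
        have h1 : ∑ t, α t * (1 - u t e) = 1 - ∑ t, α t * u t e := by
          simp_rw [mul_sub, mul_one]
          rw [Finset.sum_sub_distrib, hα1]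
        rw [← h1, Finset.sum_mul, Finset.sum_mul, ← Finset.sum_add_distrib]
        exact Finset.sum_congr rfl fun t _ => by ring

open MeasureTheory in
open scoped Pointwise in
/-- The one-dimensional Brunn–Minkowski inequality for two compact sets. -/
lemma volume_add_volume_le_volume_add {A B : Set ℝ} (hA : IsCompact A) (hB : IsCompact B)
    (hAn : A.Nonempty) (hBn : B.Nonempty) : volume A + volume B ≤ volume (A + B) := by
  obtain ⟨a, haA, ha⟩ := hA.exists_isGreatest hAn
  obtain ⟨b, hbB, hb⟩ := hB.exists_isLeast hBn
  have h1 : volume (b +ᵥ A) = volume A := measure_vadd _ _ _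
  have h2 : volume (a +ᵥ B) = volume B := measure_vadd _ _ _
  rw [← h1, ← h2, ← measure_union_add_inter (b +ᵥ A) (hB.vadd a).measurableSet]
  have h3 : volume ((b +ᵥ A) ∩ (a +ᵥ B)) = 0 := by
    refine measure_mono_null (t := {a + b}) ?_ (by simp)
    rintro _ ⟨⟨x, hx, rfl⟩, y, hy, hxy⟩
    have := ha hx
    have := hb hy
    simp only [vadd_eq_add, Set.mem_singleton_iff] at hxy ⊢
    linarith
  rw [h3, add_zero]
  refine measure_mono ?_
  rintro _ (⟨x, hx, rfl⟩ | ⟨y, hy, rfl⟩)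
  · exact ⟨x, hx, b, hbB, add_comm _ _⟩
  · exact ⟨a, haA, y, hy, rfl⟩

open MeasureTheory in
open scoped Pointwise in
lemma exists_isCompact_sum_volume_le {ι : Type*} (s : Finset ι) {α : ι → ℝ} (hα : ∀ t, 0 ≤ α t)
    {A : ι → Set ℝ} (hA : ∀ t, IsCompact (A t)) (hAn : ∀ t, (A t).Nonempty) :
    ∃ P : Set ℝ, IsCompact P ∧ P.Nonempty ∧
      ∑ t ∈ s, ENNReal.ofReal (α t) * volume (A t) ≤ volume P ∧
      ∀ z ∈ P, ∃ x : ι → ℝ, (∀ t, x t ∈ A t) ∧ ∑ t ∈ s, α t * x t = z := by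
  classical
  induction s using Finset.induction_on with
  | empty =>
    choose x hx using hAn
    exact ⟨{0}, isCompact_singleton, Set.singleton_nonempty 0, by simp,
      fun z hz => ⟨x, hx, by simpa using hz.symm⟩⟩
  | insert i s hi ih =>
    obtain ⟨P, hP, hPn, hvol, hmem⟩ := ih
    refine ⟨α i • A i + P, ((hA i).smul (α i)).add hP, ((hAn i).smul_set).add hPn, ?_, ?_⟩
    · rw [Finset.sum_insert hi]
      refine (add_le_add (le_of_eq ?_) hvol).trans
        (volume_add_volume_le_volume_add ((hA i).smul (α i)) hP (hAn i).smul_set hPn)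
      rw [Measure.addHaar_smul]
      simp [abs_of_nonneg (hα i)]
    · rintro _ ⟨_, ⟨a, ha, rfl⟩, w, hw, rfl⟩
      obtain ⟨x, hx, rfl⟩ := hmem w hw
      refine ⟨Function.update x i a, fun t => ?_, ?_⟩
      · by_cases ht : t = i
        · subst ht; simpa using ha
        · simpa [ht] using hx t
      · rw [Finset.sum_insert hi, Function.update_self]
        refine congrArg (α i * a + ·) ?_
        refine Finset.sum_congr rfl fun t ht => ?_
        rw [Function.update_of_ne (ne_of_mem_of_not_mem ht hi)]

open MeasureTheory in
/-- The one-dimensional Brunn–Minkowski inequality for finitely many measurable sets. -/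
lemma sum_mul_volume_le {ι : Type*} [Fintype ι] {α : ι → ℝ} (hα : ∀ t, 0 ≤ α t)
    (hα1 : ∑ t, α t = 1) {A : ι → Set ℝ} (hA : ∀ t, MeasurableSet (A t))
    (hAn : ∀ t, (A t).Nonempty) (hAf : ∀ t, volume (A t) ≠ ⊤) {S : Set ℝ}
    (hS : ∀ x : ι → ℝ, (∀ t, x t ∈ A t) → ∑ t, α t * x t ∈ S) :
    ∑ t, ENNReal.ofReal (α t) * volume (A t) ≤ volume S := by
  refine ENNReal.le_of_forall_pos_le_add fun ε hε _ => ?_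
  choose L hLA hL hvol using fun t =>
    (hA t).exists_isCompact_lt_add (hAf t) (ε := ε) (by simpa using hε.ne')
  choose a ha using hAn
  obtain ⟨P, -, -, hPvol, hP⟩ := exists_isCompact_sum_volume_le Finset.univ hα
    (A := fun t => L t ∪ {a t}) (fun t => (hL t).union isCompact_singleton)
    fun t => ⟨a t, Or.inr rfl⟩
  have hPS : P ⊆ S := by
    intro z hz
    obtain ⟨x, hx, rfl⟩ := hP z hz
    refine hS x fun t => ?_
    rcases hx t with h | h
    · exact hLA t h
    · rw [Set.mem_singleton_iff.1 h]
      exact ha t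
  calc ∑ t, ENNReal.ofReal (α t) * volume (A t)
      ≤ ∑ t, ENNReal.ofReal (α t) * (volume (L t ∪ {a t}) + ε) := by
        gcongr with t
        exact (hvol t).le.trans (by gcongr; exact Set.subset_union_left)
    _ = ∑ t, ENNReal.ofReal (α t) * volume (L t ∪ {a t}) + ε := by
        simp_rw [mul_add]
        rw [Finset.sum_add_distrib, ← Finset.sum_mul,
          ← ENNReal.ofReal_sum_of_nonneg fun t _ => hα t, hα1, ENNReal.ofReal_one, one_mul]
    _ ≤ volume S + ε := by
        gcongr
        exact hPvol.trans (measure_mono hPS)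

open MeasureTheory in
lemma sum_mul_lintegral_le {ι : Type*} [Fintype ι] {α : ι → ℝ} (hα : ∀ t, 0 ≤ α t)
    (hα1 : ∑ t, α t = 1) {g : ι → ℝ → ℝ} (hg : ∀ t, Measurable (g t)) (hg0 : ∀ t x, 0 ≤ g t x)
    (hg1 : ∀ t, ∀ x ∈ Set.Icc (0 : ℝ) 1, g t x ≤ 1)
    (hsup : ∀ t, ∀ s < 1, ∃ x ∈ Set.Icc (0 : ℝ) 1, s < g t x)
    {G : ℝ → ℝ} (hG : Measurable G) (hG0 : ∀ x, 0 ≤ G x)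
    (h : ∀ x : ι → ℝ, (∀ t, x t ∈ Set.Icc (0 : ℝ) 1) → ∀ s, 0 < s → (∀ t, s < g t (x t)) →
      s ≤ G (∑ t, α t * x t)) :
    ∑ t, ENNReal.ofReal (α t) * ∫⁻ x in Set.Icc 0 1, ENNReal.ofReal (g t x) ≤
      ∫⁻ x in Set.Icc 0 1, ENNReal.ofReal (G x) := by
  have hmeas : ∀ t s, MeasurableSet {x | s < g t x} := fun t s =>
    measurableSet_lt measurable_const (hg t)
  have hlayer : ∀ t, ∫⁻ x in Set.Icc 0 1, ENNReal.ofReal (g t x) =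
      ∫⁻ s in Set.Ioo (0 : ℝ) 1, volume ({x | s < g t x} ∩ Set.Icc 0 1) := by
    intro t
    rw [lintegral_eq_lintegral_meas_lt _ (Eventually.of_forall (hg0 t)) (hg t).aemeasurable]
    simp_rw [Measure.restrict_apply (hmeas t _)]
    rw [← Set.Ioo_union_Ici_eq_Ioi zero_lt_one, lintegral_union measurableSet_Ici
      (Set.disjoint_left.2 fun s hs hs' => absurd hs.2 (not_lt.2 hs')),
      setLIntegral_eq_zero measurableSet_Ici, add_zero]
    intro s hs
    have hs1 : 1 ≤ s := hs
    refine (congrArg volume (Set.eq_empty_iff_forall_notMem.2 ?_)).trans measure_empty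
    rintro x ⟨hx, hxI⟩
    exact absurd (hg1 t x hxI) (not_le.2 (hs1.trans_lt hx))
  have hanti : ∀ t, Measurable fun s : ℝ => volume ({x | s < g t x} ∩ Set.Icc 0 1) := by
    intro t
    refine Antitone.measurable fun s s' hss => measure_mono ?_
    exact fun x hx => ⟨hss.trans_lt hx.1, hx.2⟩
  calc ∑ t, ENNReal.ofReal (α t) * ∫⁻ x in Set.Icc 0 1, ENNReal.ofReal (g t x)
      = ∫⁻ s in Set.Ioo (0 : ℝ) 1,
          ∑ t, ENNReal.ofReal (α t) * volume ({x | s < g t x} ∩ Set.Icc 0 1) := by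
        rw [lintegral_finsetSum _ fun t _ => (hanti t).const_mul _]
        refine Finset.sum_congr rfl fun t _ => ?_
        rw [hlayer, lintegral_const_mul _ (hanti t)]
    _ ≤ ∫⁻ s in Set.Ioo (0 : ℝ) 1, volume ({x | s ≤ G x} ∩ Set.Icc 0 1) := by
        refine setLIntegral_mono' measurableSet_Ioo fun s hs => ?_
        refine sum_mul_volume_le hα hα1 (fun t => (hmeas t s).inter measurableSet_Icc)
          (fun t => ?_) (fun t => ?_) fun x hx => ⟨?_, ?_⟩
        · obtain ⟨x, hx, hlt⟩ := hsup t s hs.2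
          exact ⟨x, hlt, hx⟩
        · exact ((measure_mono Set.inter_subset_right).trans_lt (by simp)).ne
        · exact h x (fun t => (hx t).2) s hs.1 fun t => (hx t).1
        · exact (convex_Icc (0 : ℝ) 1).sum_mem (fun t _ => hα t) hα1 fun t _ => (hx t).2
    _ ≤ ∫⁻ s in Set.Ioi (0 : ℝ), volume ({x | s ≤ G x} ∩ Set.Icc 0 1) :=
        lintegral_mono_set Set.Ioo_subset_Ioi_self
    _ = ∫⁻ x in Set.Icc 0 1, ENNReal.ofReal (G x) := by
        rw [lintegral_eq_lintegral_meas_le _ (Eventually.of_forall hG0) hG.aemeasurable]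
        simp_rw [Measure.restrict_apply (measurableSet_le measurable_const hG)]

lemma ennreal_geom_mean_le_arith_mean {ι : Type*} [Fintype ι] {α : ι → ℝ} (hα : ∀ t, 0 ≤ α t)
    (hα1 : ∑ t, α t = 1) {z : ι → ENNReal} (hz : ∀ t, z t ≠ ⊤) :
    ∏ t, z t ^ α t ≤ ∑ t, ENNReal.ofReal (α t) * z t := by
  lift z to ι → NNReal using hz
  lift α to ι → NNReal using hα
  simp_rw [← ENNReal.coe_rpow_of_nonneg _ (NNReal.coe_nonneg _), ENNReal.ofReal_coe_nnreal]
  exact_mod_cast NNReal.geom_mean_le_arith_mean_weighted Finset.univ α z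
    (NNReal.coe_injective (by push_cast; exact hα1))

open MeasureTheory in
/-- The one-dimensional Prékopa–Leindler inequality on the unit interval. -/
lemma prod_lintegral_rpow_le {ι : Type*} [Fintype ι] {α : ι → ℝ} (hα : ∀ t, 0 < α t)
    (hα1 : ∑ t, α t = 1) {f : ι → ℝ → ENNReal} (hf : ∀ t, Measurable (f t))
    (hf1 : ∀ t x, f t x ≤ 1) {h : ℝ → ENNReal} (hh : Measurable h)
    (hle : ∀ x : ι → ℝ, (∀ t, x t ∈ Set.Icc (0 : ℝ) 1) →
      ∏ t, f t (x t) ^ α t ≤ h (∑ t, α t * x t)) :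
    ∏ t, (∫⁻ x in Set.Icc 0 1, f t x) ^ α t ≤ ∫⁻ x in Set.Icc 0 1, h x := by
  obtain ⟨M, hM⟩ : ∃ M : ι → ENNReal, ∀ t, M t = ⨆ x ∈ Set.Icc (0 : ℝ) 1, f t x :=
    ⟨_, fun _ => rfl⟩
  have hfM : ∀ t, ∀ x ∈ Set.Icc (0 : ℝ) 1, f t x ≤ M t := fun t x hx => by
    rw [hM]; exact le_iSup₂ (f := fun x _ => f t x) x hx
  have hM1 : ∀ t, M t ≤ 1 := fun t => by
    rw [hM]; exact iSup₂_le fun x _ => hf1 t x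
  have hMtop : ∀ t, M t ≠ ⊤ := fun t => ((hM1 t).trans_lt ENNReal.one_lt_top).ne
  by_cases hM0 : ∃ t, M t = 0
  · obtain ⟨t, ht⟩ := hM0
    have h0 : ∫⁻ x in Set.Icc 0 1, f t x = 0 := by
      rw [setLIntegral_congr_fun (g := fun _ => 0) measurableSet_Icc fun x hx =>
        le_antisymm ((hfM t x hx).trans_eq ht) zero_le, lintegral_zero]
    rw [Finset.prod_eq_zero (Finset.mem_univ t) (by rw [h0, ENNReal.zero_rpow_of_pos (hα t)])]
    exact zero_le
  push Not at hM0
  obtain ⟨P, hP⟩ : ∃ P, P = ∏ t, M t ^ α t := ⟨_, rfl⟩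
  have hP0 : P ≠ 0 := by
    rw [hP, Finset.prod_ne_zero_iff]
    exact fun t _ => (ENNReal.rpow_pos (pos_iff_ne_zero.2 (hM0 t)) (hMtop t)).ne'
  have hPtop : P ≠ ⊤ := by
    rw [hP]
    exact ENNReal.prod_ne_top fun t _ => ENNReal.rpow_ne_top_of_nonneg (hα t).le (hMtop t)
  have hq : ∀ t x, f t x / M t ≠ ⊤ := fun t x =>
    ENNReal.div_ne_top ((hf1 t x).trans_lt ENNReal.one_lt_top).ne (hM0 t)
  have hmin : ∀ x, min (h x / P) 1 ≠ ⊤ := fun x =>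
    ((min_le_right _ _).trans_lt ENNReal.one_lt_top).ne
  have hg1 : ∀ t, ∀ x ∈ Set.Icc (0 : ℝ) 1, f t x / M t ≤ 1 := fun t x hx =>
    ENNReal.div_le_of_le_mul (by rw [one_mul]; exact hfM t x hx)
  have key := sum_mul_lintegral_le (fun t => (hα t).le) hα1
    (g := fun t x => (f t x / M t).toReal) (G := fun x => (min (h x / P) 1).toReal)
    (fun t => ((hf t).div_const _).ennreal_toReal) (fun t x => ENNReal.toReal_nonneg)
    (fun t x hx => by
      rw [← ENNReal.toReal_one, ENNReal.toReal_le_toReal (hq t x) ENNReal.one_ne_top]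
      exact hg1 t x hx)
    (fun t s hs => by
      rcases lt_or_ge s 0 with hs0 | hs0
      · exact ⟨0, by simp, hs0.trans_le ENNReal.toReal_nonneg⟩
      have h1 : ENNReal.ofReal s * M t < M t := by
        conv_rhs => rw [← one_mul (M t)]
        exact ENNReal.mul_lt_mul_left (hM0 t) (hMtop t) (by simpa using hs)
      conv_rhs at h1 => rw [hM]
      obtain ⟨x, hx, hlt⟩ := lt_biSup_iff.1 h1
      refine ⟨x, hx, ?_⟩
      rw [← ENNReal.ofReal_lt_iff_lt_toReal hs0 (hq t x)]
      exact ENNReal.lt_div_iff_mul_lt (Or.inl (hM0 t)) (Or.inl (hMtop t)) |>.2 hlt)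
    ((hh.div_const _).min measurable_const).ennreal_toReal (fun x => ENNReal.toReal_nonneg)
    (fun x hx s hs hlt => by
      rw [← ENNReal.ofReal_le_iff_le_toReal (hmin _), le_min_iff]
      have hlt' : ∀ t, ENNReal.ofReal s < f t (x t) / M t := fun t =>
        (ENNReal.ofReal_lt_iff_lt_toReal hs.le (hq t _)).2 (hlt t)
      constructor
      · rw [ENNReal.le_div_iff_mul_le (Or.inl hP0) (Or.inl hPtop)]
        refine le_trans ?_ (hle x hx)
        have hs1 : ENNReal.ofReal s = ∏ t, ENNReal.ofReal s ^ α t := by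
          have : ∀ t, ENNReal.ofReal s ^ α t = ENNReal.ofReal (s ^ α t) := fun t =>
            ENNReal.ofReal_rpow_of_pos hs
          simp_rw [this]
          rw [← ENNReal.ofReal_prod_of_nonneg fun t _ => Real.rpow_nonneg hs.le _,
            ← Real.rpow_sum_of_pos hs, hα1, Real.rpow_one]
        rw [hs1, hP, ← Finset.prod_mul_distrib]
        refine Finset.prod_le_prod' fun t _ => ?_
        rw [← ENNReal.mul_rpow_of_nonneg _ _ (hα t).le]
        refine ENNReal.rpow_le_rpow ?_ (hα t).le
        rw [← ENNReal.le_div_iff_mul_le (Or.inl (hM0 t)) (Or.inl (hMtop t))]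
        exact (hlt' t).le
      · obtain ⟨t⟩ : Nonempty ι := by
          by_contra hι
          rw [not_nonempty_iff] at hι
          simp at hα1
        exact (hlt' t).le.trans (hg1 t _ (hx t)))
  simp only [ENNReal.ofReal_toReal (hq _ _), ENNReal.ofReal_toReal (hmin _)] at key
  have hint : ∀ t, ∫⁻ x in Set.Icc 0 1, f t x / M t = (∫⁻ x in Set.Icc 0 1, f t x) / M t := by
    intro t
    simp_rw [div_eq_mul_inv]
    rw [lintegral_mul_const _ (hf t)]
  have hint1 : ∀ t, ∫⁻ x in Set.Icc (0 : ℝ) 1, f t x ≤ 1 := fun t =>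
    (lintegral_mono fun x => hf1 t x).trans (by simp)
  have hprod : ∏ t, (∫⁻ x in Set.Icc 0 1, f t x) ^ α t =
      (∏ t, ((∫⁻ x in Set.Icc 0 1, f t x) / M t) ^ α t) * P := by
    rw [hP, ← Finset.prod_mul_distrib]
    refine Finset.prod_congr rfl fun t _ => ?_
    rw [← ENNReal.mul_rpow_of_nonneg _ _ (hα t).le, ENNReal.div_mul_cancel (hM0 t) (hMtop t)]
  rw [hprod, ← ENNReal.le_div_iff_mul_le (Or.inl hP0) (Or.inl hPtop)]
  refine (ennreal_geom_mean_le_arith_mean (fun t => (hα t).le) hα1 fun t =>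
    ENNReal.div_ne_top ((hint1 t).trans_lt ENNReal.one_lt_top).ne (hM0 t)).trans ?_
  simp_rw [← hint]
  refine key.trans ?_
  rw [div_eq_mul_inv, ← lintegral_mul_const _ hh]
  exact lintegral_mono fun x => (min_le_left _ _).trans_eq (div_eq_mul_inv _ _)

open MeasureTheory in
/-- The Prékopa–Leindler inequality on the unit cube. -/
theorem prod_lmarginal_rpow_le {ι δ : Type*} [Fintype ι] [DecidableEq δ] {α : ι → ℝ}
    (hα : ∀ t, 0 < α t) (hα1 : ∑ t, α t = 1) {f : ι → (δ → ℝ) → ENNReal}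
    (hf : ∀ t, Measurable (f t)) (hf1 : ∀ t x, f t x ≤ 1) {h : (δ → ℝ) → ENNReal}
    (hh : Measurable h) (hle : ∀ x : ι → δ → ℝ, (∀ t e, x t e ∈ Set.Icc (0 : ℝ) 1) →
      ∏ t, f t (x t) ^ α t ≤ h (fun e => ∑ t, α t * x t e)) (s : Finset δ) :
    ∀ x : ι → δ → ℝ, (∀ t e, x t e ∈ Set.Icc (0 : ℝ) 1) →
      ∏ t, (lmarginal (fun _ => (volume : Measure ℝ).restrict (Set.Icc 0 1)) s (f t) (x t)) ^ α t ≤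
      lmarginal (fun _ => (volume : Measure ℝ).restrict (Set.Icc 0 1)) s h
        (fun e => ∑ t, α t * x t e) := by
  have hbound : ∀ s : Finset δ, ∀ t x,
      lmarginal (fun _ => (volume : Measure ℝ).restrict (Set.Icc 0 1)) s (f t) x ≤ 1 := by
    intro s
    induction s using Finset.induction_on with
    | empty => simpa using hf1
    | insert i s hi ih =>
      intro t x
      rw [lmarginal_insert _ (hf t) hi]
      exact (lintegral_mono fun ξ => ih t _).trans (by simp)
  induction s using Finset.induction_on with
  | empty => simpa using hle
  | insert i s hi ih =>
    intro x hx
    simp_rw [lmarginal_insert _ (hf _) hi]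
    rw [lmarginal_insert _ hh hi]
    refine prod_lintegral_rpow_le hα hα1 (fun t => ((hf t).lmarginal _).comp
      (measurable_update _)) (fun t ξ => hbound s t _)
      ((hh.lmarginal _).comp (measurable_update _)) fun ξ hξ => ?_
    have hupd : Function.update (fun e => ∑ t, α t * x t e) i (∑ t, α t * ξ t) =
        fun e => ∑ t, α t * Function.update (x t) i (ξ t) e := by
      funext e
      by_cases he : e = i
      · subst he; simp
      · simp [he]
    simp only [Function.comp_apply]
    rw [hupd]
    refine ih (fun t => Function.update (x t) i (ξ t)) fun t e => ?_
    by_cases he : e = i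
    · subst he; simpa using hξ t
    · simpa [he] using hx t e

lemma integral_pow_mul_one_sub_pow (a b : ℕ) :
    ∫ x in (0 : ℝ)..1, x ^ a * (1 - x) ^ b =
      (a.factorial * b.factorial : ℝ) / (a + b + 1).factorial := by
  induction b generalizing a with
  | zero =>
    have : (a.factorial : ℝ) ≠ 0 := by positivity
    simp [Nat.factorial_succ]
    field_simp
  | succ b ih =>
    have hderiv : ∀ x : ℝ, HasDerivAt (fun x : ℝ => x ^ (a + 1) * (1 - x) ^ (b + 1))
        ((a + 1) * (x ^ a * (1 - x) ^ (b + 1)) - (b + 1) * (x ^ (a + 1) * (1 - x) ^ b)) x := by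
      intro x
      have h := (hasDerivAt_pow (a + 1) x).mul (((hasDerivAt_id x).const_sub 1).pow (b + 1))
      refine h.congr_deriv ?_
      simp
      ring
    have h1 := intervalIntegral.integral_eq_sub_of_hasDerivAt (a := (0 : ℝ)) (b := 1)
      (fun x _ => hderiv x) (by apply Continuous.intervalIntegrable; fun_prop)
    rw [intervalIntegral.integral_sub (by apply Continuous.intervalIntegrable; fun_prop)
      (by apply Continuous.intervalIntegrable; fun_prop), intervalIntegral.integral_const_mul,
      intervalIntegral.integral_const_mul, ih] at h1
    have ha : ((a : ℝ) + 1) ≠ 0 := by positivity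
    have h2 : a + 1 + b + 1 = a + (b + 1) + 1 := by ring
    rw [h2] at h1
    simp only [one_pow, sub_self, ne_eq, Nat.add_eq_zero_iff, one_ne_zero, and_false,
      not_false_eq_true, zero_pow, mul_zero, zero_mul] at h1
    refine mul_left_cancel₀ ha ?_
    rw [sub_eq_zero.1 h1, Nat.factorial_succ a, Nat.factorial_succ b]
    push_cast
    ring

lemma integral_binomial {k a : ℕ} (ha : a ≤ k) :
    ∫ x in Set.Icc (0 : ℝ) 1, (k.choose a : ℝ) * x ^ a * (1 - x) ^ (k - a) = 1 / ((k : ℝ) + 1) := by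
  simp_rw [mul_assoc]
  rw [MeasureTheory.integral_const_mul, MeasureTheory.integral_Icc_eq_integral_Ioc,
    ← intervalIntegral.integral_of_le zero_le_one, integral_pow_mul_one_sub_pow,
    Nat.add_sub_cancel' ha, Nat.factorial_succ]
  have h := Nat.choose_mul_factorial_mul_factorial ha
  have h : (k.choose a : ℝ) * (a.factorial * (k - a).factorial) = k.factorial := by
    rw [← h]; push_cast; ring
  rw [← mul_div_assoc, h]
  have : (k.factorial : ℝ) ≠ 0 := by positivity
  push_cast
  field_simp

lemma continuous_binomialWeight {I J : Type*} [Fintype I] [Fintype J] [DecidableEq I]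
    [DecidableEq J] (K : I × J → ℕ) (R : I → ℕ) (C : J → ℕ) :
    Continuous (binomialWeight K R C) := by
  unfold binomialWeight
  fun_prop

open MeasureTheory in
lemma lintegral_binomialWeight {I J : Type*} [Fintype I] [Fintype J] [DecidableEq I]
    [DecidableEq J] (K : I × J → ℕ) (R : I → ℕ) (C : J → ℕ) :
    ∫⁻ u, ENNReal.ofReal (binomialWeight K R C u)
        ∂Measure.pi (fun _ : I × J => (volume : Measure ℝ).restrict (Set.Icc 0 1)) =
      ENNReal.ofReal ((boundedTables K R C).card / ∏ e, ((K e : ℝ) + 1)) := by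
  have hmem : ∀ᵐ u ∂Measure.pi (fun _ : I × J => (volume : Measure ℝ).restrict (Set.Icc 0 1)),
      ∀ e, u e ∈ Set.Icc (0 : ℝ) 1 := by
    rw [ae_all_iff]
    intro e
    exact (Measure.tendsto_eval_ae_ae (i := e)).eventually (ae_restrict_mem measurableSet_Icc)
  have hcell : ∀ (k a : ℕ), Integrable (fun x : ℝ => (k.choose a : ℝ) * x ^ a * (1 - x) ^ (k - a))
      (volume.restrict (Set.Icc 0 1)) := fun k a =>
    Continuous.integrableOn_Icc (by fun_prop)
  have hint : ∀ A ∈ boundedTables K R C, Integrable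
      (fun u : I × J → ℝ => ∏ e, ((K e).choose (A e) * u e ^ A e * (1 - u e) ^ (K e - A e)))
      (Measure.pi (fun _ : I × J => (volume : Measure ℝ).restrict (Set.Icc 0 1))) := fun A _ =>
    Integrable.fintype_prod (f := fun e (x : ℝ) => ((K e).choose (A e) : ℝ) * x ^ A e *
      (1 - x) ^ (K e - A e)) fun e => hcell _ _
  rw [← ofReal_integral_eq_lintegral_ofReal]
  · congr 1
    simp only [binomialWeight]
    rw [integral_finsetSum _ hint]
    have hval : ∀ A ∈ boundedTables K R C, ∫ u : I × J → ℝ,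
        ∏ e, ((K e).choose (A e) * u e ^ A e * (1 - u e) ^ (K e - A e))
          ∂Measure.pi (fun _ : I × J => (volume : Measure ℝ).restrict (Set.Icc 0 1)) =
        1 / ∏ e, ((K e : ℝ) + 1) := by
      intro A hA
      have hA : ∀ e, A e ≤ K e := fun e => Nat.lt_succ_iff.1
        (Finset.mem_range.1 (Fintype.mem_piFinset.1 (Finset.mem_filter.1 hA).1 e))
      rw [integral_fintype_prod_eq_prod (f := fun e (x : ℝ) => ((K e).choose (A e) : ℝ) * x ^ A e *
        (1 - x) ^ (K e - A e))]
      simp_rw [fun e => integral_binomial (hA e)]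
      rw [Finset.prod_div_distrib, Finset.prod_const_one]
    rw [Finset.sum_congr rfl hval, Finset.sum_const, nsmul_eq_mul, mul_one_div]
  · exact integrable_finsetSum _ hint
  · filter_upwards [hmem] with u hu
    exact binomialWeight_nonneg K R C hu

lemma binomialWeight_le_one {I J : Type*} [Fintype I] [Fintype J] [DecidableEq I]
    [DecidableEq J] (K : I × J → ℕ) (R : I → ℕ) {C D : J → ℕ}
    (hD : ∀ j, C j + D j = ∑ i, K (i, j)) {u : I × J → ℝ} (hu : ∀ e, u e ∈ Set.Icc 0 1) :
    binomialWeight K R C u ≤ 1 := by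
  simpa using binomialWeight_mul_le K R hD hu (x := 1) (y := 1) (fun _ => zero_le_one)
    fun _ => zero_le_one

lemma pow_self_pos (k : ℕ) : (0 : ℝ) < (k : ℝ) ^ k := by
  rcases Nat.eq_zero_or_pos k with rfl | hk
  · simp
  · positivity

open MeasureTheory in
/-- Approximate log-concavity of the number of bounded tables in the margins. -/
theorem prod_card_boundedTables_rpow_le {ι I J : Type*} [Fintype ι] [Fintype I] [Fintype J]
    [DecidableEq I] [DecidableEq J] (K : I × J → ℕ) {α : ι → ℝ} (hα : ∀ t, 0 < α t)
    (hα1 : ∑ t, α t = 1) {R : I → ℕ} {C D : J → ℕ} (hD : ∀ j, C j + D j = ∑ i, K (i, j))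
    (hRC : ∑ i, R i = ∑ j, C j) {Rs : ι → I → ℕ} {Cs Ds : ι → J → ℕ}
    (hDs : ∀ t j, Cs t j + Ds t j = ∑ i, K (i, j))
    (hR : ∀ i, ∑ t, α t * (Rs t i : ℝ) = R i) (hC : ∀ j, ∑ t, α t * (Cs t j : ℝ) = C j) :
    (∏ t, ((boundedTables K (Rs t) (Cs t)).card : ℝ) ^ α t) * ((∑ e, K e).factorial *
        ((∏ i, (R i : ℝ) ^ R i) * ∏ j, (D j : ℝ) ^ D j)) ≤
      (boundedTables K R C).card * (((∑ e, K e : ℕ) : ℝ) ^ (∑ e, K e) *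
        ((∏ i, ((R i).factorial : ℝ)) * ∏ j, ((D j).factorial : ℝ))) := by
  obtain ⟨V, hV⟩ : ∃ V : ℝ, V = (∑ e, K e).factorial *
      ((∏ i, (R i : ℝ) ^ R i) * ∏ j, (D j : ℝ) ^ D j) := ⟨_, rfl⟩
  obtain ⟨W, hW⟩ : ∃ W : ℝ, W = ((∑ e, K e : ℕ) : ℝ) ^ (∑ e, K e) *
      ((∏ i, ((R i).factorial : ℝ)) * ∏ j, ((D j).factorial : ℝ)) := ⟨_, rfl⟩
  have hV0 : 0 < V := by
    rw [hV]
    have h1 := Finset.prod_pos fun i (_ : i ∈ Finset.univ) => pow_self_pos (R i)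
    have h2 := Finset.prod_pos fun j (_ : j ∈ Finset.univ) => pow_self_pos (D j)
    positivity
  have hW0 : 0 < W := by
    rw [hW]
    have h1 := pow_self_pos (∑ e, K e)
    positivity
  have hQ : 0 < ∏ e, ((K e : ℝ) + 1) := Finset.prod_pos fun e _ => by positivity
  have hcube : ∀ᵐ u ∂Measure.pi (fun _ : I × J => (volume : Measure ℝ).restrict (Set.Icc 0 1)),
      ∀ e, u e ∈ Set.Icc (0 : ℝ) 1 := by
    rw [ae_all_iff]
    intro e
    exact (Measure.tendsto_eval_ae_ae (i := e)).eventually (ae_restrict_mem measurableSet_Icc)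
  have key := prod_lmarginal_rpow_le hα hα1
    (f := fun t u => min (ENNReal.ofReal (binomialWeight K (Rs t) (Cs t) u)) 1)
    (h := fun u => ENNReal.ofReal (W / V) * ENNReal.ofReal (binomialWeight K R C u))
    (fun t => ((continuous_binomialWeight K _ _).measurable.ennreal_ofReal).min measurable_const)
    (fun t u => min_le_right _ _)
    (((continuous_binomialWeight K R C).measurable.ennreal_ofReal).const_mul _)
    (fun u hu => by
      have hw := fun t => binomialWeight_nonneg K (Rs t) (Cs t) (hu t)
      refine (Finset.prod_le_prod' fun t _ =>
        ENNReal.rpow_le_rpow (min_le_left _ _) (hα t).le).trans ?_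
      simp_rw [fun t => ENNReal.ofReal_rpow_of_nonneg (hw t) (hα t).le]
      rw [← ENNReal.ofReal_prod_of_nonneg fun t _ => Real.rpow_nonneg (hw t) _,
        ← ENNReal.ofReal_mul (by positivity)]
      refine ENNReal.ofReal_le_ofReal ?_
      have h := prod_binomialWeight_rpow_le K (fun t => (hα t).le) hα1 hD hRC hDs hR hC hu
      rw [mul_assoc, mul_assoc, ← hV, ← hW] at h
      rw [div_mul_eq_mul_div, le_div_iff₀ hV0, mul_comm W]
      exact h) Finset.univ (fun _ _ => 0) (fun _ _ => by simp)
  simp_rw [← lintegral_eq_lmarginal_univ] at key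
  rw [lintegral_const_mul _ (continuous_binomialWeight K R C).measurable.ennreal_ofReal,
    lintegral_binomialWeight, ← ENNReal.ofReal_mul (by positivity)] at key
  have hint : ∀ t, ∫⁻ u, min (ENNReal.ofReal (binomialWeight K (Rs t) (Cs t) u)) 1
      ∂Measure.pi (fun _ : I × J => (volume : Measure ℝ).restrict (Set.Icc 0 1)) =
      ENNReal.ofReal ((boundedTables K (Rs t) (Cs t)).card / ∏ e, ((K e : ℝ) + 1)) := by
    intro t
    rw [← lintegral_binomialWeight]
    refine lintegral_congr_ae ?_
    filter_upwards [hcube] with u hu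
    exact min_eq_left (ENNReal.ofReal_le_one.2 (binomialWeight_le_one K (Rs t) (hDs t) hu))
  have hdiv : ∀ t, (0 : ℝ) ≤ (boundedTables K (Rs t) (Cs t)).card / ∏ e, ((K e : ℝ) + 1) :=
    fun t => by positivity
  simp_rw [hint, fun t => ENNReal.ofReal_rpow_of_nonneg (hdiv t) (hα t).le] at key
  rw [← ENNReal.ofReal_prod_of_nonneg fun t _ => Real.rpow_nonneg (hdiv t) _,
    ENNReal.ofReal_le_ofReal_iff (by positivity)] at key
  simp_rw [fun t => Real.div_rpow (Nat.cast_nonneg (boundedTables K (Rs t) (Cs t)).card) hQ.le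
    (α t)] at key
  rw [Finset.prod_div_distrib, ← Real.rpow_sum_of_pos hQ, hα1, Real.rpow_one, ← mul_div_assoc,
    div_le_div_iff_of_pos_right hQ, div_mul_eq_mul_div, le_div_iff₀ hV0, mul_comm W] at key
  rw [← hV, ← hW]
  exact key

lemma log_pow_self_sub_log_factorial_le (n : ℕ) :
    Real.log ((n : ℝ) ^ n) - Real.log n.factorial ≤ n - Real.log √(2 * Real.pi * n) := by
  rcases Nat.eq_zero_or_pos n with rfl | hn
  · simp
  have hn' : (0 : ℝ) < n := by exact_mod_cast hn
  have h := Real.log_le_log (by positivity) (Stirling.le_factorial_stirling n)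
  rw [Real.log_mul (by positivity) (by positivity), div_pow,
    Real.log_div (by positivity) (by positivity), Real.log_pow (Real.exp 1), Real.log_exp] at h
  linarith

lemma log_factorial_sub_log_pow_self_le {n : ℕ} (hn : 0 < n) :
    Real.log n.factorial - Real.log ((n : ℝ) ^ n) ≤
      Real.log √(2 * Real.pi * n) + Real.log (Real.exp 1 / √(2 * Real.pi)) - n := by
  have hn' : (0 : ℝ) < n := by exact_mod_cast hn
  have h := Stirling.stirlingSeq'_antitone (Nat.zero_le (n - 1))
  simp only [Function.comp_apply, Nat.succ_eq_add_one, Nat.sub_add_cancel hn, zero_add,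
    Stirling.stirlingSeq_one] at h
  rw [Stirling.stirlingSeq, div_le_iff₀ (by positivity)] at h
  have h := Real.log_le_log (by positivity) h
  rw [Real.log_mul (by positivity) (by positivity), Real.log_mul (by positivity) (by positivity),
    div_pow, Real.log_div (by positivity) (by positivity),
    Real.log_div (by positivity) (by positivity), Real.log_pow (Real.exp 1), Real.log_exp,
    Real.sqrt_mul (by positivity), Real.log_mul (by positivity) (by positivity)] at h
  rw [Real.log_div (by positivity) (by positivity), Real.log_exp,
    Real.sqrt_mul (by positivity), Real.log_mul (by positivity) (by positivity)]
  linarith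

lemma sum_log_card_boundedTables_le {ι I J : Type*} [Fintype ι] [Fintype I] [Fintype J]
    [DecidableEq I] [DecidableEq J] (K : I × J → ℕ) {α : ι → ℝ} (hα : ∀ t, 0 < α t)
    (hα1 : ∑ t, α t = 1) {R : I → ℕ} {C D : J → ℕ} (hD : ∀ j, C j + D j = ∑ i, K (i, j))
    (hRC : ∑ i, R i = ∑ j, C j) {Rs : ι → I → ℕ} {Cs Ds : ι → J → ℕ}
    (hDs : ∀ t j, Cs t j + Ds t j = ∑ i, K (i, j))
    (hR : ∀ i, ∑ t, α t * (Rs t i : ℝ) = R i) (hC : ∀ j, ∑ t, α t * (Cs t j : ℝ) = C j)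
    (hRpos : ∀ i, 0 < R i) (hDpos : ∀ j, 0 < D j)
    (hcard : 0 < (boundedTables K R C).card)
    (hcards : ∀ t, 0 < (boundedTables K (Rs t) (Cs t)).card) :
    ∑ t, α t * Real.log (boundedTables K (Rs t) (Cs t)).card ≤
      (-Real.log √(2 * Real.pi * (∑ e, K e : ℕ)) + ∑ i, Real.log √(2 * Real.pi * R i) +
        ∑ j, Real.log √(2 * Real.pi * D j) +
        (Fintype.card I + Fintype.card J) * Real.log (Real.exp 1 / √(2 * Real.pi))) +
      Real.log (boundedTables K R C).card := by
  have hc : ∀ t, (0 : ℝ) < (boundedTables K (Rs t) (Cs t)).card := fun t => by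
    exact_mod_cast hcards t
  have hc0 : (0 : ℝ) < (boundedTables K R C).card := by exact_mod_cast hcard
  have hpR : 0 < ∏ i, (R i : ℝ) ^ R i := Finset.prod_pos fun i _ => pow_self_pos (R i)
  have hpD : 0 < ∏ j, (D j : ℝ) ^ D j := Finset.prod_pos fun j _ => pow_self_pos (D j)
  have hpN := pow_self_pos (∑ e, K e)
  have hfR : 0 < ∏ i, ((R i).factorial : ℝ) := by positivity
  have hfD : 0 < ∏ j, ((D j).factorial : ℝ) := by positivity
  have hfN : (0 : ℝ) < (∑ e, K e).factorial := by positivity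
  have hp : 0 < ∏ t, ((boundedTables K (Rs t) (Cs t)).card : ℝ) ^ α t :=
    Finset.prod_pos fun t _ => Real.rpow_pos_of_pos (hc t) _
  have key := Real.log_le_log (mul_pos hp (mul_pos hfN (mul_pos hpR hpD)))
    (prod_card_boundedTables_rpow_le K hα hα1 hD hRC hDs hR hC)
  rw [Real.log_mul hp.ne' (mul_pos hfN (mul_pos hpR hpD)).ne',
    Real.log_mul hfN.ne' (mul_pos hpR hpD).ne',
    Real.log_mul hpR.ne' hpD.ne', Real.log_mul hc0.ne' (mul_pos hpN (mul_pos hfR hfD)).ne',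
    Real.log_mul hpN.ne' (mul_pos hfR hfD).ne', Real.log_mul hfR.ne' hfD.ne',
    Real.log_prod fun t _ => (Real.rpow_pos_of_pos (hc t) _).ne',
    Real.log_prod fun i _ => (pow_self_pos (R i)).ne',
    Real.log_prod fun j _ => (pow_self_pos (D j)).ne',
    Real.log_prod fun i _ => Nat.cast_ne_zero.2 (R i).factorial_ne_zero,
    Real.log_prod fun j _ => Nat.cast_ne_zero.2 (D j).factorial_ne_zero] at key
  simp_rw [fun t => Real.log_rpow (hc t) (α t)] at key
  have hN := log_pow_self_sub_log_factorial_le (∑ e, K e)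
  have hsR := Finset.sum_le_sum fun i (_ : i ∈ Finset.univ) =>
    log_factorial_sub_log_pow_self_le (hRpos i)
  have hsD := Finset.sum_le_sum fun j (_ : j ∈ Finset.univ) =>
    log_factorial_sub_log_pow_self_le (hDpos j)
  simp only [Finset.sum_sub_distrib, Finset.sum_add_distrib, Finset.sum_const, Finset.card_univ,
    nsmul_eq_mul] at hsR hsD
  have htotal : ∑ i, (R i : ℝ) + ∑ j, (D j : ℝ) = (∑ e, K e : ℕ) := by
    have : ∑ i, R i + ∑ j, D j = ∑ e, K e := by
      rw [hRC, ← Finset.sum_add_distrib, Fintype.sum_prod_type_right]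
      exact Finset.sum_congr rfl fun j _ => hD j
    exact_mod_cast this
  linarith

lemma mem_boundedTables {I J : Type*} [Fintype I] [Fintype J] [DecidableEq I] [DecidableEq J]
    {K : I × J → ℕ} {R : I → ℕ} {C : J → ℕ} {A : I × J → ℕ} : A ∈ boundedTables K R C ↔
      (∀ e, A e ≤ K e) ∧ (∀ i, ∑ j, A (i, j) = R i) ∧ ∀ j, ∑ i, A (i, j) = C j := by
  simp only [boundedTables, Finset.mem_filter, Fintype.mem_piFinset, Finset.mem_range,
    Nat.lt_succ_iff]

lemma tableCount_eq_card_boundedTables {m n : ℕ} (K : Fin m → Fin n → ℕ) (R : Fin m → ℕ)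
    (C : Fin n → ℕ) : tableCount (fun i j => (K i j : ℕ∞)) R C =
      (boundedTables (fun e : Fin m × Fin n => K e.1 e.2) R C).card := by
  rw [tableCount, ← Set.ncard_coe_finset,
    ← Set.ncard_image_of_injective _ (Equiv.curry (Fin m) (Fin n) ℕ).symm.injective]
  congr 1
  ext A
  rw [Equiv.image_eq_preimage_symm]
  simp [mem_boundedTables, Function.curry]
  tauto

/-- **Lemma (quality of approximation).** `f_K(R,C) - ln T_K(R,C)` is bounded by the
error term `♥`. -/
theorem fK_minus_logTable_le {m n : ℕ} (K : Fin m → Fin n → ℕ) (hK : ∀ i j, 0 < K i j)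
    (R : Fin m → ℕ) (hR : ∀ i, 0 < R i) (C : Fin n → ℕ)
    (hCtilde : ∀ j, C j < ∑ i, K i j)
    (hT : 0 < tableCount (fun i j => (K i j : ℕ∞)) R C) :
    fK K (fun i => (R i : ℝ)) (fun j => (C j : ℝ)) -
      ((Real.log (tableCount (fun i j => (K i j : ℕ∞)) R C) : ℝ) : EReal) ≤
    (((-Real.log (Real.sqrt (2 * Real.pi * (∑ i, ∑ j, K i j))) +
        ∑ i, Real.log (Real.sqrt (2 * Real.pi * (R i))) +
        ∑ j, Real.log (Real.sqrt (2 * Real.pi * (((∑ i, K i j) - C j : ℕ) : ℝ))) +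
        ((m : ℝ) + (n : ℝ)) * Real.log (Real.exp 1 / Real.sqrt (2 * Real.pi))) : ℝ) :
      EReal) := by
  rw [fK]
  refine EReal.sub_le_of_le_add (sSup_le ?_)
  rintro v ⟨p, α, Rs, Cs, -, hα, hα1, hRs, hCs, hTs, rfl⟩
  have hle : ∀ {R' : Fin m → ℕ} {C' : Fin n → ℕ},
      0 < tableCount (fun i j => (K i j : ℕ∞)) R' C' →
      ∑ i, R' i = ∑ j, C' j ∧ ∀ j, C' j ≤ ∑ i, K i j := by
    intro R' C' h
    rw [tableCount_eq_card_boundedTables, Finset.card_pos] at h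
    obtain ⟨A, hA⟩ := h
    obtain ⟨hA, hr, hc⟩ := mem_boundedTables.1 hA
    refine ⟨?_, fun j => ?_⟩
    · simp_rw [← hr, ← hc]
      exact Finset.sum_comm
    · rw [← hc j]
      exact Finset.sum_le_sum fun i _ => hA (i, j)
  have hsub : ∀ f : Fin p → ℝ, ∑ t : {t // 0 < α t}, α t * f t = ∑ t, α t * f t := by
    intro f
    rw [← Finset.sum_subtype (Finset.univ.filter fun t => 0 < α t) (by simp) fun t => α t * f t]
    exact Finset.sum_filter_of_ne fun t _ ht => (hα t).lt_of_ne' (left_ne_zero_of_mul ht)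
  have key := sum_log_card_boundedTables_le (fun e : Fin m × Fin n => K e.1 e.2)
    (α := fun t : {t // 0 < α t} => α t) (fun t => t.2) (by simpa using (hsub 1).trans (by simpa))
    (R := R) (C := C) (D := fun j => ∑ i, K i j - C j)
    (fun j => Nat.add_sub_cancel' (hCtilde j).le) (hle hT).1
    (Rs := fun t => Rs t) (Cs := fun t => Cs t) (Ds := fun t j => ∑ i, K i j - Cs t j)
    (fun t j => Nat.add_sub_cancel' ((hle (hTs t)).2 j))
    (fun i => (hsub fun t => (Rs t i : ℝ)).trans (hRs i))
    (fun j => (hsub fun t => (Cs t j : ℝ)).trans (hCs j)) hR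
    (fun j => Nat.sub_pos_of_lt (hCtilde j))
    (by rw [← tableCount_eq_card_boundedTables]; exact hT)
    (fun t => by rw [← tableCount_eq_card_boundedTables]; exact hTs t)
  simp_rw [← tableCount_eq_card_boundedTables] at key
  rw [hsub fun t => Real.log (tableCount (fun i j => (K i j : ℕ∞)) (Rs t) (Cs t)),
    Fintype.sum_prod_type, Fintype.card_fin, Fintype.card_fin] at key
  rw [← EReal.coe_add, EReal.coe_le_coe_iff]
  push_cast at key ⊢
  exact key
end
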